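/- Let ψ be analytic and injective on the unit disk, and let h = Σ_{n≥0} a_n z^n, g = Σ_{n≥1} b_n z^n be analytic on D with h subordinate to ψ and |g'(z)| ≤ k|h'(z)| on D, 0 ≤ k ≤ 1. Then for |z| = r ≤ r_u(k): |h(z)| + Σ_{n≥1}(|a_n| + |b_n|) r^n ≤ |ψ(0)| + dist(ψ(0), ∂ψ(D)), where r_u(k) is the unique root in (0,1) of 8r + 4kr√(1+r) − (1−r)^2 = 0. -/

import Mathlib

/-!
The proof rests on a sharp majorant bound for univalent functions on a small disk. Let `w` be a point of the boundary of
`ψ(D)` nearest to `ψ 0`; it exists because `ψ(D)` is not the whole plane, by Liouville. Then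
`F = (ψ - ψ 0) / (w - ψ 0)` is univalent, vanishes at `0` and omits `1`, and `tsum_le_koebe` says that
`∑ |A n| r ^ n ≤ 4 r / (1 - r) ^ 2` for its coefficients when `r ≤ 0.10103`. This would be immediate from the bound
`|A n| ≤ 4 n`, which is as deep as de Branges' theorem; for such small `r` it has an elementary proof.

Put `φ = √(1 - F)` and `B = (1 - φ) / (1 + φ)`. Then `F = 4 B / (1 + B) ^ 2`, and `B` is univalent with no two values of
product `1`. After a rotation `B z = z exp (-η + l z)` with `l 0 = 0` and `η` real. Since the images of `B` and `1 / B` are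
disjoint, comparing logarithmic areas (`log_area`) gives `∑ n |c n| ^ 2 ≤ 2 η` for the coefficients `c n` of `l`.

If `η ≥ 0.0206` (`BE.key_large`), Cauchy-Schwarz shows that the majorant of `l` at `r` is at most `η`. So `B` has majorant
at most `r`, and composing with the Koebe series `4 w / (1 + w) ^ 2` proves the bound.

If `η ≤ 0.0206` (`BE.key_small`), `B` is close to the identity and the real and imaginary parts of the coefficients are
treated separately. Two-point distortion (`two_point`), applied at `t` and its conjugate, and Carathéodory's estimate bound
the majorant of the real parts of the `c n` by `0.53 η` (`BE.sum_re_le`). Hence the real parts of the `A n` leave a gain of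
order `η r` (`BE.re_part`). The imaginary parts enter only quadratically, through
`|a| ≤ X + |Re a - t| + (Im a) ^ 2 / (2 X)` with `|t| = X`, and Bessel's inequality on a circle bounds their total
(`BE.im_bessel`) by less than that gain.

For the theorem itself, write `ω z = z Ω z` by Schwarz' lemma. By Bohr's theorem `ω` has majorant at most `r`, so that of
`h - ψ 0` is at most `d M`, where `d` is the distance from `ψ 0` to the boundary and `M = 4 r / (1 - r) ^ 2`
(`maj_sub_of_subordinate`). Also `g' = q h'` with `|q| ≤ k`, so Bohr's theorem bounds the majorant of `g` by `k d M`
(`tsum_le_of_deriv_le`). The left side is therefore at most `|ψ 0| + (2 + k) d M`, and the equation defining the radius gives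
`(2 + k) M ≤ 1`.
-/

section

open Complex Metric Set Filter Topology MeasureTheory
open scoped ENNReal

/-! ### Power series on the unit disk -/

/-- `PS c f`: on the unit disk, `f` is the sum of the power series with coefficients `c`. -/
def PS (c : ℕ → ℂ) (f : ℂ → ℂ) : Prop :=
  ∀ z : ℂ, ‖z‖ < 1 → HasSum (fun n => c n * z ^ n) (f z)

theorem PS.hasFPowerSeriesOnBall {c : ℕ → ℂ} {f : ℂ → ℂ} (h : PS c f) :
    HasFPowerSeriesOnBall f (FormalMultilinearSeries.ofScalars ℂ c) 0 1 := by
  refine ⟨?_, by norm_num, ?_⟩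
  · refine ENNReal.le_of_forall_nnreal_lt fun r hr => ?_
    have hr1 : (r : ℝ) < 1 := by exact_mod_cast hr
    have hs := (h (r : ℂ) (by simpa using hr1)).summable.tendsto_atTop_zero.norm
    refine FormalMultilinearSeries.le_radius_of_tendsto _ (l := 0) ?_
    simpa [FormalMultilinearSeries.ofScalars_norm] using hs
  · intro y hy
    have := h y (by simpa [Metric.mem_eball, edist_zero_right, enorm_eq_nnnorm, ← NNReal.coe_lt_one] using hy)
    simpa [FormalMultilinearSeries.ofScalars_apply_eq, mul_comm] using this

theorem PS.differentiableOn {c : ℕ → ℂ} {f : ℂ → ℂ} (h : PS c f) :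
    DifferentiableOn ℂ f (ball 0 1) := by
  have := h.hasFPowerSeriesOnBall.differentiableOn
  rw [← ENNReal.ofReal_one, Metric.eball_ofReal] at this
  exact this

theorem exists_PS {f : ℂ → ℂ} (h : DifferentiableOn ℂ f (ball 0 1)) : ∃ c, PS c f := by
  refine ⟨fun n => (n.factorial : ℂ)⁻¹ * iteratedDeriv n f 0, fun z hz => ?_⟩
  have := Complex.hasSum_taylorSeries_on_ball h (z := z) (by simpa using hz)
  simpa [mul_comm, mul_left_comm] using this

/-- A function given near `0` by two power series determines the coefficients. -/
theorem coeff_unique {c c' : ℕ → ℂ} {f : ℂ → ℂ} {r : ℝ} (hr : 0 < r)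
    (h : ∀ z : ℂ, ‖z‖ < r → HasSum (fun n => c n * z ^ n) (f z))
    (h' : ∀ z : ℂ, ‖z‖ < r → HasSum (fun n => c' n * z ^ n) (f z)) : c = c' := by
  have key : ∀ {c : ℕ → ℂ}, (∀ z : ℂ, ‖z‖ < r → HasSum (fun n => c n * z ^ n) (f z)) →
      HasFPowerSeriesAt f (FormalMultilinearSeries.ofScalars ℂ c) 0 := by
    intro c h
    rw [hasFPowerSeriesAt_iff]
    filter_upwards [Metric.ball_mem_nhds (0 : ℂ) hr] with z hz
    have := h z (by simpa using hz)
    simpa [FormalMultilinearSeries.coeff_ofScalars, mul_comm] using this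
  have := (key h).eq_formalMultilinearSeries (key h')
  funext n
  have h2 := congrArg (fun p => p.coeff n) this
  simpa [FormalMultilinearSeries.coeff_ofScalars] using h2

theorem PS.unique {c c' : ℕ → ℂ} {f : ℂ → ℂ} (h : PS c f) (h' : PS c' f) : c = c' :=
  coeff_unique one_pos h h'

theorem PS.summable {c : ℕ → ℂ} {f : ℂ → ℂ} (h : PS c f) {r : ℝ} (h0 : 0 ≤ r) (h1 : r < 1) :
    Summable fun n => ‖c n‖ * r ^ n := by
  have := (h (r : ℂ) (by simpa [abs_of_nonneg h0] using h1)).summable.norm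
  simpa [abs_of_nonneg h0] using this

theorem PS.zero {c : ℕ → ℂ} {f : ℂ → ℂ} (h : PS c f) : f 0 = c 0 := by
  have h1 := h 0 (by simp)
  have h2 : HasSum (fun n => c n * (0 : ℂ) ^ n) (c 0) := by
    convert hasSum_ite_eq 0 (c 0) using 2 with n
    rcases n with _ | n <;> simp
  exact h1.unique h2

theorem PS.add {c d : ℕ → ℂ} {f g : ℂ → ℂ} (h : PS c f) (h' : PS d g) :
    PS (fun n => c n + d n) (fun z => f z + g z) := fun z hz => by
  simpa [add_mul] using (h z hz).add (h' z hz)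

theorem PS.const_mul {c : ℕ → ℂ} {f : ℂ → ℂ} (h : PS c f) (a : ℂ) :
    PS (fun n => a * c n) (fun z => a * f z) := fun z hz => by
  simpa [mul_assoc] using (h z hz).mul_left a

theorem PS.sub {c d : ℕ → ℂ} {f g : ℂ → ℂ} (h : PS c f) (h' : PS d g) :
    PS (fun n => c n - d n) (fun z => f z - g z) := fun z hz => by
  simpa [sub_mul] using (h z hz).sub (h' z hz)

theorem PS.mul_id {c : ℕ → ℂ} {f : ℂ → ℂ} (h : PS c f) :
    PS (fun n => if n = 0 then 0 else c (n - 1)) (fun z => z * f z) := fun z hz => by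
  have := (h z hz).mul_left z
  rw [← hasSum_nat_add_iff' 1]
  simpa [pow_succ, mul_comm, mul_left_comm] using this

theorem PS.tail {c : ℕ → ℂ} {f g : ℂ → ℂ} (h : PS c f) (hg : ∀ z, ‖z‖ < 1 → f z = z * g z)
    (hd : DifferentiableOn ℂ g (ball 0 1)) : PS (fun n => c (n + 1)) g := by
  obtain ⟨d, hd⟩ := exists_PS hd
  have h1 := hd.mul_id
  have h2 : PS c (fun z => z * g z) := fun z hz => by simpa [hg z hz] using h z hz
  have := h2.unique h1
  rw [this]; simpa using hd

theorem PS.coeff_eq {c : ℕ → ℂ} {f : ℂ → ℂ} (h : PS c f) (n : ℕ) :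
    c n = (n.factorial : ℂ)⁻¹ * iteratedDeriv n f 0 := by
  have h2 : PS (fun n => (n.factorial : ℂ)⁻¹ * iteratedDeriv n f 0) f := fun z hz => by
    have := Complex.hasSum_taylorSeries_on_ball h.differentiableOn (z := z) (by simpa using hz)
    simpa [mul_comm, mul_left_comm] using this
  exact congrFun (h.unique h2) n

theorem PS.deriv {c : ℕ → ℂ} {f : ℂ → ℂ} (h : PS c f) :
    PS (fun n => ((n : ℂ) + 1) * c (n + 1)) (deriv f) := by
  obtain ⟨d, hd⟩ := exists_PS (h.differentiableOn.deriv isOpen_ball)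
  convert hd using 2 with n
  rw [hd.coeff_eq, h.coeff_eq, ← iteratedDeriv_succ', Nat.factorial_succ]
  have : ((n.factorial : ℕ) : ℂ) ≠ 0 := by exact_mod_cast n.factorial_ne_zero
  have : (n : ℂ) + 1 ≠ 0 := by exact_mod_cast n.succ_ne_zero
  push_cast
  field_simp

/-- Reflection in the real axis. -/
theorem PS.conj {c : ℕ → ℂ} {f : ℂ → ℂ} (h : PS c f) :
    PS (fun n => starRingEnd ℂ (c n)) (fun z => starRingEnd ℂ (f (starRingEnd ℂ z))) := fun z hz => by
  have h1 := (h (starRingEnd ℂ z) (by simpa using hz))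
  have := Complex.hasSum_conj'.2 h1
  simpa using this

/-! ### Coefficient inequalities on circles and Bohr's theorem -/

theorem integral_exp_int (m : ℤ) :
    ∫ θ in (-Real.pi)..Real.pi, Complex.exp (m * θ * I) = if m = 0 then 2 * (Real.pi : ℂ) else 0 := by
  split_ifs with h
  · subst h; simp; ring
  · have hc : (m : ℂ) * I ≠ 0 := by simp [h]
    have := integral_exp_mul_complex (a := -Real.pi) (b := Real.pi) hc
    have e : ∀ θ : ℝ, Complex.exp (m * θ * I) = Complex.exp (m * I * θ) := fun θ => by ring_nf
    simp_rw [e, this]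
    have e2 : (m : ℂ) * I * (Real.pi : ℝ) = (m : ℂ) * I * ((-Real.pi : ℝ) : ℂ) + m * (2 * Real.pi * I) := by
      push_cast; ring
    rw [e2, Complex.exp_add, Complex.exp_int_mul_two_pi_mul_I, mul_one, sub_self, zero_div]

theorem PS.norm_circle {ρ : ℝ} (h0 : 0 ≤ ρ) (θ : ℝ) : ‖(ρ : ℂ) * Complex.exp (θ * I)‖ = ρ := by
  simp [Complex.norm_exp_ofReal_mul_I, abs_of_nonneg h0]

/-- The Fourier coefficients of `f` on the circle of radius `ρ`; those of negative index vanish. -/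
theorem PS.integral {c : ℕ → ℂ} {f : ℂ → ℂ} (h : PS c f) {ρ : ℝ} (h0 : 0 ≤ ρ) (h1 : ρ < 1) (m : ℤ) :
    ∫ θ in (-Real.pi)..Real.pi, f (ρ * Complex.exp (θ * I)) * Complex.exp (-m * θ * I) =
      if 0 ≤ m then 2 * Real.pi * (c m.toNat * ρ ^ m.toNat) else 0 := by
  set F : ℕ → C(ℝ, ℂ) := fun n =>
    ⟨fun θ => c n * (ρ * Complex.exp (θ * I)) ^ n * Complex.exp (-m * θ * I), by fun_prop⟩ with hF
  have hb : ∀ n (θ : ℝ), ‖F n θ‖ ≤ ‖c n‖ * ρ ^ n := fun n θ => by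
    have e : Complex.exp (-m * θ * I) = Complex.exp ((-m * θ : ℝ) * I) := by push_cast; rfl
    simp only [hF, ContinuousMap.coe_mk, norm_mul, norm_pow]
    rw [e, Complex.norm_exp_ofReal_mul_I, Complex.norm_exp_ofReal_mul_I]
    simp [abs_of_nonneg h0]
  have hs : Summable fun n => ‖(F n).restrict (⟨uIcc (-Real.pi) Real.pi, isCompact_uIcc⟩ : TopologicalSpace.Compacts ℝ)‖ := by
    refine Summable.of_nonneg_of_le (fun _ => norm_nonneg _) (fun n => ?_) (h.summable h0 h1)
    refine (ContinuousMap.norm_le _ (by positivity)).2 fun x => hb n x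
  have := intervalIntegral.hasSum_intervalIntegral_of_summable_norm (a := -Real.pi) (b := Real.pi) hs
  have e1 : ∀ θ : ℝ, ∑' n, F n θ = f (ρ * Complex.exp (θ * I)) * Complex.exp (-m * θ * I) := fun θ =>
    ((h (ρ * Complex.exp (θ * I)) (by rw [PS.norm_circle h0]; exact h1)).mul_right _).tsum_eq
  have e2 : ∀ n, ∫ θ in (-Real.pi)..Real.pi, F n θ = c n * ρ ^ n * (if (n : ℤ) = m then 2 * (Real.pi : ℂ) else 0) := fun n => by
    have e3 : ∀ θ : ℝ, F n θ = c n * ρ ^ n * Complex.exp (((n - m : ℤ) : ℂ) * θ * I) := fun θ => by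
      simp only [hF, ContinuousMap.coe_mk]
      have : Complex.exp (((n - m : ℤ) : ℂ) * θ * I) =
          Complex.exp (n * (θ * I)) * Complex.exp (-m * θ * I) := by
        rw [← Complex.exp_add]; congr 1; push_cast; ring
      rw [mul_pow, ← Complex.exp_nat_mul, this]
      ring
    simp_rw [e3]
    rw [intervalIntegral.integral_const_mul, integral_exp_int]
    simp [sub_eq_zero]
  simp_rw [e1, e2] at this
  refine this.unique ?_
  split_ifs with hm
  · obtain ⟨k, rfl⟩ := Int.eq_ofNat_of_zero_le hm
    have := hasSum_single (f := fun n : ℕ => c n * (ρ : ℂ) ^ n * (if (n : ℤ) = k then 2 * (Real.pi : ℂ) else 0)) k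
      (by intro n hn; simp [hn])
    simpa [mul_comm, mul_assoc, mul_left_comm] using this
  · convert hasSum_zero using 2 with n
    have : (n : ℤ) ≠ m := by omega
    simp [this]

theorem continuous_circle {c : ℕ → ℂ} {f : ℂ → ℂ} (h : PS c f) {ρ : ℝ} (h0 : 0 ≤ ρ) (h1 : ρ < 1) :
    Continuous fun θ : ℝ => f (ρ * Complex.exp (θ * I)) := by
  have := h.differentiableOn.continuousOn
  refine this.comp_continuous (by fun_prop) fun θ => ?_
  simp only [mem_ball_zero_iff]
  rw [PS.norm_circle h0]; exact h1

/-- Bessel's inequality for the Taylor coefficients on a circle. -/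
theorem PS.bessel {c : ℕ → ℂ} {f : ℂ → ℂ} (h : PS c f) {ρ : ℝ} (h0 : 0 ≤ ρ) (h1 : ρ < 1) (N : ℕ) :
    2 * Real.pi * ∑ n ∈ Finset.range N, ‖c n‖ ^ 2 * ρ ^ (2 * n) ≤
      ∫ θ in (-Real.pi)..Real.pi, ‖f (ρ * Complex.exp (θ * I))‖ ^ 2 := by
  have hab : -Real.pi < Real.pi := by linarith [Real.pi_pos]
  set u : ℝ → ℂ := fun θ => f (ρ * Complex.exp (θ * I)) with hu
  have hcont : Continuous u := continuous_circle h h0 h1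
  have hL2 : MeasureTheory.MemLp u 2 (MeasureTheory.volume.restrict (Ioc (-Real.pi) Real.pi)) := by
    obtain ⟨C, hC⟩ := (isCompact_Icc (a := -Real.pi) (b := Real.pi)).exists_bound_of_continuousOn hcont.continuousOn
    refine MeasureTheory.MemLp.of_bound hcont.aestronglyMeasurable C ?_
    refine (MeasureTheory.ae_restrict_iff' measurableSet_Ioc).2 (Eventually.of_forall fun x hx => ?_)
    exact hC x (Ioc_subset_Icc_self hx)
  have hs := hasSum_sq_fourierCoeffOn hab hL2
  have hc : ∀ n : ℕ, fourierCoeffOn hab u n = c n * ρ ^ n := fun n => by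
    rw [fourierCoeffOn_eq_integral]
    have := h.integral h0 h1 n
    simp only [Int.natCast_nonneg, if_true, Int.toNat_natCast] at this
    have e : ∀ θ : ℝ, (fourier (-(n : ℤ)) (θ : AddCircle (Real.pi - -Real.pi))) • u θ =
        f (ρ * Complex.exp (θ * I)) * Complex.exp (-(n : ℤ) * θ * I) := fun θ => by
      rw [fourier_coe_apply, smul_eq_mul, mul_comm, hu]
      congr 2
      have : (Real.pi : ℂ) ≠ 0 := by exact_mod_cast Real.pi_ne_zero
      push_cast
      field_simp
      ring
    simp_rw [e, this]
    have : (Real.pi : ℂ) ≠ 0 := by exact_mod_cast Real.pi_ne_zero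
    simp
    field_simp
    ring
  have h2 := sum_le_hasSum ((Finset.range N).map Nat.castEmbedding) (fun i _ => sq_nonneg _) hs
  rw [Finset.sum_map] at h2
  simp only [Nat.castEmbedding_apply, hc] at h2
  have h3 : (Real.pi - -Real.pi) = 2 * Real.pi := by ring
  rw [h3, smul_eq_mul] at h2
  have h4 := mul_le_mul_of_nonneg_left h2 (by positivity : (0:ℝ) ≤ 2 * Real.pi)
  rw [mul_inv_cancel_left₀ (by positivity)] at h4
  refine le_trans (le_of_eq ?_) h4
  congr 1
  refine Finset.sum_congr rfl fun n _ => ?_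
  simp [mul_pow, abs_of_nonneg h0, pow_mul, pow_right_comm]

/-- Carathéodory's coefficient estimate. -/
theorem PS.caratheodory {c : ℕ → ℂ} {f : ℂ → ℂ} (h : PS c f) {ρ : ℝ} (h0 : 0 ≤ ρ) (h1 : ρ < 1) {K : ℝ}
    (hK : ∀ z : ℂ, ‖z‖ = ρ → (f z).re ≤ K) {n : ℕ} (hn : n ≠ 0) :
    ‖c n‖ * ρ ^ n ≤ 2 * (K - (c 0).re) := by
  set u : ℝ → ℂ := fun θ => f (ρ * Complex.exp (θ * I)) with hu
  have hcont : Continuous u := continuous_circle h h0 h1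
  have hcE : ∀ m : ℤ, Continuous fun θ : ℝ => Complex.exp (-m * θ * I) := fun m => by fun_prop
  have i1 := h.integral h0 h1 n
  have i2 := h.integral h0 h1 (-n)
  have i3 := h.integral h0 h1 0
  simp only [Int.natCast_nonneg, if_true, Int.toNat_natCast] at i1
  rw [if_neg (by omega)] at i2
  simp at i3
  -- The `n`-th coefficient of `2 (K - Re f)` is `- c n ρ ^ n`.
  have i4 : ∫ θ in (-Real.pi)..Real.pi, (starRingEnd ℂ (u θ)) * Complex.exp (-(n : ℤ) * θ * I) = 0 := by
    have e : ∀ θ : ℝ, (starRingEnd ℂ (u θ)) * Complex.exp (-(n : ℤ) * θ * I) =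
       starRingEnd ℂ (u θ * Complex.exp (-((-n : ℤ) : ℂ) * θ * I)) := fun θ => by
      rw [map_mul, ← Complex.exp_conj]
      simp
    simp_rw [e]
    rw [intervalIntegral.intervalIntegral_conj]
    push_cast at i2 ⊢
    rw [i2, map_zero]
  have i5 : ∫ θ in (-Real.pi)..Real.pi, (2 * K - u θ - starRingEnd ℂ (u θ)) * Complex.exp (-(n : ℤ) * θ * I) =
      - (2 * Real.pi * (c n * ρ ^ n)) := by
    have j1 := integral_exp_int (-n)
    rw [if_neg (by omega)] at j1
    push_cast at j1 i4 i1 ⊢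
    simp_rw [sub_mul]
    rw [intervalIntegral.integral_sub, intervalIntegral.integral_sub, i4, i1,
      intervalIntegral.integral_const_mul, j1]
    · ring
    all_goals refine Continuous.intervalIntegrable ?_ _ _
    all_goals fun_prop
  have hre : ∀ θ, (2 * K - u θ - starRingEnd ℂ (u θ)) = ((2 * (K - (u θ).re) : ℝ) : ℂ) := fun θ => by
    have := Complex.add_conj (u θ)
    rw [sub_sub, this]; push_cast; ring
  have hab : -Real.pi ≤ Real.pi := by linarith [Real.pi_pos]
  have hcre : Continuous fun θ => (u θ).re := Complex.continuous_re.comp hcont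
  have i6 : ∫ θ in (-Real.pi)..Real.pi, 2 * (K - (u θ).re) = 2 * Real.pi * (2 * (K - (c 0).re)) := by
    rw [intervalIntegral.integral_const_mul, intervalIntegral.integral_sub (by simp) (hcre.intervalIntegrable _ _)]
    have : ∫ θ in (-Real.pi)..Real.pi, (u θ).re = (2 * Real.pi * c 0).re := by
      rw [← i3]
      have := Complex.reCLM.intervalIntegral_comp_comm (hcont.intervalIntegrable (μ := MeasureTheory.volume) (-Real.pi) Real.pi)
      simpa using this
    rw [this]
    simp
    ring
  have h7 : ‖∫ θ in (-Real.pi)..Real.pi, (2 * K - u θ - starRingEnd ℂ (u θ)) * Complex.exp (-(n : ℤ) * θ * I)‖ ≤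
      ∫ θ in (-Real.pi)..Real.pi, 2 * (K - (u θ).re) := by
    refine intervalIntegral.norm_integral_le_of_norm_le hab ?_ (Continuous.intervalIntegrable (by fun_prop) _ _)
    refine Eventually.of_forall fun θ _ => ?_
    have e : Complex.exp (-(n : ℤ) * θ * I) = Complex.exp ((-n * θ : ℝ) * I) := by push_cast; rfl
    rw [norm_mul, e, Complex.norm_exp_ofReal_mul_I, mul_one, hre, Complex.norm_real, Real.norm_of_nonneg]
    have := hK _ (PS.norm_circle h0 θ)
    simp only [hu]; linarith
  rw [i5, i6, norm_neg, norm_mul, norm_mul, norm_mul, norm_pow] at h7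
  simp only [Complex.norm_real, Complex.norm_ofNat, Real.norm_of_nonneg h0, Real.norm_of_nonneg Real.pi_pos.le] at h7
  exact le_of_mul_le_mul_left h7 (by positivity)

/-- Bohr's theorem: the coefficients of a function bounded by `K` on the disk satisfy
`∑ |c n| r ^ n ≤ K` for `r ≤ 1 / 3`. -/
theorem PS.bohr {c : ℕ → ℂ} {f : ℂ → ℂ} (h : PS c f) {K r : ℝ}
    (hK : ∀ z : ℂ, ‖z‖ < 1 → ‖f z‖ ≤ K) (h0 : 0 ≤ r) (h1 : r ≤ 1 / 3) :
    ∑' n, ‖c n‖ * r ^ n ≤ K := by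
  -- rotate so that the constant coefficient is nonnegative
  obtain ⟨u, hu, huc⟩ : ∃ u : ℂ, ‖u‖ = 1 ∧ u * c 0 = ‖c 0‖ := by
    by_cases hc : c 0 = 0
    · exact ⟨1, by simp, by simp [hc]⟩
    · have hc' : (‖c 0‖ : ℂ) ≠ 0 := by simpa using hc
      refine ⟨‖c 0‖ / c 0, by simp [hc], by field_simp⟩
  have hcn : ∀ n, ‖c (n + 1)‖ ≤ 2 * (K - ‖c 0‖) := fun n => by
    have key : ∀ ρ : ℝ, 0 < ρ → ρ < 1 → ‖c (n + 1)‖ * ρ ^ (n + 1) ≤ 2 * (K - ‖c 0‖) := fun ρ p0 p1 => by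
      have := (h.const_mul u).caratheodory p0.le p1 (K := K) (fun z hz =>
        (Complex.re_le_norm _).trans (by rw [norm_mul, hu, one_mul]; exact hK z (by linarith))) n.succ_ne_zero
      simpa [norm_mul, hu, huc] using this
    have ht : Tendsto (fun ρ : ℝ => ‖c (n + 1)‖ * ρ ^ (n + 1)) (𝓝[<] 1) (𝓝 (‖c (n + 1)‖ * 1 ^ (n + 1))) :=
      ((continuous_const.mul (continuous_pow _)).tendsto _).mono_left nhdsWithin_le_nhds
    have := le_of_tendsto ht (b := 2 * (K - ‖c 0‖)) (by
      filter_upwards [Ioo_mem_nhdsLT (show (0:ℝ) < 1 by norm_num)] with ρ hρ using key ρ hρ.1 hρ.2)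
    simpa using this
  have hsum := h.summable h0 (by linarith)
  rw [hsum.tsum_eq_zero_add]
  have hg : HasSum (fun n => 2 * (K - ‖c 0‖) * r ^ (n + 1)) (2 * (K - ‖c 0‖) * (r / (1 - r))) := by
    have := ((hasSum_geometric_of_lt_one h0 (by linarith)).mul_left (2 * (K - ‖c 0‖) * r))
    simpa [pow_succ, mul_assoc, mul_comm, mul_left_comm, div_eq_mul_inv] using this
  have h2 : ∑' n, ‖c (n + 1)‖ * r ^ (n + 1) ≤ 2 * (K - ‖c 0‖) * (r / (1 - r)) := by
    rw [← hg.tsum_eq]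
    refine Summable.tsum_le_tsum (fun n => ?_) ((summable_nat_add_iff 1).2 hsum) hg.summable
    exact mul_le_mul_of_nonneg_right (hcn n) (by positivity)
  have hK0 : 0 ≤ K - ‖c 0‖ := by
    have := hK 0 (by simp)
    rw [h.zero] at this; linarith
  have h3 : r / (1 - r) ≤ 1 / 2 := by
    rw [div_le_div_iff₀ (by linarith) (by norm_num)]; linarith
  simp only [pow_zero, mul_one]
  nlinarith [mul_le_mul_of_nonneg_left h3 hK0]

/-! ### Majorant series -/

/-- `Maj r C f`: on the closed disk of radius `r`, `f` is the sum of a power series `∑ c n z ^ n` with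
`∑ ‖c n‖ r ^ n ≤ C`. -/
def Maj (r C : ℝ) (f : ℂ → ℂ) : Prop :=
  ∃ c : ℕ → ℂ, (∀ z : ℂ, ‖z‖ ≤ r → HasSum (fun n => c n * z ^ n) (f z)) ∧
    Summable (fun n => ‖c n‖ * r ^ n) ∧ ∑' n, ‖c n‖ * r ^ n ≤ C

namespace Maj

variable {r C D : ℝ} {f g : ℂ → ℂ}

theorem mono (h : Maj r C f) (hCD : C ≤ D) : Maj r D f := by
  obtain ⟨c, h1, h2, h3⟩ := h
  exact ⟨c, h1, h2, h3.trans hCD⟩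

theorem congr (h : Maj r C f) (hfg : ∀ z, ‖z‖ ≤ r → g z = f z) : Maj r C g := by
  obtain ⟨c, h1, h2, h3⟩ := h
  exact ⟨c, fun z hz => by rw [hfg z hz]; exact h1 z hz, h2, h3⟩

theorem nonneg (hr : 0 ≤ r) (h : Maj r C f) : 0 ≤ C := by
  obtain ⟨c, h1, h2, h3⟩ := h
  exact (tsum_nonneg fun n => by positivity).trans h3

theorem norm_le (h : Maj r C f) {z : ℂ} (hz : ‖z‖ ≤ r) : ‖f z‖ ≤ C := by
  obtain ⟨c, h1, h2, h3⟩ := h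
  rw [← (h1 z hz).tsum_eq]
  have hb : ∀ n, ‖c n * z ^ n‖ ≤ ‖c n‖ * r ^ n := fun n => by
    rw [norm_mul, norm_pow]; gcongr
  exact (tsum_of_norm_bounded h2.hasSum hb).trans h3

theorem const (a : ℂ) : Maj r ‖a‖ (fun _ => a) := by
  have key : ∀ z : ℂ, HasSum (fun n => (if n = 0 then a else 0) * z ^ n) a := fun z => by
    convert hasSum_single (f := fun n => (if n = 0 then a else 0) * z ^ n) 0 (fun n hn => by simp [hn]) using 1
    simp
  have k2 : HasSum (fun n => ‖if n = 0 then a else 0‖ * r ^ n) ‖a‖ := by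
    convert hasSum_single (f := fun n => ‖if n = 0 then a else 0‖ * r ^ n) 0 (fun n hn => by simp [hn]) using 1
    simp
  exact ⟨fun n => if n = 0 then a else 0, fun z _ => key z, k2.summable, k2.tsum_eq.le⟩

theorem id : Maj r r (fun z => z) := by
  have key : ∀ z : ℂ, HasSum (fun n => (if n = 1 then (1 : ℂ) else 0) * z ^ n) z := fun z => by
    convert hasSum_single (f := fun n => (if n = 1 then (1 : ℂ) else 0) * z ^ n) 1 (fun n hn => by simp [hn]) using 1
    simp
  have k2 : HasSum (fun n => ‖if n = 1 then (1 : ℂ) else 0‖ * r ^ n) r := by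
    convert hasSum_single (f := fun n => ‖if n = 1 then (1 : ℂ) else 0‖ * r ^ n) 1 (fun n hn => by simp [hn]) using 1
    simp
  exact ⟨fun n => if n = 1 then (1 : ℂ) else 0, fun z _ => key z, k2.summable, k2.tsum_eq.le⟩

theorem const_mul (h : Maj r C f) (a : ℂ) : Maj r (‖a‖ * C) (fun z => a * f z) := by
  obtain ⟨c, h1, h2, h3⟩ := h
  refine ⟨fun n => a * c n, fun z hz => by simpa [mul_assoc] using (h1 z hz).mul_left a, ?_, ?_⟩
  · simpa [mul_assoc] using h2.mul_left ‖a‖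
  · simp only [norm_mul, mul_assoc, tsum_mul_left]
    gcongr

theorem add (hr : 0 ≤ r) (h : Maj r C f) (h' : Maj r D g) : Maj r (C + D) (fun z => f z + g z) := by
  obtain ⟨c, h1, h2, h3⟩ := h
  obtain ⟨d, h1', h2', h3'⟩ := h'
  have hb : ∀ n, ‖c n + d n‖ * r ^ n ≤ ‖c n‖ * r ^ n + ‖d n‖ * r ^ n := fun n => by
    rw [← add_mul]; gcongr; exact norm_add_le _ _
  have hs : Summable fun n => ‖c n + d n‖ * r ^ n :=
    Summable.of_nonneg_of_le (fun n => by positivity) hb (h2.add h2')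
  refine ⟨fun n => c n + d n, fun z hz => by simpa [add_mul] using (h1 z hz).add (h1' z hz), hs, ?_⟩
  refine (hs.tsum_le_tsum hb (h2.add h2')).trans ?_
  rw [h2.tsum_add h2']; gcongr

theorem neg (h : Maj r C f) : Maj r C (fun z => - f z) := by
  simpa using h.const_mul (-1)

theorem sub (hr : 0 ≤ r) (h : Maj r C f) (h' : Maj r D g) : Maj r (C + D) (fun z => f z - g z) := by
  simpa [sub_eq_add_neg] using h.add hr h'.neg

/-- Power series with majorants may be summed. -/
theorem hasSum (hr : 0 ≤ r) {u : ℕ → ℂ → ℂ} {K : ℕ → ℝ} (h : ∀ i, Maj r (K i) (u i)) (hK : Summable K)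
    (hF : ∀ z, ‖z‖ ≤ r → HasSum (fun i => u i z) (f z)) : Maj r (∑' i, K i) f := by
  choose c h1 h2 h3 using h
  have hsum : Summable fun p : ℕ × ℕ => ‖c p.1 p.2‖ * r ^ p.2 := by
    rw [summable_prod_of_nonneg (fun p => by positivity)]
    exact ⟨h2, Summable.of_nonneg_of_le (fun i => tsum_nonneg fun n => by positivity) h3 hK⟩
  have hcol : ∀ z : ℂ, ‖z‖ ≤ r → Summable fun p : ℕ × ℕ => c p.1 p.2 * z ^ p.2 := fun z hz => by
    refine Summable.of_norm_bounded hsum fun p => ?_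
    rw [norm_mul, norm_pow]; gcongr
  have hsw := hsum.prod_symm
  rcases hr.eq_or_lt with rfl | hr'
  · -- at radius zero only the constant term matters
    have hz : ∀ z : ℂ, ‖z‖ ≤ 0 → z = 0 := fun z hz => by simpa using hz
    refine (Maj.const (f 0)).mono ?_ |>.congr (fun z h => by rw [hz z h])
    have hb : ∀ i, ‖u i 0‖ ≤ K i := fun i => Maj.norm_le ⟨c i, h1 i, h2 i, h3 i⟩ (by simp)
    rw [← (hF 0 (by simp)).tsum_eq]
    exact tsum_of_norm_bounded hK.hasSum hb
  have hci : ∀ n, Summable fun i => ‖c i n‖ := fun n => by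
    have := (hsw.prod_factor n)
    simp only [Prod.fst_swap, Prod.snd_swap] at this
    exact (summable_mul_right_iff (by positivity)).1 this
  have hbd : ∀ n, ‖∑' i, c i n‖ * r ^ n ≤ ∑' i, ‖c i n‖ * r ^ n := fun n => by
    rw [tsum_mul_right]; gcongr; exact norm_tsum_le_tsum_norm (hci n)
  have hs2 : Summable fun n => ∑' i, ‖c i n‖ * r ^ n := hsw.prod
  have hs3 : Summable fun n => ‖∑' i, c i n‖ * r ^ n :=
    Summable.of_nonneg_of_le (fun n => by positivity) hbd hs2
  refine ⟨fun n => ∑' i, c i n, fun z hz => ?_, hs3, ?_⟩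
  · have hp := hcol z hz
    have e1 : HasSum (fun p : ℕ × ℕ => c p.1 p.2 * z ^ p.2) (f z) := by
      have := hp.hasSum.prod_fiberwise (fun i => h1 i z hz)
      rw [← this.unique (hF z hz)]
      exact hp.hasSum
    have e2 := (Equiv.prodComm ℕ ℕ).hasSum_iff.2 e1
    have := e2.prod_fiberwise (g := fun n => (∑' i, c i n) * z ^ n) (fun n => ?_)
    · exact this
    · exact ((hci n).of_norm.hasSum.mul_right (z ^ n))
  · refine (hs3.tsum_le_tsum hbd hs2).trans ?_
    have e3 : ∑' n, ∑' i, ‖c i n‖ * r ^ n = ∑' i, ∑' n, ‖c i n‖ * r ^ n := by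
      exact (hsum.tsum_comm (f := fun i n => ‖c i n‖ * r ^ n))
    rw [e3]
    exact hsum.prod.tsum_le_tsum h3 hK

theorem mul_pow (hr : 0 ≤ r) (h : Maj r C f) (a : ℂ) (k : ℕ) : Maj r (‖a‖ * r ^ k * C) (fun z => a * z ^ k * f z) := by
  obtain ⟨c, h1, h2, h3⟩ := h
  have key : ∀ z : ℂ, ‖z‖ ≤ r → HasSum (fun n => (if n < k then 0 else a * c (n - k)) * z ^ n) (a * z ^ k * f z) := fun z hz => by
    rw [← hasSum_nat_add_iff' k]
    have e : ∑ i ∈ Finset.range k, (if i < k then 0 else a * c (i - k)) * z ^ i = 0 :=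
      Finset.sum_eq_zero fun i hi => by simp [Finset.mem_range.1 hi]
    rw [e, sub_zero]
    have := (h1 z hz).mul_left (a * z ^ k)
    simpa [pow_add, mul_comm, mul_assoc, mul_left_comm] using this
  have k2 : HasSum (fun n => ‖if n < k then 0 else a * c (n - k)‖ * r ^ n) (‖a‖ * r ^ k * ∑' n, ‖c n‖ * r ^ n) := by
    rw [← hasSum_nat_add_iff' k]
    have e : ∑ i ∈ Finset.range k, ‖if i < k then 0 else a * c (i - k)‖ * r ^ i = 0 :=
      Finset.sum_eq_zero fun i hi => by simp [Finset.mem_range.1 hi]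
    rw [e, sub_zero]
    have := h2.hasSum.mul_left (‖a‖ * r ^ k)
    simpa [pow_add, mul_comm, mul_assoc, mul_left_comm] using this
  exact ⟨_, key, k2.summable, by rw [k2.tsum_eq]; gcongr⟩

theorem mul (hr : 0 ≤ r) (h : Maj r C f) (h' : Maj r D g) : Maj r (C * D) (fun z => f z * g z) := by
  have hD := h'.nonneg hr
  obtain ⟨c, h1, h2, h3⟩ := h
  have := hasSum hr (fun k => h'.mul_pow hr (c k) k) (h2.mul_right D) (f := fun z => f z * g z)
    (fun z hz => (h1 z hz).mul_right _)
  refine this.mono ?_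
  rw [tsum_mul_right]; gcongr

theorem pow (hr : 0 ≤ r) (h : Maj r C f) (k : ℕ) : Maj r (C ^ k) (fun z => f z ^ k) := by
  induction k with
  | zero => simpa using (Maj.const (r := r) (1 : ℂ))
  | succ k ih => simpa [pow_succ] using ih.mul hr h

/-- Composition with a power series: `∑ a k w ^ k` is majorised at `f` by `∑ ‖a k‖ C ^ k`. -/
theorem comp (hr : 0 ≤ r) (h : Maj r C f) {a : ℕ → ℂ} {Φ : ℂ → ℂ} (ha : Summable fun k => ‖a k‖ * C ^ k)
    (hΦ : ∀ z, ‖z‖ ≤ r → HasSum (fun k => a k * f z ^ k) (Φ (f z))) :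
    Maj r (∑' k, ‖a k‖ * C ^ k) (fun z => Φ (f z)) :=
  hasSum hr (fun k => (h.pow hr k).const_mul (a k)) ha hΦ

theorem exp_sub_one (hr : 0 ≤ r) (h : Maj r C f) :
    Maj r (Real.exp C - 1) (fun z => Complex.exp (f z) - 1) := by
  have hs : HasSum (fun k : ℕ => C ^ (k + 1) / (k + 1).factorial) (Real.exp C - 1) := by
    have := (hasSum_nat_add_iff' 1).2 (NormedSpace.expSeries_div_hasSum_exp (𝔸 := ℝ) C)
    simpa [← Real.exp_eq_exp_ℝ] using this
  rw [← hs.tsum_eq]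
  refine hasSum hr (u := fun k z => ((k + 1).factorial : ℂ)⁻¹ * f z ^ (k + 1)) (fun k => ?_) hs.summable (fun z _ => ?_)
  · refine ((h.pow hr (k + 1)).const_mul _).mono (le_of_eq ?_)
    simp [div_eq_inv_mul]
  · have := (hasSum_nat_add_iff' 1).2 (NormedSpace.expSeries_div_hasSum_exp (𝔸 := ℂ) (f z))
    simpa [← Complex.exp_eq_exp_ℂ, div_eq_inv_mul] using this

theorem exp (hr : 0 ≤ r) (h : Maj r C f) : Maj r (Real.exp C) (fun z => Complex.exp (f z)) := by
  have := (h.exp_sub_one hr).add hr (Maj.const (1 : ℂ))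
  simpa using this

theorem cosh_sub_one (hr : 0 ≤ r) (h : Maj r C f) :
    Maj r (Real.cosh C - 1) (fun z => Complex.cosh (f z) - 1) := by
  have hs : HasSum (fun k : ℕ => C ^ (2 * (k + 1)) / (2 * (k + 1)).factorial) (Real.cosh C - 1) := by
    have := (hasSum_nat_add_iff' 1).2 (Real.hasSum_cosh C)
    simpa using this
  rw [← hs.tsum_eq]
  refine hasSum hr (u := fun k z => ((2 * (k + 1)).factorial : ℂ)⁻¹ * f z ^ (2 * (k + 1))) (fun k => ?_) hs.summable (fun z _ => ?_)
  · refine ((h.pow hr _).const_mul _).mono (le_of_eq ?_)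
    simp [div_eq_inv_mul]
  · have := (hasSum_nat_add_iff' 1).2 (Complex.hasSum_cosh (f z))
    simpa [div_eq_inv_mul] using this

end Maj

theorem PS.maj {c : ℕ → ℂ} {f : ℂ → ℂ} (h : PS c f) {r : ℝ} (h0 : 0 ≤ r) (h1 : r < 1) :
    Maj r (∑' n, ‖c n‖ * r ^ n) f :=
  ⟨c, fun z hz => h z (by linarith), h.summable h0 h1, le_rfl⟩

theorem PS.tsum_le_of_maj {c : ℕ → ℂ} {f : ℂ → ℂ} (h : PS c f) {r C : ℝ} (h0 : 0 < r) (h1 : r < 1)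
    (hM : Maj r C f) : ∑' n, ‖c n‖ * r ^ n ≤ C := by
  obtain ⟨d, h1', h2, h3⟩ := hM
  have : c = d := coeff_unique h0 (fun z hz => h z (by linarith)) (fun z hz => h1' z hz.le)
  rw [this]; exact h3

/-! ### Logarithms and univalent functions -/

/-- A zero-free holomorphic function on the disk has a holomorphic logarithm. -/
theorem exists_log {f : ℂ → ℂ} (hf : DifferentiableOn ℂ f (ball 0 1)) (h0 : ∀ z ∈ ball (0 : ℂ) 1, f z ≠ 0) :
    ∃ l : ℂ → ℂ, DifferentiableOn ℂ l (ball 0 1) ∧ ∀ z ∈ ball (0 : ℂ) 1, f z = Complex.exp (l z) := by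
  have hd : DifferentiableOn ℂ (fun z => deriv f z / f z) (ball 0 1) := (hf.deriv isOpen_ball).div hf h0
  obtain ⟨l, hl⟩ := hd.isExactOn_ball
  have h00 : (0 : ℂ) ∈ ball (0 : ℂ) 1 := by simp
  have hc : ∀ z ∈ ball (0 : ℂ) 1, HasDerivAt (fun z => f z * Complex.exp (- l z)) 0 z := fun z hz => by
    have h1 := (hf.differentiableAt (isOpen_ball.mem_nhds hz)).hasDerivAt
    refine (h1.fun_mul (hl z hz).fun_neg.cexp).congr_deriv ?_
    have := h0 z hz
    field_simp
    ring
  have hconst : ∀ z ∈ ball (0 : ℂ) 1, f z * Complex.exp (- l z) = f 0 * Complex.exp (- l 0) := fun z hz =>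
    isOpen_ball.is_const_of_deriv_eq_zero (convex_ball (0 : ℂ) 1).isPreconnected
      (fun z hz => (hc z hz).differentiableAt.differentiableWithinAt) (fun z hz => (hc z hz).deriv) hz h00
  refine ⟨fun z => l z + (Complex.log (f 0) - l 0), fun z hz => ((hl z hz).differentiableAt.add_const _).differentiableWithinAt, fun z hz => ?_⟩
  rw [Complex.exp_add, Complex.exp_sub, Complex.exp_log (h0 0 h00)]
  have := hconst z hz
  rw [Complex.exp_neg, Complex.exp_neg] at this
  field_simp at this ⊢
  linear_combination this

/-- A univalent function on the disk vanishing at `0` has nonzero derivative there: otherwise it would be, near `0`,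
a power of exponent at least two of a local coordinate. -/
theorem deriv_ne_zero_of_injOn {X : ℂ → ℂ} (hX : DifferentiableOn ℂ X (ball 0 1)) (hinj : InjOn X (ball 0 1))
    (h0 : X 0 = 0) : deriv X 0 ≠ 0 := by
  intro hder
  have hb : ball (0 : ℂ) 1 ∈ 𝓝 (0 : ℂ) := ball_mem_nhds _ one_pos
  have han : AnalyticAt ℂ X 0 := hX.analyticAt hb
  have hne : ¬ ∀ᶠ z in 𝓝 (0 : ℂ), X z = 0 := by
    intro h
    have h2 : ∀ᶠ z in 𝓝[≠] (0 : ℂ), z ∈ ball (0 : ℂ) 1 ∧ X z = 0 ∧ z ≠ 0 := by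
      filter_upwards [nhdsWithin_le_nhds hb, nhdsWithin_le_nhds h, self_mem_nhdsWithin] with z a b c using ⟨a, b, c⟩
    obtain ⟨z, a, b, c⟩ := h2.exists
    exact c (hinj a (by simp) (by rw [b, h0]))
  obtain ⟨m, G, hG, hG0, hev⟩ := han.exists_eventuallyEq_pow_smul_nonzero_iff.2 hne
  simp only [sub_zero, smul_eq_mul] at hev
  have hm0 : m ≠ 0 := by
    rintro rfl
    have := hev.self_of_nhds
    rw [h0] at this; simp at this; exact hG0 this.symm
  have hm1 : m ≠ 1 := by
    rintro rfl
    have h1 : HasDerivAt (fun z => z ^ 1 * G z) (G 0) 0 := by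
      have := ((hasDerivAt_id' (0 : ℂ)).fun_mul hG.differentiableAt.hasDerivAt)
      simpa using this
    have h2 := (h1.congr_of_eventuallyEq hev).deriv
    rw [hder] at h2; exact hG0 h2.symm
  have hm : (m : ℂ) ≠ 0 := by exact_mod_cast hm0
  -- near `0` the function is the `m`-th power of a local homeomorphism `p`
  set p : ℂ → ℂ := fun z => z * Complex.exp (Complex.log (G z / G 0) / m) with hp
  have hpan : AnalyticAt ℂ p 0 := by
    refine analyticAt_id.mul (AnalyticAt.cexp ?_)
    refine AnalyticAt.div ?_ analyticAt_const hm
    refine (hG.div analyticAt_const hG0).clog ?_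
    simp [hG0]
  have hpd : deriv p 0 = 1 := by
    have h1 : DifferentiableAt ℂ (fun z => Complex.exp (Complex.log (G z / G 0) / m)) 0 := by
      refine (AnalyticAt.cexp ?_).differentiableAt
      refine AnalyticAt.div ?_ analyticAt_const hm
      refine (hG.div analyticAt_const hG0).clog ?_
      simp [hG0]
    have := ((hasDerivAt_id' (0 : ℂ)).fun_mul h1.hasDerivAt).deriv
    simpa [hG0] using this
  have hstrict : HasStrictDerivAt p (deriv p 0) 0 := hpan.hasStrictDerivAt
  have hmap := hstrict.map_nhds_eq (by rw [hpd]; exact one_ne_zero)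
  have hp0 : p 0 = 0 := by simp [hp]
  rw [hp0] at hmap
  have hpow : ∀ᶠ z in 𝓝 (0 : ℂ), X z = G 0 * p z ^ m ∧ z ∈ ball (0 : ℂ) 1 := by
    filter_upwards [hev, hG.continuousAt.eventually_ne hG0, hb] with z h1 h2 h3
    refine ⟨?_, h3⟩
    rw [h1, hp]
    simp only
    rw [mul_pow, ← Complex.exp_nat_mul, mul_div_cancel₀ _ hm, Complex.exp_log (div_ne_zero h2 hG0)]
    field_simp
  have him := Filter.image_mem_map (m := p) hpow
  rw [hmap] at him
  set ζ := Complex.exp (2 * Real.pi * I / m) with hζ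
  have hprim : IsPrimitiveRoot ζ m := Complex.isPrimitiveRoot_exp m hm0
  have hζ1 : ζ ≠ 1 := hprim.ne_one (by omega)
  have him2 : ∀ᶠ w in 𝓝 (0 : ℂ), ζ * w ∈ p '' {z | X z = G 0 * p z ^ m ∧ z ∈ ball (0 : ℂ) 1} := by
    have : Tendsto (fun w => ζ * w) (𝓝 0) (𝓝 0) := by
      have : Continuous fun w : ℂ => ζ * w := by fun_prop
      simpa using this.tendsto 0
    exact this him
  have h3 : ∀ᶠ w in 𝓝[≠] (0 : ℂ), w ≠ 0 ∧ w ∈ p '' {z | X z = G 0 * p z ^ m ∧ z ∈ ball (0 : ℂ) 1} ∧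
      ζ * w ∈ p '' {z | X z = G 0 * p z ^ m ∧ z ∈ ball (0 : ℂ) 1} := by
    filter_upwards [self_mem_nhdsWithin, nhdsWithin_le_nhds him, nhdsWithin_le_nhds him2] with w a b c using ⟨a, b, c⟩
  obtain ⟨w, hw, ⟨z1, ⟨a1, b1⟩, c1⟩, ⟨z2, ⟨a2, b2⟩, c2⟩⟩ := h3.exists
  have : X z1 = X z2 := by
    rw [a1, a2, c1, c2, mul_pow, hprim.pow_eq_one, one_mul]
  have := hinj b1 b2 this
  rw [this, c2] at c1
  exact hζ1 (mul_right_cancel₀ hw (by rw [c1, one_mul]))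

/-- A univalent function vanishing at `0` is `z ↦ z exp (l z)`. -/
theorem exists_eq_mul_exp {X : ℂ → ℂ} (hX : DifferentiableOn ℂ X (ball 0 1)) (hinj : InjOn X (ball 0 1))
    (h0 : X 0 = 0) :
    ∃ l : ℂ → ℂ, DifferentiableOn ℂ l (ball 0 1) ∧ ∀ z ∈ ball (0 : ℂ) 1, X z = z * Complex.exp (l z) := by
  have hb : ball (0 : ℂ) 1 ∈ 𝓝 (0 : ℂ) := ball_mem_nhds _ one_pos
  have hd : DifferentiableOn ℂ (dslope X 0) (ball 0 1) := (Complex.differentiableOn_dslope hb).2 hX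
  have hX' : ∀ z, X z = z * dslope X 0 z := fun z => by
    have := sub_smul_dslope X 0 z
    rw [h0] at this; simpa using this.symm
  obtain ⟨l, hl, hle⟩ := exists_log hd fun z hz => by
    by_cases hz0 : z = 0
    · subst hz0; rw [dslope_same]; exact deriv_ne_zero_of_injOn hX hinj h0
    · intro h
      have := hX' z
      rw [h, mul_zero] at this
      exact hz0 (hinj hz (by simp) (by rw [this, h0]))
  exact ⟨l, hl, fun z hz => by rw [hX' z, hle z hz]⟩

/-! ### Logarithmic area of images of annuli -/

/-- Polar coordinates on an annulus. -/
theorem lintegral_annulus {G : ℂ → ℝ} {σ R : ℝ} (hσ : 0 < σ)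
    (hG : ContinuousOn G {z : ℂ | σ < ‖z‖ ∧ ‖z‖ < R}) :
    ∫⁻ z in {z : ℂ | σ < ‖z‖ ∧ ‖z‖ < R}, ENNReal.ofReal (G z) =
      ∫⁻ ρ in Ioo σ R, ∫⁻ θ in Ioo (-Real.pi) Real.pi,
        ENNReal.ofReal ρ * ENNReal.ofReal (G (ρ * Complex.exp (θ * I))) := by
  have hA : MeasurableSet {z : ℂ | σ < ‖z‖ ∧ ‖z‖ < R} :=
    ((isOpen_lt continuous_const continuous_norm).inter (isOpen_lt continuous_norm continuous_const)).measurableSet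
  rw [← lintegral_indicator hA, ← Complex.lintegral_comp_polarCoord_symm]
  have hS : MeasurableSet (Ioo σ R ×ˢ Ioo (-Real.pi) Real.pi) := measurableSet_Ioo.prod measurableSet_Ioo
  have hsub : Ioo σ R ×ˢ Ioo (-Real.pi) Real.pi ⊆ polarCoord.target := by
    rw [polarCoord_target]
    exact prod_mono (fun x hx => hσ.trans hx.1) le_rfl
  have e1 : ∀ p ∈ polarCoord.target, ENNReal.ofReal p.1 •
      ({z : ℂ | σ < ‖z‖ ∧ ‖z‖ < R}.indicator (fun z => ENNReal.ofReal (G z)) (Complex.polarCoord.symm p)) =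
      (Ioo σ R ×ˢ Ioo (-Real.pi) Real.pi).indicator (fun p : ℝ × ℝ => ENNReal.ofReal p.1 * ENNReal.ofReal (G (p.1 * Complex.exp (p.2 * I)))) p := by
    intro p hp
    rw [polarCoord_target] at hp
    have hp1 : 0 < p.1 := hp.1
    have hn : ‖Complex.polarCoord.symm p‖ = p.1 := by
      simp [abs_of_pos hp1]
    have hE : Complex.polarCoord.symm p = p.1 * Complex.exp (p.2 * I) := by
      rw [Complex.polarCoord_symm_apply, Complex.exp_mul_I]; simp
    by_cases h : σ < p.1 ∧ p.1 < R
    · rw [indicator_of_mem (by rw [mem_ofPred_eq, hn]; exact h), indicator_of_mem (show p ∈ _ ×ˢ _ from ⟨h, hp.2⟩), hE, smul_eq_mul]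
    · rw [indicator_of_notMem (by rw [mem_ofPred_eq, hn]; exact h), indicator_of_notMem (fun h' => h h'.1), smul_zero]
  rw [setLIntegral_congr_fun polarCoord.open_target.measurableSet e1, setLIntegral_indicator hS, inter_eq_self_of_subset_left hsub,
    Measure.volume_eq_prod, ← Measure.prod_restrict, lintegral_prod]
  have hm1 : AEMeasurable (fun p : ℝ × ℝ => ENNReal.ofReal p.1)
      ((volume.restrict (Ioo σ R)).prod (volume.restrict (Ioo (-Real.pi) Real.pi))) :=
    (ENNReal.measurable_ofReal.comp measurable_fst).aemeasurable
  refine hm1.mul ?_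
  rw [Measure.prod_restrict]
  refine ENNReal.measurable_ofReal.comp_aemeasurable ?_
  refine ContinuousOn.aemeasurable ?_ hS
  refine hG.comp (by fun_prop) fun p hp => ?_
  have hp1 : 0 < p.1 := hσ.trans hp.1.1
  simp only [mem_ofPred_eq]
  rw [PS.norm_circle hp1.le]; exact hp.1


/-- The real Jacobian of multiplication by `a`. -/
theorem det_mul_complex (a : ℂ) : (ContinuousLinearMap.mul ℝ ℂ a).det = ‖a‖ ^ 2 := by
  have := Algebra.norm_complex_apply a
  rw [Algebra.norm_apply, Complex.normSq_eq_norm_sq] at this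
  exact this

/-- Change of variables for an injective holomorphic map. -/
theorem lintegral_image {f f' : ℂ → ℂ} {A : Set ℂ} (hA : MeasurableSet A)
    (hf : ∀ z ∈ A, HasDerivAt f (f' z) z) (hinj : InjOn f A) (g : ℂ → ℝ≥0∞) :
    ∫⁻ w in f '' A, g w = ∫⁻ z in A, ENNReal.ofReal (‖f' z‖ ^ 2) * g (f z) := by
  rw [lintegral_image_eq_lintegral_abs_det_fderiv_mul volume hA (f' := fun z => ContinuousLinearMap.mul ℝ ℂ (f' z)) ?_ hinj]
  · simp only [det_mul_complex]
    simp
  · intro z hz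
    have h := ((hf z hz).hasFDerivAt.restrictScalars ℝ).hasFDerivWithinAt (s := A)
    convert h using 1
    ext x; simp [mul_comm]

/-- Lower bound for the area, with respect to `|dw| ^ 2 / |w| ^ 2`, of the image of an annulus under a map `f` with
`|f' / f| = |1 + z l'| / |z|`, as is the case for `f z = z exp (l z)` and for its reciprocal. -/
theorem log_area_lower {l f f' : ℂ → ℂ} {c : ℕ → ℂ} (hl : PS c l) {σ R : ℝ} (hσ : 0 < σ) (hσR : σ < R) (hR : R < 1)
    (hf : ∀ z : ℂ, σ < ‖z‖ ∧ ‖z‖ < R → HasDerivAt f (f' z) z)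
    (hinj : InjOn f {z : ℂ | σ < ‖z‖ ∧ ‖z‖ < R})
    (hff : ∀ z : ℂ, σ < ‖z‖ ∧ ‖z‖ < R → ‖f' z‖ ^ 2 * (1 / ‖f z‖ ^ 2) = ‖1 + z * deriv l z‖ ^ 2 / ‖z‖ ^ 2) (N : ℕ) :
    ENNReal.ofReal (2 * Real.pi * Real.log (R / σ) +
      Real.pi * ∑ n ∈ Finset.range N, (n + 1) * ‖c (n + 1)‖ ^ 2 * (R ^ (2 * n + 2) - σ ^ (2 * n + 2))) ≤
      ∫⁻ w in f '' {z : ℂ | σ < ‖z‖ ∧ ‖z‖ < R}, ENNReal.ofReal (1 / ‖w‖ ^ 2) := by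
  have hA : MeasurableSet {z : ℂ | σ < ‖z‖ ∧ ‖z‖ < R} :=
    ((isOpen_lt continuous_const continuous_norm).inter (isOpen_lt continuous_norm continuous_const)).measurableSet
  have hu : PS (fun n => if n = 0 then 1 else n * c n) (fun z => 1 + z * deriv l z) := by
    have h1 := hl.deriv.mul_id
    intro z hz
    have h2 := h1 z hz
    have h3 := hasSum_single (f := fun n => (if n = 0 then (1 : ℂ) else 0) * z ^ n) 0 (fun n hn => by simp [hn])
    simp at h3
    have := h3.add h2
    convert this using 1
    · funext n
      rcases n with _ | n <;> simp
  rw [lintegral_image hA hf hinj]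
  have e1 : ∀ z ∈ {z : ℂ | σ < ‖z‖ ∧ ‖z‖ < R}, ENNReal.ofReal (‖f' z‖ ^ 2) * ENNReal.ofReal (1 / ‖f z‖ ^ 2) =
      ENNReal.ofReal (‖1 + z * deriv l z‖ ^ 2 / ‖z‖ ^ 2) := fun z hz => by
    rw [← ENNReal.ofReal_mul (by positivity), hff z hz]
  rw [setLIntegral_congr_fun hA e1]
  have hcu : ContinuousOn (fun z => 1 + z * deriv l z) (ball 0 1) := hu.differentiableOn.continuousOn
  rw [lintegral_annulus hσ]
  swap
  · refine ContinuousOn.div ((hcu.mono fun z hz => ?_).norm.pow 2) (by fun_prop) fun z hz => ?_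
    · simpa using hz.2.trans hR
    · have : 0 < ‖z‖ := hσ.trans hz.1
      positivity
  -- the integral over each circle is bounded below by Bessel's inequality
  have h2 : ∀ ρ ∈ Ioo σ R, ENNReal.ofReal (2 * Real.pi * (ρ⁻¹ + ∑ n ∈ Finset.range N, (n + 1) ^ 2 * ‖c (n + 1)‖ ^ 2 * ρ ^ (2 * n + 1))) ≤
      ∫⁻ θ in Ioo (-Real.pi) Real.pi, ENNReal.ofReal ρ * ENNReal.ofReal
        (‖1 + (ρ * Complex.exp (θ * I)) * deriv l (ρ * Complex.exp (θ * I))‖ ^ 2 / ‖(ρ * Complex.exp (θ * I))‖ ^ 2) := by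
    intro ρ hρ
    have hρ0 : 0 < ρ := hσ.trans hρ.1
    have hcirc := continuous_circle hu hρ0.le (hρ.2.trans hR)
    have hb := hu.bessel hρ0.le (hρ.2.trans hR) (N + 1)
    have e2 : ∀ θ : ℝ, ENNReal.ofReal ρ * ENNReal.ofReal
        (‖1 + (ρ * Complex.exp (θ * I)) * deriv l (ρ * Complex.exp (θ * I))‖ ^ 2 / ‖(ρ * Complex.exp (θ * I))‖ ^ 2) =
        ENNReal.ofReal (ρ⁻¹ * ‖1 + (ρ * Complex.exp (θ * I)) * deriv l (ρ * Complex.exp (θ * I))‖ ^ 2) := fun θ => by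
      rw [← ENNReal.ofReal_mul hρ0.le, PS.norm_circle hρ0.le]
      congr 1; field_simp
    simp_rw [e2]
    rw [← ofReal_integral_eq_lintegral_ofReal]
    · refine ENNReal.ofReal_le_ofReal ?_
      rw [integral_const_mul, ← integral_Ioc_eq_integral_Ioo, ← intervalIntegral.integral_of_le (by linarith [Real.pi_pos])]
      refine le_trans (le_of_eq ?_) (mul_le_mul_of_nonneg_left hb (by positivity))
      have e3 : ∑ n ∈ Finset.range N, ((n : ℝ) + 1) ^ 2 * ‖c (n + 1)‖ ^ 2 * ρ ^ (2 * n + 1) =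
          ρ⁻¹ * ∑ n ∈ Finset.range N, ‖(((n + 1 : ℕ) : ℂ)) * c (n + 1)‖ ^ 2 * ρ ^ (2 * (n + 1)) := by
        rw [Finset.mul_sum]
        refine Finset.sum_congr rfl fun n _ => ?_
        rw [norm_mul, Complex.norm_natCast]
        push_cast
        field_simp
        ring
      rw [Finset.sum_range_succ', e3]
      simp
      ring
    · refine (Continuous.integrableOn_Icc ?_).mono_set Ioo_subset_Icc_self
      exact continuous_const.mul (hcirc.norm.pow 2)
    · exact Eventually.of_forall fun θ => by positivity
  refine le_trans ?_ (setLIntegral_mono' measurableSet_Ioo h2)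
  have hd : ∀ ρ : ℝ, 0 < ρ → HasDerivAt (fun ρ : ℝ => 2 * Real.pi * Real.log ρ +
      Real.pi * ∑ n ∈ Finset.range N, (n + 1) * ‖c (n + 1)‖ ^ 2 * ρ ^ (2 * n + 2))
      (2 * Real.pi * (ρ⁻¹ + ∑ n ∈ Finset.range N, (n + 1) ^ 2 * ‖c (n + 1)‖ ^ 2 * ρ ^ (2 * n + 1))) ρ := by
    intro ρ hρ
    have h1 := (Real.hasDerivAt_log hρ.ne').const_mul (2 * Real.pi)
    have h2 : HasDerivAt (fun ρ : ℝ => ∑ n ∈ Finset.range N, ((n : ℝ) + 1) * ‖c (n + 1)‖ ^ 2 * ρ ^ (2 * n + 2))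
        (∑ n ∈ Finset.range N, ((n : ℝ) + 1) * ‖c (n + 1)‖ ^ 2 * (((2 * n + 2 : ℕ) : ℝ) * ρ ^ (2 * n + 1))) ρ :=
      HasDerivAt.fun_sum fun n _ => (hasDerivAt_pow (2 * n + 2) ρ).const_mul _
    refine (h1.add (h2.const_mul Real.pi)).congr_deriv ?_
    rw [mul_add, Finset.mul_sum, Finset.mul_sum]
    congr 1
    refine Finset.sum_congr rfl fun n _ => ?_
    push_cast; ring
  have hcont : ContinuousOn (fun ρ : ℝ => 2 * Real.pi * (ρ⁻¹ + ∑ n ∈ Finset.range N, ((n : ℝ) + 1) ^ 2 * ‖c (n + 1)‖ ^ 2 * ρ ^ (2 * n + 1))) (Icc σ R) := by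
    refine continuousOn_const.mul (ContinuousOn.add (continuousOn_inv₀.mono fun x hx => ?_) (by fun_prop))
    exact (hσ.trans_le hx.1).ne'
  have hftc := intervalIntegral.integral_eq_sub_of_hasDerivAt (a := σ) (b := R)
    (fun x hx => hd x (hσ.trans_le (by rw [uIcc_of_le hσR.le] at hx; exact hx.1)))
    (by rw [← uIcc_of_le hσR.le] at hcont; exact hcont.intervalIntegrable)
  rw [← ofReal_integral_eq_lintegral_ofReal]
  · refine ENNReal.ofReal_le_ofReal (le_of_eq ?_)
    rw [← integral_Ioc_eq_integral_Ioo, ← intervalIntegral.integral_of_le hσR.le, hftc,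
      Real.log_div (by linarith) hσ.ne']
    simp only [mul_sub, Finset.sum_sub_distrib]
    ring
  · exact hcont.integrableOn_Icc.mono_set Ioo_subset_Icc_self
  · refine (ae_restrict_mem measurableSet_Ioo).mono fun x hx => ?_
    have : 0 < x := hσ.trans hx.1
    have := Real.pi_pos
    positivity

/-! ### An area theorem for two univalent functions -/

/-- The logarithmic area of an annulus. -/
theorem log_area_annulus {α β : ℝ} (hα : 0 < α) (hαβ : α < β) :
    ∫⁻ w in {w : ℂ | α < ‖w‖ ∧ ‖w‖ < β}, ENNReal.ofReal (1 / ‖w‖ ^ 2) =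
      ENNReal.ofReal (2 * Real.pi * Real.log (β / α)) := by
  rw [lintegral_annulus hα]
  swap
  · refine ContinuousOn.div (by fun_prop) (by fun_prop) fun z hz => ?_
    have : 0 < ‖z‖ := hα.trans hz.1
    positivity
  have e1 : ∀ ρ ∈ Ioo α β, ∫⁻ θ in Ioo (-Real.pi) Real.pi,
      ENNReal.ofReal ρ * ENNReal.ofReal (1 / ‖(ρ : ℂ) * Complex.exp (θ * I)‖ ^ 2) =
      ENNReal.ofReal (2 * Real.pi * ρ⁻¹) := by
    intro ρ hρ
    have hρ0 : 0 < ρ := hα.trans hρ.1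
    simp only [PS.norm_circle hρ0.le]
    rw [setLIntegral_const, Real.volume_Ioo, ← ENNReal.ofReal_mul hρ0.le, ← ENNReal.ofReal_mul (by positivity)]
    congr 1
    field_simp
    ring
  rw [setLIntegral_congr_fun measurableSet_Ioo e1, ← ofReal_integral_eq_lintegral_ofReal]
  · rw [← integral_Ioc_eq_integral_Ioo, ← intervalIntegral.integral_of_le hαβ.le,
      intervalIntegral.integral_const_mul, integral_inv_of_pos hα (hα.trans hαβ)]
  · refine (ContinuousOn.integrableOn_Icc (continuousOn_const.mul (continuousOn_inv₀.mono fun x hx => ?_))).mono_set Ioo_subset_Icc_self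
    exact (hα.trans_le hx.1).ne'
  · refine (ae_restrict_mem measurableSet_Ioo).mono fun x hx => ?_
    have : 0 < x := hα.trans hx.1
    have := Real.pi_pos
    positivity

/-- The map `z exp (l z)` sends the annulus `σ < |z| < R`, for small `σ`, outside the disk of radius about
`σ |exp (l 0)|` and inside a disk independent of `σ`. -/
theorem mul_exp_bounds {l : ℂ → ℂ} {c : ℕ → ℂ} (hl : PS c l) {R δ : ℝ} (hR0 : 0 < R) (hR : R < 1) (hδ : 0 < δ) :
    (∀ᶠ σ : ℝ in 𝓝[>] 0, ∀ z : ℂ, σ < ‖z‖ ∧ ‖z‖ < R → σ * Real.exp ((c 0).re - δ) < ‖z * Complex.exp (l z)‖) ∧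
    ∃ M : ℝ, 0 < M ∧ ∀ z : ℂ, ‖z‖ < R → ‖z * Complex.exp (l z)‖ < M := by
  have hcl : ContinuousOn l (ball 0 1) := hl.differentiableOn.continuousOn
  have hK : IsCompact (closedBall (0 : ℂ) R) := isCompact_closedBall _ _
  have hKs : closedBall (0 : ℂ) R ⊆ ball 0 1 := closedBall_subset_ball hR
  obtain ⟨B, hB⟩ := hK.exists_bound_of_continuousOn (hcl.mono hKs)
  have hB' : ∀ z : ℂ, ‖z‖ < R → |(l z).re| ≤ B := fun z hz =>
    (Complex.abs_re_le_norm _).trans (hB z (by simpa using hz.le))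
  refine ⟨?_, ⟨Real.exp B, Real.exp_pos _, fun z hz => ?_⟩⟩
  · have hc0 : ContinuousAt l 0 := hcl.continuousAt (ball_mem_nhds _ one_pos)
    have h1 : ∀ᶠ z in 𝓝 (0 : ℂ), (c 0).re - δ < (l z).re := by
      have : ContinuousAt (fun z => (l z).re) 0 := Complex.continuous_re.continuousAt.comp hc0
      refine this.eventually (lt_mem_nhds ?_)
      show (c 0).re - δ < (l 0).re
      rw [hl.zero]; linarith
    obtain ⟨η, hη, hη'⟩ := Metric.eventually_nhds_iff.1 h1
    have hpos : 0 < η * Real.exp (-B) / Real.exp ((c 0).re - δ) := by positivity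
    filter_upwards [Ioo_mem_nhdsGT hpos] with σ hσ z hz
    rw [norm_mul, Complex.norm_exp]
    have hσ0 : 0 < σ := hσ.1
    by_cases hzη : ‖z‖ < η
    · have := hη' (y := z) (by simpa using hzη)
      exact mul_lt_mul'' hz.1 (Real.exp_lt_exp.2 this) hσ0.le (Real.exp_pos _).le
    · have h2 : σ * Real.exp ((c 0).re - δ) < η * Real.exp (-B) := by
        rw [← lt_div_iff₀ (Real.exp_pos _)]; exact hσ.2
      refine h2.trans_le (mul_le_mul (not_lt.1 hzη) (Real.exp_le_exp.2 ?_) (Real.exp_pos _).le (norm_nonneg _))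
      linarith [(abs_le.1 (hB' z hz.2)).1]
  · rw [norm_mul, Complex.norm_exp]
    have : Real.exp (l z).re ≤ Real.exp B := Real.exp_le_exp.2 (abs_le.1 (hB' z hz)).2
    nlinarith [Real.exp_pos B, norm_nonneg z]

theorem measurable_image' {f f' : ℂ → ℂ} {A : Set ℂ} (hA : MeasurableSet A)
    (hf : ∀ z ∈ A, HasDerivAt f (f' z) z) (hinj : InjOn f A) : MeasurableSet (f '' A) :=
  measurable_image_of_fderivWithin hA
    (fun z hz => ((hf z hz).hasFDerivAt.restrictScalars ℝ).hasFDerivWithinAt) hinj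

/-- Area theorem for a pair of univalent functions `X`, `W` vanishing at the origin such that `X`
and `1 / W` have disjoint images: the logarithmic areas of the images of `σ < |z| < R` under the two maps add up to
at most that of the annulus `σ |X' 0| < |w| < 1 / (σ |W' 0|)`, up to an error vanishing with `σ`. -/
theorem log_area {X W l m : ℂ → ℂ} {c d : ℕ → ℂ} (hl : PS c l) (hm : PS d m)
    (hX : ∀ z ∈ ball (0 : ℂ) 1, X z = z * Complex.exp (l z)) (hW : ∀ z ∈ ball (0 : ℂ) 1, W z = z * Complex.exp (m z))
    (hXi : InjOn X (ball 0 1)) (hWi : InjOn W (ball 0 1))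
    (hXW : ∀ z ∈ ball (0 : ℂ) 1, ∀ ζ ∈ ball (0 : ℂ) 1, X z * W ζ ≠ 1) (N : ℕ) :
    ∑ n ∈ Finset.range N, ((n : ℝ) + 1) * ‖c (n + 1)‖ ^ 2 + ∑ n ∈ Finset.range N, ((n : ℝ) + 1) * ‖d (n + 1)‖ ^ 2 ≤
      -2 * ((c 0).re + (d 0).re) := by
  set S : (ℕ → ℂ) → ℝ → ℝ → ℝ := fun c R σ => ∑ n ∈ Finset.range N, (n + 1) * ‖c (n + 1)‖ ^ 2 * (R ^ (2 * n + 2) - σ ^ (2 * n + 2)) with hS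
  have hder : ∀ {l : ℂ → ℂ} {c : ℕ → ℂ} {X : ℂ → ℂ}, PS c l → (∀ z ∈ ball (0 : ℂ) 1, X z = z * Complex.exp (l z)) →
      ∀ z ∈ ball (0 : ℂ) 1, HasDerivAt X (Complex.exp (l z) * (1 + z * deriv l z)) z := by
    intro l c X hl hX z hz
    have h1 : HasDerivAt l (deriv l z) z :=
      (hl.differentiableOn.differentiableAt (isOpen_ball.mem_nhds hz)).hasDerivAt
    have h2 := (hasDerivAt_id z).mul h1.cexp
    refine (h2.congr_deriv ?_).congr_of_eventuallyEq ?_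
    · simp; ring
    · filter_upwards [isOpen_ball.mem_nhds hz] with y hy
      simpa using hX y hy
  have key : ∀ R δ : ℝ, 0 < R → R < 1 → 0 < δ → ∀ᶠ σ : ℝ in 𝓝[>] 0,
      4 * Real.log R + S c R σ + S d R σ ≤ 2 * (- (c 0).re - (d 0).re + 2 * δ) := by
    intro R δ hR0 hR hδ
    obtain ⟨hX1, M, hM0, hM⟩ := mul_exp_bounds hl hR0 hR hδ
    obtain ⟨hW1, M', hM0', hM'⟩ := mul_exp_bounds hm hR0 hR hδ
    have hs1 : 0 < Real.exp (-(d 0).re + δ) / M := by positivity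
    have hs2 : 0 < Real.exp (-(c 0).re + δ) / M' := by positivity
    filter_upwards [hX1, hW1, Ioo_mem_nhdsGT hR0, Ioo_mem_nhdsGT hs1, Ioo_mem_nhdsGT hs2, Ioo_mem_nhdsGT one_pos] with σ h1 h2 h3 h4 h5 h6
    have hσ : 0 < σ := h3.1
    set A : Set ℂ := {z : ℂ | σ < ‖z‖ ∧ ‖z‖ < R} with hAdef
    have hA : MeasurableSet A :=
      ((isOpen_lt continuous_const continuous_norm).inter (isOpen_lt continuous_norm continuous_const)).measurableSet
    have hAb : ∀ z ∈ A, z ∈ ball (0 : ℂ) 1 := fun z hz => by simpa using hz.2.trans hR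
    have hA0 : ∀ z ∈ A, z ≠ 0 := fun z hz h => by
      have := hz.1; rw [h, norm_zero] at this; linarith
    have hW0 : ∀ z ∈ A, W z ≠ 0 := fun z hz => by
      rw [hW z (hAb z hz)]; exact mul_ne_zero (hA0 z hz) (Complex.exp_ne_zero _)
    set α := σ * Real.exp ((c 0).re - δ) with hα
    set β := Real.exp (-(d 0).re + δ) / σ with hβ
    have hα0 : 0 < α := by positivity
    have hXd : ∀ z ∈ A, HasDerivAt X (Complex.exp (l z) * (1 + z * deriv l z)) z := fun z hz => hder hl hX z (hAb z hz)
    have hWd : ∀ z ∈ A, HasDerivAt (fun z => (W z)⁻¹) (-(Complex.exp (m z) * (1 + z * deriv m z)) / W z ^ 2) z :=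
      fun z hz => (hder hm hW z (hAb z hz)).fun_inv (hW0 z hz)
    have hXiA : InjOn X A := hXi.mono hAb
    have hWiA : InjOn (fun z => (W z)⁻¹) A := fun x hx y hy hxy => hWi (hAb x hx) (hAb y hy) (inv_injective hxy)
    have a1 := log_area_lower hl hσ h3.2 hR hXd hXiA (fun z hz => by
      rw [hX z (hAb z hz), norm_mul, norm_mul]
      have : ‖z‖ ≠ 0 := by simpa using hA0 z hz
      have : ‖Complex.exp (l z)‖ ≠ 0 := by simp
      field_simp) N
    have a2 := log_area_lower hm hσ h3.2 hR hWd hWiA (fun z hz => by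
      rw [hW z (hAb z hz)]
      simp only [norm_div, norm_mul, norm_neg, norm_pow, norm_inv]
      have : ‖z‖ ≠ 0 := by simpa using hA0 z hz
      have : ‖Complex.exp (m z)‖ ≠ 0 := by simp
      field_simp) N
    have hdisj : Disjoint (X '' A) ((fun z => (W z)⁻¹) '' A) := by
      rw [Set.disjoint_left]
      rintro _ ⟨z, hz, rfl⟩ ⟨ζ, hζ, h⟩
      refine hXW z (hAb z hz) ζ (hAb ζ hζ) ?_
      rw [← h]; exact inv_mul_cancel₀ (hW0 ζ hζ)
    have hsub : X '' A ∪ (fun z => (W z)⁻¹) '' A ⊆ {w : ℂ | α < ‖w‖ ∧ ‖w‖ < β} := by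
      rintro _ (⟨z, hz, rfl⟩ | ⟨z, hz, rfl⟩)
      · rw [mem_ofPred_eq, hX z (hAb z hz)]
        refine ⟨h1 z hz, (hM z hz.2).trans ?_⟩
        rw [hβ, lt_div_iff₀ hσ, mul_comm, ← lt_div_iff₀ hM0]; exact h4.2
      · have hw := h2 z hz
        have hw' := hM' z hz.2
        rw [← hW z (hAb z hz)] at hw hw'
        have hpos : 0 < ‖W z‖ := by simpa using hW0 z hz
        rw [mem_ofPred_eq, norm_inv]
        constructor
        · rw [lt_inv_comm₀ hα0 hpos]
          refine hw'.trans ?_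
          rw [hα, mul_inv, ← Real.exp_neg, inv_mul_eq_div, lt_div_iff₀ hσ, mul_comm, ← lt_div_iff₀ hM0']
          convert h5.2 using 3; ring
        · rw [inv_lt_comm₀ hpos (by positivity)]
          refine lt_of_eq_of_lt ?_ hw
          rw [hβ, inv_div, div_eq_mul_inv, ← Real.exp_neg]
          congr 2; ring
    have hαβ : α < β := by
      have hz0 : ((( σ + R) / 2 : ℝ) : ℂ) ∈ A := by
        rw [hAdef, mem_ofPred_eq, Complex.norm_real, Real.norm_of_nonneg (by linarith)]
        constructor <;> linarith [h3.2]
      have := hsub (Or.inl (mem_image_of_mem X hz0))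
      exact this.1.trans this.2
    have a3 := lintegral_mono_set (μ := volume) (f := fun w => ENNReal.ofReal (1 / ‖w‖ ^ 2)) hsub
    rw [lintegral_union (measurable_image' hA hWd hWiA) hdisj, log_area_annulus hα0 hαβ] at a3
    have a4 := (add_le_add a1 a2).trans a3
    have hlogpos : 0 ≤ 2 * Real.pi * Real.log (R / σ) := by
      have : 0 ≤ Real.log (R / σ) := Real.log_nonneg ((one_le_div hσ).2 h3.2.le)
      have := Real.pi_pos
      positivity
    have hSpos : ∀ c, 0 ≤ S c R σ := fun c => Finset.sum_nonneg fun n _ => by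
      have : σ ^ (2 * n + 2) ≤ R ^ (2 * n + 2) := by gcongr; exact h3.2.le
      have : 0 ≤ R ^ (2 * n + 2) - σ ^ (2 * n + 2) := by linarith
      positivity
    have h1' := mul_nonneg Real.pi_pos.le (hSpos c)
    have h2' := mul_nonneg Real.pi_pos.le (hSpos d)
    rw [← ENNReal.ofReal_add (by linarith) (by linarith), ENNReal.ofReal_le_ofReal_iff (by
      have : 0 ≤ Real.log (β / α) := Real.log_nonneg ((one_le_div hα0).2 hαβ.le)
      have := Real.pi_pos
      positivity)] at a4
    have e1 : Real.log (β / α) = -2 * Real.log σ - (c 0).re - (d 0).re + 2 * δ := by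
      rw [Real.log_div (by positivity) hα0.ne', hβ, hα, Real.log_div (by positivity) hσ.ne', Real.log_mul hσ.ne' (by positivity),
        Real.log_exp, Real.log_exp]
      ring
    rw [e1, Real.log_div hR0.ne' hσ.ne'] at a4
    have a5 : Real.pi * (4 * Real.log R + S c R σ + S d R σ) ≤ Real.pi * (2 * (- (c 0).re - (d 0).re + 2 * δ)) := by
      simp only [hS]; linarith
    exact le_of_mul_le_mul_left a5 Real.pi_pos
  -- let `σ → 0`
  have key2 : ∀ R δ : ℝ, 0 < R → R < 1 → 0 < δ →
      4 * Real.log R + S c R 0 + S d R 0 ≤ 2 * (- (c 0).re - (d 0).re + 2 * δ) := by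
    intro R δ hR0 hR hδ
    have hcont : Continuous fun σ => 4 * Real.log R + S c R σ + S d R σ := by
      simp only [hS]; fun_prop
    exact le_of_tendsto ((hcont.tendsto 0).mono_left nhdsWithin_le_nhds) (key R δ hR0 hR hδ)
  -- let `δ → 0`
  have key3 : ∀ R : ℝ, 0 < R → R < 1 → 4 * Real.log R + S c R 0 + S d R 0 ≤ 2 * (- (c 0).re - (d 0).re) := by
    intro R hR0 hR
    refine le_of_forall_pos_le_add fun ε hε => ?_
    have := key2 R (ε / 4) hR0 hR (by positivity)
    linarith
  -- let `R → 1`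
  have hcont : ContinuousAt (fun R => 4 * Real.log R + S c R 0 + S d R 0) 1 := by
    have h1 : ContinuousAt (fun R => 4 * Real.log R) 1 := (Real.continuousAt_log one_ne_zero).const_mul 4
    have h2 : Continuous fun R => S c R 0 := by simp only [hS]; fun_prop
    have h3 : Continuous fun R => S d R 0 := by simp only [hS]; fun_prop
    exact (h1.add h2.continuousAt).add h3.continuousAt
  have hlim := hcont.tendsto.mono_left (nhdsWithin_le_nhds (s := Iio 1))
  have := le_of_tendsto hlim (by
    filter_upwards [Ioo_mem_nhdsLT (show (0 : ℝ) < 1 from one_pos)] with R hR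
    exact key3 R hR.1 hR.2)
  simp [hS] at this
  linarith

/-! ### Two-point distortion -/

theorem hasDerivAt_mul_exp {l X : ℂ → ℂ} (hl : DifferentiableOn ℂ l (ball 0 1))
    (hX : ∀ z ∈ ball (0 : ℂ) 1, X z = z * Complex.exp (l z)) {z : ℂ} (hz : z ∈ ball (0 : ℂ) 1) :
    HasDerivAt X (Complex.exp (l z) * (1 + z * deriv l z)) z := by
  have h1 : HasDerivAt l (deriv l z) z := (hl.differentiableAt (isOpen_ball.mem_nhds hz)).hasDerivAt
  have h2 := (hasDerivAt_id z).mul h1.cexp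
  refine (h2.congr_deriv ?_).congr_of_eventuallyEq ?_
  · simp; ring
  · filter_upwards [isOpen_ball.mem_nhds hz] with y hy
    simpa using hX y hy

/-- The constant term of the area theorem `log_area`. -/
theorem norm_deriv_mul_le {X W : ℂ → ℂ} (hX : DifferentiableOn ℂ X (ball 0 1)) (hW : DifferentiableOn ℂ W (ball 0 1))
    (hXi : InjOn X (ball 0 1)) (hWi : InjOn W (ball 0 1)) (hX0 : X 0 = 0) (hW0 : W 0 = 0)
    (hXW : ∀ z ∈ ball (0 : ℂ) 1, ∀ ζ ∈ ball (0 : ℂ) 1, X z * W ζ ≠ 1) :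
    ‖deriv X 0‖ * ‖deriv W 0‖ ≤ 1 := by
  obtain ⟨l, hl, hXl⟩ := exists_eq_mul_exp hX hXi hX0
  obtain ⟨m, hm, hWm⟩ := exists_eq_mul_exp hW hWi hW0
  obtain ⟨c, hc⟩ := exists_PS hl
  obtain ⟨d, hd⟩ := exists_PS hm
  have h := log_area hc hd hXl hWm hXi hWi hXW 0
  have h00 : (0 : ℂ) ∈ ball (0 : ℂ) 1 := by simp
  rw [(hasDerivAt_mul_exp hl hXl h00).deriv, (hasDerivAt_mul_exp hm hWm h00).deriv, hc.zero, hd.zero]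
  simp only [zero_mul, add_zero, mul_one, Complex.norm_exp, ← Real.exp_add]
  simp only [Finset.range_zero, Finset.sum_empty] at h
  rw [Real.exp_le_one_iff]; linarith

/-- The disk automorphism moving `0` to `s`. -/
noncomputable def mob (s z : ℂ) : ℂ := (z + s) / (1 + starRingEnd ℂ s * z)

theorem mob_den_ne {s z : ℂ} (hs : ‖s‖ < 1) (hz : ‖z‖ < 1) : 1 + starRingEnd ℂ s * z ≠ 0 := by
  intro h
  have h1 : starRingEnd ℂ s * z = -1 := by linear_combination h
  have h2 : ‖s‖ * ‖z‖ = 1 := by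
    have := congrArg norm h1
    simpa using this
  nlinarith [norm_nonneg s, norm_nonneg z]

theorem norm_mob_lt {s z : ℂ} (hs : ‖s‖ < 1) (hz : ‖z‖ < 1) : ‖mob s z‖ < 1 := by
  rw [mob, norm_div, div_lt_one (by simpa using mob_den_ne hs hz)]
  refine lt_of_pow_lt_pow_left₀ 2 (norm_nonneg _) ?_
  rw [← Complex.normSq_eq_norm_sq, ← Complex.normSq_eq_norm_sq]
  have h1 : Complex.normSq s < 1 := by rw [Complex.normSq_eq_norm_sq]; nlinarith [norm_nonneg s]
  have h2 : Complex.normSq z < 1 := by rw [Complex.normSq_eq_norm_sq]; nlinarith [norm_nonneg z]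
  simp only [Complex.normSq_apply] at *
  simp
  nlinarith [mul_pos (sub_pos.2 h1) (sub_pos.2 h2)]

theorem mob_injOn {s : ℂ} (hs : ‖s‖ < 1) : InjOn (mob s) (ball 0 1) := by
  intro z hz w hw h
  have hz' := mob_den_ne hs (by simpa using hz : ‖z‖ < 1)
  have hw' := mob_den_ne hs (by simpa using hw : ‖w‖ < 1)
  rw [mob, mob, div_eq_div_iff hz' hw'] at h
  have h3 : (1 - starRingEnd ℂ s * s) * (z - w) = 0 := by linear_combination h
  rcases mul_eq_zero.1 h3 with h4 | h4
  · exfalso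
    have h5 : starRingEnd ℂ s * s = 1 := by linear_combination -h4
    have h6 : ‖s‖ * ‖s‖ = 1 := by simpa using congrArg norm h5
    nlinarith [norm_nonneg s]
  · exact sub_eq_zero.1 h4

theorem hasDerivAt_mob {s z : ℂ} (hs : ‖s‖ < 1) (hz : ‖z‖ < 1) :
    HasDerivAt (mob s) ((1 - starRingEnd ℂ s * s) / (1 + starRingEnd ℂ s * z) ^ 2) z := by
  have h1 := ((hasDerivAt_id z).add_const s).div (((hasDerivAt_id z).const_mul (starRingEnd ℂ s)).const_add 1) (mob_den_ne hs hz)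
  refine h1.congr_deriv ?_
  simp only [id]
  congr 1; ring

/-- Two-point distortion for a univalent function no two of whose values have product `1`. With `σ`, `τ` disk
automorphisms moving `0` to `s` and `t`, the maps `(B ∘ σ - B s) / (1 - B t * B ∘ σ)` and
`(B ∘ τ - B t) / (1 - B s * B ∘ τ)` vanish at `0` and no product of their values is `1`. -/
theorem two_point {B : ℂ → ℂ} (hB : DifferentiableOn ℂ B (ball 0 1)) (hBi : InjOn B (ball 0 1))
    (hBB : ∀ z ∈ ball (0 : ℂ) 1, ∀ ζ ∈ ball (0 : ℂ) 1, B z * B ζ ≠ 1) {s t : ℂ} (hs : ‖s‖ < 1) (ht : ‖t‖ < 1) :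
    ‖deriv B s‖ * ‖deriv B t‖ * ((1 - ‖s‖ ^ 2) * (1 - ‖t‖ ^ 2)) ≤ ‖1 - B s * B t‖ ^ 2 := by
  have main : ∀ s t : ℂ, ‖s‖ < 1 → ‖t‖ < 1 → ∃ X : ℂ → ℂ,
      (∀ z ∈ ball (0 : ℂ) 1, X z = (B (mob s z) - B s) / (1 - B t * B (mob s z))) ∧
      DifferentiableOn ℂ X (ball 0 1) ∧ InjOn X (ball 0 1) ∧ X 0 = 0 ∧
      ‖deriv X 0‖ = ‖deriv B s‖ * (1 - ‖s‖ ^ 2) / ‖1 - B s * B t‖ := by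
    intro s t hs ht
    have hs' : s ∈ ball (0 : ℂ) 1 := by simpa using hs
    have ht' : t ∈ ball (0 : ℂ) 1 := by simpa using ht
    have hm : ∀ z ∈ ball (0 : ℂ) 1, mob s z ∈ ball (0 : ℂ) 1 := fun z hz => by
      simpa using norm_mob_lt hs (by simpa using hz : ‖z‖ < 1)
    have hne : ∀ z ∈ ball (0 : ℂ) 1, 1 - B t * B (mob s z) ≠ 0 := fun z hz =>
      sub_ne_zero.2 (hBB t ht' _ (hm z hz)).symm
    have hst : 1 - B s * B t ≠ 0 := sub_ne_zero.2 (hBB s hs' t ht').symm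
    have hd : ∀ z ∈ ball (0 : ℂ) 1, HasDerivAt (fun z => B (mob s z))
        (deriv B (mob s z) * ((1 - starRingEnd ℂ s * s) / (1 + starRingEnd ℂ s * z) ^ 2)) z := fun z hz =>
      ((hB.differentiableAt (isOpen_ball.mem_nhds (hm z hz))).hasDerivAt).comp z (hasDerivAt_mob hs (by simpa using hz))
    have hd2 := fun z hz => ((hd z hz).sub_const (B s)).div (((hd z hz).const_mul (B t)).const_sub 1) (hne z hz)
    have h00 : (0 : ℂ) ∈ ball (0 : ℂ) 1 := by simp
    have hm0 : mob s 0 = s := by simp [mob]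
    refine ⟨fun z => (B (mob s z) - B s) / (1 - B t * B (mob s z)), fun z _ => rfl,
      fun z hz => (hd2 z hz).differentiableAt.differentiableWithinAt, ?_, by simp [hm0], ?_⟩
    · intro z hz w hw h
      simp only at h
      rw [div_eq_div_iff (hne z hz) (hne w hw)] at h
      have h3 : (1 - B s * B t) * (B (mob s z) - B (mob s w)) = 0 := by linear_combination h
      have h4 := (mul_eq_zero.1 h3).resolve_left hst
      exact mob_injOn hs hz hw (hBi (hm z hz) (hm w hw) (sub_eq_zero.1 h4))
    · have h5 := (hd2 0 h00).deriv
      have h6 : ‖(1 - starRingEnd ℂ s * s)‖ = 1 - ‖s‖ ^ 2 := by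
        rw [Complex.conj_mul', ← ofReal_pow, ← ofReal_one, ← ofReal_sub, Complex.norm_real, Real.norm_of_nonneg]
        nlinarith [norm_nonneg s]
      have h7 : deriv (fun z => (B (mob s z) - B s) / (1 - B t * B (mob s z))) 0 =
          deriv B s * (1 - starRingEnd ℂ s * s) / (1 - B s * B t) := by
        refine h5.trans ?_
        simp only [hm0, mul_zero, add_zero, one_pow, div_one, sub_self, zero_mul, sub_zero]
        have : 1 - B t * B s ≠ 0 := by rwa [mul_comm (B t)]
        field_simp
      rw [h7, norm_div, norm_mul, h6]
  obtain ⟨X, hX, hXd, hXi, hX0, hX'⟩ := main s t hs ht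
  obtain ⟨W, hW, hWd, hWi, hW0, hW'⟩ := main t s ht hs
  have hs' : s ∈ ball (0 : ℂ) 1 := by simpa using hs
  have ht' : t ∈ ball (0 : ℂ) 1 := by simpa using ht
  have hst : 1 - B s * B t ≠ 0 := sub_ne_zero.2 (hBB s hs' t ht').symm
  have h := norm_deriv_mul_le hXd hWd hXi hWi hX0 hW0 (fun z hz ζ hζ h => by
    have hz' : mob s z ∈ ball (0 : ℂ) 1 := by simpa using norm_mob_lt hs (by simpa using hz : ‖z‖ < 1)
    have hζ' : mob t ζ ∈ ball (0 : ℂ) 1 := by simpa using norm_mob_lt ht (by simpa using hζ : ‖ζ‖ < 1)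
    have h1 : 1 - B t * B (mob s z) ≠ 0 := sub_ne_zero.2 (hBB t ht' _ hz').symm
    have h2 : 1 - B s * B (mob t ζ) ≠ 0 := sub_ne_zero.2 (hBB s hs' _ hζ').symm
    rw [hX z hz, hW ζ hζ, div_mul_div_comm, div_eq_one_iff_eq (mul_ne_zero h1 h2)] at h
    have h3 : (1 - B s * B t) * (1 - B (mob s z) * B (mob t ζ)) = 0 := by linear_combination -h
    have h4 := (mul_eq_zero.1 h3).resolve_left hst
    exact hBB _ hz' _ hζ' (sub_eq_zero.1 h4).symm)
  have hp : 0 < ‖1 - B s * B t‖ := norm_pos_iff.2 hst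
  rw [hX', hW', mul_comm (B t), div_mul_div_comm, div_le_one (by positivity)] at h
  nlinarith

/-! ### Logarithmic coefficients of functions omitting reciprocals of their values -/

/-- Normalised data attached to a univalent function `B` no two of whose values have product `1`: its expression
`B z = z exp (-η + l z)` with `l 0 = 0`, so that `exp (-η)` is the derivative at `0`, and the coefficients `c` of `l`. -/
structure BE (B l : ℂ → ℂ) (c : ℕ → ℂ) (η : ℝ) : Prop where
  dB : DifferentiableOn ℂ B (ball 0 1)
  inj : InjOn B (ball 0 1)
  prod : ∀ z ∈ ball (0 : ℂ) 1, ∀ ζ ∈ ball (0 : ℂ) 1, B z * B ζ ≠ 1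
  eq : ∀ z ∈ ball (0 : ℂ) 1, B z = z * Complex.exp (-η + l z)
  ps : PS c l
  c0 : c 0 = 0

theorem sum_pow_div_le {q : ℝ} (h0 : 0 ≤ q) (h1 : q < 1) (N : ℕ) :
    ∑ n ∈ Finset.range N, q ^ (n + 1) / ((n : ℝ) + 1) ≤ q + q ^ 2 / (2 * (1 - q)) := by
  have h1' : 0 < 1 - q := by linarith
  have key : ∀ N : ℕ, ∑ n ∈ Finset.range (N + 1), q ^ (n + 1) / ((n : ℝ) + 1) ≤
      q + (q ^ 2 - q ^ (N + 2)) / (2 * (1 - q)) := by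
    intro N
    induction N with
    | zero => simp
    | succ N ih =>
      rw [Finset.sum_range_succ]
      have h2 : q ^ (N + 1 + 1) / (((N + 1 : ℕ) : ℝ) + 1) ≤ q ^ (N + 2) / 2 := by
        apply div_le_div_of_nonneg_left (by positivity) (by norm_num)
        push_cast; linarith [(Nat.cast_nonneg N : (0 : ℝ) ≤ N)]
      refine (add_le_add ih h2).trans (le_of_eq ?_)
      field_simp
      ring
  rcases N with _ | N
  · simp; positivity
  · refine (key N).trans ?_
    gcongr
    linarith [pow_nonneg h0 (N + 2)]

theorem sum_mul_pow_le {q : ℝ} (h0 : 0 ≤ q) (h1 : q < 1) (N : ℕ) :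
    ∑ n ∈ Finset.range N, ((n : ℝ) + 1) * q ^ (n + 1) ≤ q / (1 - q) ^ 2 := by
  have hs := hasSum_coe_mul_geometric_of_norm_lt_one (r := q) (by rwa [Real.norm_of_nonneg h0])
  have h2 := hs.summable.sum_le_tsum (Finset.range (N + 1)) (fun i _ => by positivity)
  rw [hs.tsum_eq, Finset.sum_range_succ'] at h2
  simpa using h2

section
variable {c : ℕ → ℂ} {l : ℂ → ℂ} {E ρ : ℝ}

theorem tsum_sq_le_of_finite {u : ℕ → ℝ} {T : ℝ} (hu : Summable u) (h0 : ∀ n, 0 ≤ u n)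
    (h00 : u 0 = 0) (h : ∀ N, (∑ n ∈ Finset.range N, u (n + 1)) ^ 2 ≤ T) : (∑' n, u n) ^ 2 ≤ T := by
  have h1 : Tendsto (fun N => (∑ n ∈ Finset.range N, u (n + 1)) ^ 2) atTop (𝓝 ((∑' n, u (n + 1)) ^ 2)) :=
    (((summable_nat_add_iff 1).2 hu).hasSum.tendsto_sum_nat).pow 2
  have h2 := le_of_tendsto' h1 h
  rw [hu.tsum_eq_zero_add, h00, zero_add]; exact h2

/-- Cauchy-Schwarz: a majorant of `l` on a circle from the bound `∑ n |c n| ^ 2 ≤ E`. -/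
theorem tsum_sq_le (hl : PS c l) (hc0 : c 0 = 0)
    (hE : ∀ N, ∑ n ∈ Finset.range N, ((n : ℝ) + 1) * ‖c (n + 1)‖ ^ 2 ≤ E) (h0 : 0 ≤ ρ) (h1 : ρ < 1) :
    (∑' n, ‖c n‖ * ρ ^ n) ^ 2 ≤ E * (ρ ^ 2 + ρ ^ 4 / (2 * (1 - ρ ^ 2))) := by
  have hρ : ρ ^ 2 < 1 := by nlinarith
  have hE0 : 0 ≤ E := by simpa using hE 0
  refine tsum_sq_le_of_finite (hl.summable h0 h1) (fun n => by positivity) (by simp [hc0]) fun N => ?_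
  have h2 := Finset.sum_sq_le_sum_mul_sum_of_sq_le_mul (Finset.range N) (r := fun n => ‖c (n + 1)‖ * ρ ^ (n + 1))
    (f := fun n => ((n : ℝ) + 1) * ‖c (n + 1)‖ ^ 2) (g := fun n => (ρ ^ 2) ^ (n + 1) / ((n : ℝ) + 1))
    (fun n _ => by positivity) (fun n _ => by positivity) (fun n _ => le_of_eq <| by
      have : (n : ℝ) + 1 ≠ 0 := by positivity
      field_simp
      ring)
  refine h2.trans ?_
  have h3 := sum_pow_div_le (sq_nonneg ρ) hρ N
  rw [← pow_mul] at h3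
  exact mul_le_mul (hE N) h3 (Finset.sum_nonneg fun n _ => by positivity) hE0

/-- Cauchy-Schwarz: a bound for `z l'` on a circle from the bound `∑ n |c n| ^ 2 ≤ E`. -/
theorem tsum_deriv_sq_le (hl : PS c l)
    (hE : ∀ N, ∑ n ∈ Finset.range N, ((n : ℝ) + 1) * ‖c (n + 1)‖ ^ 2 ≤ E) (h0 : 0 ≤ ρ) (h1 : ρ < 1)
    (z : ℂ) (hz : ‖z‖ = ρ) :
    ‖z * deriv l z‖ ^ 2 ≤ E * (ρ ^ 2 / (1 - ρ ^ 2) ^ 2) := by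
  have hρ : ρ ^ 2 < 1 := by nlinarith
  have hE0 : 0 ≤ E := by simpa using hE 0
  have hd := hl.deriv.mul_id
  have hs := hd.summable h0 h1
  have h4 : ‖z * deriv l z‖ ≤ ∑' n, ‖(if n = 0 then (0 : ℂ) else (((n - 1 : ℕ) : ℂ) + 1) * c (n - 1 + 1))‖ * ρ ^ n := by
    have h5 := (hd z (by rwa [hz])).tsum_eq
    simp only at h5
    rw [← h5]
    refine tsum_of_norm_bounded hs.hasSum fun n => ?_
    rw [norm_mul, norm_pow, hz]
  refine (pow_le_pow_left₀ (norm_nonneg _) h4 2).trans ?_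
  refine tsum_sq_le_of_finite hs (fun n => by positivity) (by simp) fun N => ?_
  have h2 := Finset.sum_sq_le_sum_mul_sum_of_sq_le_mul (Finset.range N)
    (r := fun n => ‖(if n + 1 = 0 then (0 : ℂ) else (((n + 1 - 1 : ℕ) : ℂ) + 1) * c (n + 1 - 1 + 1))‖ * ρ ^ (n + 1))
    (f := fun n => ((n : ℝ) + 1) * ‖c (n + 1)‖ ^ 2) (g := fun n => ((n : ℝ) + 1) * (ρ ^ 2) ^ (n + 1))
    (fun n _ => by positivity) (fun n _ => by positivity) (fun n _ => le_of_eq <| by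
      have : ‖(n : ℂ) + 1‖ = (n : ℝ) + 1 := by
        rw [← Nat.cast_succ, Complex.norm_natCast]; simp
      simp [this]
      ring)
  refine h2.trans ?_
  exact mul_le_mul (hE N) (sum_mul_pow_le (sq_nonneg ρ) hρ N) (Finset.sum_nonneg fun n _ => by positivity) hE0

end

namespace BE
variable {B l : ℂ → ℂ} {c : ℕ → ℂ} {η : ℝ}

/-- The area theorem `log_area` with both functions equal to `B`. -/
theorem sum_le (h : BE B l c η) (N : ℕ) : ∑ n ∈ Finset.range N, ((n : ℝ) + 1) * ‖c (n + 1)‖ ^ 2 ≤ 2 * η := by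
  have hps : PS (fun n => (if n = 0 then -(η : ℂ) else 0) + c n) (fun z => -(η : ℂ) + l z) := by
    refine PS.add (fun z hz => ?_) h.ps
    convert hasSum_single (f := fun n => (if n = 0 then -(η : ℂ) else 0) * z ^ n) 0 (fun n hn => by simp [hn]) using 1
    simp
  have h1 := log_area hps hps h.eq h.eq h.inj h.inj h.prod N
  simp [h.c0] at h1
  linarith

theorem eta_nonneg (h : BE B l c η) : 0 ≤ η := by
  have := h.sum_le 0
  simp at this; exact this

end BE

/-! ### Real parts of the logarithmic coefficients -/

theorem exp_le_norm_one_add {w : ℂ} {η : ℝ} (hη : η ≤ 0.0206) (hw : ‖w‖ ^ 2 ≤ 8 / 9 * η) :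
    Real.exp (w.re - 0.515 * η) ≤ ‖1 + w‖ := by
  have h1 : ‖w‖ ≤ 0.1354 := by
    by_contra hc; push Not at hc; nlinarith [norm_nonneg w]
  have h2 := Complex.norm_log_one_add_sub_self_le (z := w) (by linarith)
  have h3 : ‖w‖ ^ 2 * (1 - ‖w‖)⁻¹ / 2 ≤ 0.515 * η := by
    have h4 : (1 - ‖w‖)⁻¹ ≤ 1 / 0.8646 := by
      rw [inv_eq_one_div]; apply one_div_le_one_div_of_le <;> linarith
    have h5 : ‖w‖ ^ 2 * (1 - ‖w‖)⁻¹ ≤ 8 / 9 * η * (1 / 0.8646) :=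
      mul_le_mul hw h4 (inv_nonneg.2 (by linarith)) (by nlinarith [sq_nonneg ‖w‖])
    nlinarith [sq_nonneg ‖w‖]
  have h6 : 1 + w ≠ 0 := fun h => by
    have : w = -1 := by linear_combination h
    rw [this] at h1; norm_num at h1
  have h7 := (abs_le.1 ((Complex.abs_re_le_norm _).trans (h2.trans h3))).1
  rw [Complex.sub_re] at h7
  calc Real.exp (w.re - 0.515 * η) ≤ Real.exp (Complex.log (1 + w)).re := Real.exp_le_exp.2 (by linarith)
    _ = ‖1 + w‖ := by rw [← Complex.norm_exp, Complex.exp_log h6]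

/-- The slope `-2 / 3` is that of `log |1 - exp ζ / 4| ^ 2` in the real direction at `ζ = 0`. -/
theorem norm_one_sub_exp_sq_le {ζ : ℂ} (hx : ζ.re ≤ 0.2193) :
    ‖1 - 1 / 4 * Complex.exp ζ‖ ^ 2 ≤ 9 / 16 * Real.exp (-(2 / 3) * ζ.re + 0.651 * ζ.im ^ 2) := by
  set x := ζ.re
  set y := ζ.im
  have h1 : ‖1 - 1 / 4 * Complex.exp ζ‖ ^ 2 = 1 - 1 / 2 * Real.exp x * Real.cos y + 1 / 16 * Real.exp x ^ 2 := by
    rw [← Complex.normSq_eq_norm_sq, Complex.normSq_apply]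
    simp [Complex.exp_re, Complex.exp_im]
    simp only [show ζ.re = x from rfl, show ζ.im = y from rfl]
    linear_combination (1 / 16 * Real.exp x ^ 2) * Real.sin_sq_add_cos_sq y
  have h2 : Real.cos y ≥ 1 - y ^ 2 / 2 := Real.one_sub_sq_div_two_le_cos
  obtain ⟨u, hu⟩ : ∃ u, u = Real.exp (x / 3) := ⟨_, rfl⟩
  have hu0 : 0 < u := hu ▸ Real.exp_pos _
  have hxu : Real.exp x = u ^ 3 := by rw [hu, ← Real.exp_nat_mul]; congr 1; push_cast; ring
  have hxv : Real.exp (-(2 / 3) * x) = (u ^ 2)⁻¹ := by rw [hu, ← Real.exp_nat_mul, ← Real.exp_neg]; congr 1; push_cast; ring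
  -- `u ^ 5 = exp (5 x / 3)`
  have hu5 : u ^ 5 ≤ 0.651 * 9 / 4 := by
    have h3 : u ^ 5 = Real.exp (5 * x / 12) ^ 4 := by
      rw [hu, ← Real.exp_nat_mul, ← Real.exp_nat_mul]; congr 1; push_cast; ring
    have h4 : Real.exp (5 * x / 12) ≤ Real.exp 0.091375 := Real.exp_le_exp.2 (by linarith)
    have h5 := Real.abs_exp_sub_one_sub_id_le (x := 0.091375) (by rw [abs_of_pos] <;> norm_num)
    have h6 := (abs_le.1 h5).2
    have h7 : Real.exp (5 * x / 12) ≤ 1.09973 := by linarith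
    rw [h3]
    calc Real.exp (5 * x / 12) ^ 4 ≤ 1.09973 ^ 4 := by gcongr
      _ ≤ _ := by norm_num
  have h8 : 1 + 0.651 * y ^ 2 ≤ Real.exp (0.651 * y ^ 2) := by linarith [Real.add_one_le_exp (0.651 * y ^ 2)]
  have h9 : (1 - 1 / 4 * u ^ 3) ^ 2 ≤ 9 / 16 * (u ^ 2)⁻¹ := by
    have hA : 0 ≤ 1 - 1 / 4 * u ^ 3 := by
      have : u ^ 3 ≤ 1.5 := by
        have : u ^ 5 ≤ 1.5 := by linarith
        by_contra hcon
        push Not at hcon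
        have hu1 : 1 ≤ u := by
          by_contra h; push Not at h
          have : u ^ 3 ≤ 1 := pow_le_one₀ hu0.le h.le
          linarith
        have : u ^ 3 ≤ u ^ 5 := pow_le_pow_right₀ hu1 (by norm_num)
        linarith
      linarith
    have hB : (1 - 1 / 4 * u ^ 3) * u ≤ 3 / 4 := by nlinarith [sq_nonneg (u - 1), sq_nonneg (u ^ 2 - 1)]
    rw [← div_eq_mul_inv, le_div_iff₀ (by positivity)]
    nlinarith [mul_nonneg hA hu0.le]
  rw [h1, Real.exp_add, hxu, hxv]
  have h10 : 1 / 4 * u ^ 3 * y ^ 2 ≤ 9 / 16 * (u ^ 2)⁻¹ * (0.651 * y ^ 2) := by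
    have : 1 / 4 * u ^ 3 ≤ 9 / 16 * 0.651 * (u ^ 2)⁻¹ := by
      rw [← div_eq_mul_inv, le_div_iff₀ (by positivity)]
      nlinarith
    nlinarith [sq_nonneg y]
  have h11 : 0 < (u ^ 2)⁻¹ := by positivity
  have h12 : 0 < u ^ 3 := by positivity
  calc 1 - 1 / 2 * u ^ 3 * Real.cos y + 1 / 16 * (u ^ 3) ^ 2 ≤ (1 - 1 / 4 * u ^ 3) ^ 2 + 1 / 4 * u ^ 3 * y ^ 2 := by nlinarith
    _ ≤ 9 / 16 * (u ^ 2)⁻¹ * (1 + 0.651 * y ^ 2) := by linarith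
    _ ≤ 9 / 16 * (u ^ 2)⁻¹ * Real.exp (0.651 * y ^ 2) := by gcongr
    _ = _ := by ring

/-- The logarithm of the two-point distortion inequality at two points `s`, `t` of modulus `1 / 2` with `s t = 1 / 4`,
to first order in `η`. Here `a`, `a'` stand for the values of `l`, and `w`, `w'` for those of `z l'`, at the two points. -/
theorem two_point_numeric {a a' w w' : ℂ} {η : ℝ} (h0 : 0 ≤ η) (hη : η ≤ 0.0206)
    (ha : ‖a‖ ^ 2 ≤ 0.5834 * η) (ha' : ‖a'‖ ^ 2 ≤ 0.5834 * η) (hw : ‖w‖ ^ 2 ≤ 8 / 9 * η) (hw' : ‖w'‖ ^ 2 ≤ 8 / 9 * η)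
    (h : ‖Complex.exp (-η + a) * (1 + w)‖ * ‖Complex.exp (-η + a') * (1 + w')‖ * (9 / 16) ≤
      ‖1 - 1 / 4 * Complex.exp ((-η + a) + (-η + a'))‖ ^ 2) :
    5 / 3 * (a.re + a'.re) + (w.re + w'.re) ≤ 5.9 * η := by
  have hre : |a.re| ≤ 0.10965 := (Complex.abs_re_le_norm a).trans (by
    by_contra hc; push Not at hc; nlinarith [norm_nonneg a])
  have hre' : |a'.re| ≤ 0.10965 := (Complex.abs_re_le_norm a').trans (by
    by_contra hc; push Not at hc; nlinarith [norm_nonneg a'])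
  have him : (a.im + a'.im) ^ 2 ≤ 4 * (0.5834 * η) := by
    nlinarith [Complex.abs_im_le_norm a, abs_nonneg a.im, sq_abs a.im, Complex.abs_im_le_norm a', abs_nonneg a'.im, sq_abs a'.im, sq_nonneg (a.im - a'.im)]
  have h1 := norm_one_sub_exp_sq_le (ζ := (-η + a) + (-η + a')) (by
    simp; linarith [(abs_le.1 hre).2, (abs_le.1 hre').2])
  have h2 := exp_le_norm_one_add hη hw
  have h3 := exp_le_norm_one_add hη hw'
  have h4 := h.trans h1
  rw [norm_mul, norm_mul, Complex.norm_exp, Complex.norm_exp] at h4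
  simp only [add_re, neg_re, ofReal_re, add_im, neg_im, ofReal_im, neg_zero, zero_add] at h4
  have h5 : Real.exp (-η + a.re) * Real.exp (w.re - 0.515 * η) * (Real.exp (-η + a'.re) * Real.exp (w'.re - 0.515 * η)) ≤
      Real.exp (-η + a.re) * ‖1 + w‖ * (Real.exp (-η + a'.re) * ‖1 + w'‖) := by gcongr
  rw [← Real.exp_add, ← Real.exp_add, ← Real.exp_add] at h5
  have h6 := Real.exp_le_exp.1 (show Real.exp (-η + a.re + (w.re - 0.515 * η) + (-η + a'.re + (w'.re - 0.515 * η))) ≤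
      Real.exp (-(2 / 3) * (-η + a.re + (-η + a'.re)) + 0.651 * (a.im + a'.im) ^ 2) by linarith)
  linarith

/-- Two-point distortion at `t` and its conjugate, for `|t| = 1 / 2`, bounds from above the real part of the function
`(5 / 3) (l + l*) + z l' + (z l')*`, where the star is reflection in the real axis. Its coefficients are
`2 (n + 5 / 3) Re (c n)`, and Carathéodory's estimate applies. -/
theorem BE.re_coeff_le {B l : ℂ → ℂ} {c : ℕ → ℂ} {η : ℝ} (h : BE B l c η) (hη : η ≤ 0.0206) {n : ℕ} (hn : n ≠ 0) :
    |(c n).re| * (n + 5 / 3) ≤ 5.9 * η * 2 ^ n := by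
  have hη0 := h.eta_nonneg
  have hl := h.ps.differentiableOn
  have hQ := h.ps.deriv.mul_id
  have hP := ((h.ps.add h.ps.conj).const_mul (5 / 3)).add (hQ.add hQ.conj)
  have hder : ∀ z ∈ ball (0 : ℂ) 1, deriv B z = Complex.exp (-η + l z) * (1 + z * deriv l z) := fun z hz => by
    have h1 : DifferentiableOn ℂ (fun z => -(η : ℂ) + l z) (ball 0 1) := hl.const_add _
    have h2 := (hasDerivAt_mul_exp h1 h.eq hz).deriv
    rw [h2]; simp
  have hna : ∀ z : ℂ, ‖z‖ = 1 / 2 → ‖l z‖ ^ 2 ≤ 0.5834 * η := fun z hz => by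
    have h1 := tsum_sq_le h.ps h.c0 h.sum_le (ρ := 1 / 2) (by norm_num) (by norm_num)
    have h2 := (h.ps.maj (r := 1 / 2) (by norm_num) (by norm_num)).norm_le hz.le
    calc ‖l z‖ ^ 2 ≤ _ := by gcongr
      _ ≤ _ := h1
      _ ≤ _ := by norm_num; linarith
  have hnw : ∀ z : ℂ, ‖z‖ = 1 / 2 → ‖z * deriv l z‖ ^ 2 ≤ 8 / 9 * η := fun z hz => by
    have h1 := tsum_deriv_sq_le h.ps h.sum_le (ρ := 1 / 2) (by norm_num) (by norm_num) z hz
    refine h1.trans ?_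
    norm_num; linarith
  have key := hP.caratheodory (ρ := 1 / 2) (K := 5.9 * η) (by norm_num) (by norm_num) (fun t ht => ?_) hn
  · have e0 : ((5 / 3 : ℂ) * (c 0 + (starRingEnd ℂ) (c 0)) + (0 + 0)).re = 0 := by simp [h.c0]
    obtain ⟨m, rfl⟩ := Nat.exists_eq_succ_of_ne_zero hn
    have e1 : ∀ x : ℂ, (5 / 3 : ℂ) * (x + (starRingEnd ℂ) x) + (((m : ℂ) + 1) * x + (starRingEnd ℂ) (((m : ℂ) + 1) * x)) =
        ((2 * (x.re * ((m + 1 : ℕ) + 5 / 3)) : ℝ) : ℂ) := fun x => by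
      apply Complex.ext <;> simp <;> ring
    simp only [Nat.succ_eq_add_one, Nat.add_eq_zero_iff, one_ne_zero, and_false, if_false, Nat.add_sub_cancel, e1,
      if_true, map_zero, h.c0, Complex.norm_real, Real.norm_eq_abs, abs_mul, abs_two] at key
    rw [abs_of_nonneg (by positivity : (0 : ℝ) ≤ ((m + 1 : ℕ) : ℝ) + 5 / 3)] at key
    simp only [add_zero, mul_zero, zero_re, sub_zero, one_div, inv_pow] at key
    rw [← div_eq_mul_inv, div_le_iff₀ (by positivity)] at key
    simp only [Nat.succ_eq_add_one]
    linarith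
  · have ht1 : t ∈ ball (0 : ℂ) 1 := by rw [mem_ball_zero_iff, ht]; norm_num
    have ht2 : ‖(starRingEnd ℂ) t‖ = 1 / 2 := by rw [RCLike.norm_conj, ht]
    have ht3 : (starRingEnd ℂ) t ∈ ball (0 : ℂ) 1 := by rw [mem_ball_zero_iff, ht2]; norm_num
    have h2 := two_point h.dB h.inj h.prod (mem_ball_zero_iff.1 ht1) (mem_ball_zero_iff.1 ht3)
    have hBB : B t * B ((starRingEnd ℂ) t) = 1 / 4 * Complex.exp ((-η + l t) + (-η + l ((starRingEnd ℂ) t))) := by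
      rw [h.eq _ ht1, h.eq _ ht3, Complex.exp_add (-η + l t)]
      have : t * (starRingEnd ℂ) t = 1 / 4 := by
        rw [Complex.mul_conj, Complex.normSq_eq_norm_sq, ht]; norm_num
      linear_combination (Complex.exp (-η + l t) * Complex.exp (-η + l ((starRingEnd ℂ) t))) * this
    rw [hBB, hder _ ht1, hder _ ht3, ht, ht2] at h2
    have h3 := two_point_numeric hη0 hη (hna _ ht) (hna _ ht2) (hnw _ ht) (hnw _ ht2)
      (le_trans (le_of_eq (by norm_num)) h2)
    refine le_trans (le_of_eq ?_) h3
    simp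
    try ring

/-- The real parts of the logarithmic coefficients have a majorant smaller than `η` by a definite factor. -/
theorem BE.sum_re_le {B l : ℂ → ℂ} {c : ℕ → ℂ} {η r : ℝ} (h : BE B l c η) (hη : η ≤ 0.0206) (h0 : 0 ≤ r) (h1 : r ≤ 0.10103) :
    ∑' n, ‖((c n).re : ℂ)‖ * r ^ n ≤ 0.53 * η := by
  have hη0 := h.eta_nonneg
  have hb : ∀ n, ‖((c (n + 1)).re : ℂ)‖ * r ^ (n + 1) ≤ 5.9 * η * (3 / 8 * (if n = 0 then 2 * r else 0) + 3 / 11 * (if n = 0 then 0 else (2 * r) ^ (n + 1))) := fun n => by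
    have h2 := h.re_coeff_le hη (Nat.succ_ne_zero n)
    rw [Complex.norm_real, Real.norm_eq_abs]
    have hp : 0 ≤ r ^ (n + 1) := by positivity
    have hA := abs_nonneg (c (n + 1)).re
    have hm := mul_le_mul_of_nonneg_right h2 hp
    rw [mul_assoc, mul_assoc (5.9 * η), ← mul_pow] at hm
    rcases n with _ | n
    · simp at hm ⊢; nlinarith
    · simp only [Nat.add_eq_zero_iff, one_ne_zero, and_false, if_false, mul_zero, zero_add]
      push_cast at hm
      have : |(c (n + 1 + 1)).re| * (11 / 3 * r ^ (n + 1 + 1)) ≤ |(c (n + 1 + 1)).re| * ((((n : ℝ) + 1 + 1) + 5 / 3) * r ^ (n + 1 + 1)) := by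
        gcongr; linarith [(Nat.cast_nonneg n : (0 : ℝ) ≤ n)]
      simp only [Nat.succ_eq_add_one] at hm
      linarith
  have hr2 : 2 * r < 1 := by linarith
  have hs1 : HasSum (fun n : ℕ => if n = 0 then 2 * r else 0) (2 * r) := by
    simpa using hasSum_ite_eq (0 : ℕ) (2 * r)
  have hs2 : HasSum (fun n : ℕ => if n = 0 then 0 else (2 * r) ^ (n + 1)) ((2 * r) ^ 2 / (1 - 2 * r)) := by
    rw [← hasSum_nat_add_iff' 1]
    have := (hasSum_geometric_of_lt_one (by linarith : 0 ≤ 2 * r) hr2).mul_left ((2 * r) ^ 2)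
    simpa [pow_succ, div_eq_mul_inv, mul_comm, mul_left_comm, mul_assoc] using this
  have hs := ((hs1.mul_left (3 / 8)).add (hs2.mul_left (3 / 11))).mul_left (5.9 * η)
  have hsum : Summable fun n => ‖((c (n + 1)).re : ℂ)‖ * r ^ (n + 1) :=
    Summable.of_nonneg_of_le (fun n => by positivity) hb hs.summable
  rw [((summable_nat_add_iff (f := fun n => ‖((c n).re : ℂ)‖ * r ^ n) 1).1 hsum).tsum_eq_zero_add]
  have h3 := hsum.tsum_le_tsum hb hs.summable
  rw [hs.tsum_eq] at h3
  have h4 : (2 * r) ^ 2 / (1 - 2 * r) ≤ 0.05117 := by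
    rw [div_le_iff₀ (by linarith)]; nlinarith
  simp only [h.c0, zero_re, ofReal_zero, norm_zero, zero_mul, zero_add]
  have : 5.9 * η * (3 / 8 * (2 * r) + 3 / 11 * ((2 * r) ^ 2 / (1 - 2 * r))) ≤ 5.9 * η * (3 / 8 * (2 * 0.10103) + 3 / 11 * 0.05117) := by
    gcongr
  linarith

/-! ### Numerical series and Parseval's identity -/

section
variable {v : ℝ}

theorem HasSum.of_eq {E : Type*} [NormedRing E] {f g : ℕ → E} {a b : E} (h : HasSum f a) (hf : ∀ n, f n = g n) (hab : a = b) : HasSum g b := by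
  rwa [← funext hf, ← hab]

theorem choose_cast (n k : ℕ) : (((n + k).choose k : ℕ) : ℝ) * k.factorial = ((n + 1).ascFactorial k : ℕ) := by
  rw [Nat.ascFactorial_eq_factorial_mul_choose]; push_cast; ring

theorem choose_cast_two (n : ℕ) : (((n + 2).choose 2 : ℕ) : ℝ) = (n + 1) * (n + 2) / 2 := by
  have := choose_cast n 2
  simp only [Nat.ascFactorial, Nat.factorial] at this; push_cast at this; linarith

theorem choose_cast_three (n : ℕ) : (((n + 3).choose 3 : ℕ) : ℝ) = (n + 1) * (n + 2) * (n + 3) / 6 := by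
  have := choose_cast n 3
  simp only [Nat.ascFactorial, Nat.factorial] at this; push_cast at this; linarith

theorem choose_cast_four (n : ℕ) : (((n + 4).choose 4 : ℕ) : ℝ) = (n + 1) * (n + 2) * (n + 3) * (n + 4) / 24 := by
  have := choose_cast n 4
  simp only [Nat.ascFactorial, Nat.factorial] at this; push_cast at this; linarith

theorem hasSum_pow_one (h : ‖v‖ < 1) : HasSum (fun n : ℕ => (n : ℝ) * v ^ n) (v / (1 - v) ^ 2) :=
  hasSum_coe_mul_geometric_of_norm_lt_one h

theorem hasSum_pow_two (h : ‖v‖ < 1) : HasSum (fun n : ℕ => (n : ℝ) ^ 2 * v ^ n) (v * (1 + v) / (1 - v) ^ 3) := by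
  have h2 := hasSum_choose_mul_geometric_of_norm_lt_one 2 h
  have h1 := hasSum_choose_mul_geometric_of_norm_lt_one 1 h
  have h0 := hasSum_choose_mul_geometric_of_norm_lt_one 0 h
  have hv : 1 - v ≠ 0 := by
    intro hv; rw [show v = 1 by linarith] at h; norm_num at h
  have := ((h2.mul_left 2).sub (h1.mul_left 3)).add h0
  refine this.of_eq (fun n => ?_) ?_
  · rw [choose_cast_two]; simp; ring
  · field_simp; ring

theorem hasSum_pow_three (h : ‖v‖ < 1) :
    HasSum (fun n : ℕ => (n : ℝ) ^ 3 * v ^ n) (v * (1 + 4 * v + v ^ 2) / (1 - v) ^ 4) := by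
  have h3 := hasSum_choose_mul_geometric_of_norm_lt_one 3 h
  have h2 := hasSum_choose_mul_geometric_of_norm_lt_one 2 h
  have h1 := hasSum_choose_mul_geometric_of_norm_lt_one 1 h
  have h0 := hasSum_choose_mul_geometric_of_norm_lt_one 0 h
  have hv : 1 - v ≠ 0 := by
    intro hv; rw [show v = 1 by linarith] at h; norm_num at h
  have := (((h3.mul_left 6).sub (h2.mul_left 12)).add (h1.mul_left 7)).sub h0
  refine this.of_eq (fun n => ?_) ?_
  · rw [choose_cast_two, choose_cast_three]; simp; ring
  · field_simp; ring

theorem hasSum_pow_four (h : ‖v‖ < 1) :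
    HasSum (fun n : ℕ => (n : ℝ) ^ 4 * v ^ n) (v * (1 + 11 * v + 11 * v ^ 2 + v ^ 3) / (1 - v) ^ 5) := by
  have h4 := hasSum_choose_mul_geometric_of_norm_lt_one 4 h
  have h3 := hasSum_choose_mul_geometric_of_norm_lt_one 3 h
  have h2 := hasSum_choose_mul_geometric_of_norm_lt_one 2 h
  have h1 := hasSum_choose_mul_geometric_of_norm_lt_one 1 h
  have h0 := hasSum_choose_mul_geometric_of_norm_lt_one 0 h
  have hv : 1 - v ≠ 0 := by
    intro hv; rw [show v = 1 by linarith] at h; norm_num at h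
  have := ((((h4.mul_left 24).sub (h3.mul_left 60)).add (h2.mul_left 50)).sub (h1.mul_left 15)).add h0
  refine this.of_eq (fun n => ?_) ?_
  · rw [choose_cast_two, choose_cast_three, choose_cast_four]; simp; ring
  · field_simp; ring

end

/-- Parseval's identity on a circle. -/
theorem PS.parseval {c : ℕ → ℂ} {f : ℂ → ℂ} (h : PS c f) {ρ : ℝ} (h0 : 0 ≤ ρ) (h1 : ρ < 1) :
    ∫ θ in (-Real.pi)..Real.pi, ‖f (ρ * Complex.exp (θ * I))‖ ^ 2 =
      2 * Real.pi * ∑' n, ‖c n‖ ^ 2 * ρ ^ (2 * n) := by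
  set u : ℝ → ℂ := fun θ => f (ρ * Complex.exp (θ * I)) with hu
  have hcont : Continuous u := continuous_circle h h0 h1
  have hM : ∀ θ, ‖u θ‖ ≤ ∑' n, ‖c n‖ * ρ ^ n := fun θ =>
    (h.maj h0 h1).norm_le (by rw [PS.norm_circle h0])
  have hz : ∀ θ : ℝ, ‖(ρ * Complex.exp (θ * I) : ℂ)‖ = ρ := fun θ => PS.norm_circle h0 θ
  set F : ℕ → C(ℝ, ℂ) := fun n =>
    ⟨fun θ => starRingEnd ℂ (c n) * ρ ^ n * (u θ * Complex.exp (-((n : ℤ) : ℂ) * θ * I)), by fun_prop⟩ with hF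
  have hb : ∀ n (θ : ℝ), ‖F n θ‖ ≤ ‖c n‖ * ρ ^ n * ∑' n, ‖c n‖ * ρ ^ n := fun n θ => by
    have : ‖Complex.exp (-((n : ℤ) : ℂ) * θ * I)‖ = 1 := by
      rw [show -((n : ℤ) : ℂ) * θ * I = ((-(n : ℝ) * θ : ℝ) : ℂ) * I by push_cast; ring]
      exact Complex.norm_exp_ofReal_mul_I _
    simp only [hF, ContinuousMap.coe_mk, norm_mul, this, mul_one, RCLike.norm_conj, norm_pow, Complex.norm_real,
      Real.norm_of_nonneg h0]
    gcongr; exact hM θ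
  have hs : Summable fun n => ‖(F n).restrict (⟨uIcc (-Real.pi) Real.pi, isCompact_uIcc⟩ : TopologicalSpace.Compacts ℝ)‖ := by
    refine Summable.of_nonneg_of_le (fun n => norm_nonneg _) (fun n => ?_) ((h.summable h0 h1).mul_right (∑' n, ‖c n‖ * ρ ^ n))
    exact (ContinuousMap.norm_le _ (mul_nonneg (by positivity) (tsum_nonneg fun n => by positivity))).2 fun x => hb n x
  have h2 := intervalIntegral.hasSum_intervalIntegral_of_summable_norm (a := -Real.pi) (b := Real.pi) hs
  have h3 : ∀ n, ∫ θ in (-Real.pi)..Real.pi, F n θ = ((2 * Real.pi * (‖c n‖ ^ 2 * ρ ^ (2 * n)) : ℝ) : ℂ) := fun n => by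
    simp only [hF, ContinuousMap.coe_mk, intervalIntegral.integral_const_mul]
    have := h.integral h0 h1 (n : ℤ)
    simp only [hu]
    rw [this, if_pos (by positivity)]
    simp only [Int.toNat_natCast]
    have e : starRingEnd ℂ (c n) * c n = (‖c n‖ : ℂ) ^ 2 := by rw [mul_comm, Complex.mul_conj, Complex.normSq_eq_norm_sq]; simp
    push_cast
    rw [← e]; ring
  have h4 : ∀ θ : ℝ, ∑' n, F n θ = ((‖u θ‖ ^ 2 : ℝ) : ℂ) := fun θ => by
    have h5 := Complex.hasSum_conj'.2 (h (ρ * Complex.exp (θ * I)) (by rw [hz]; exact h1))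
    have h6 := (h5.mul_left (u θ))
    have e : u θ * (starRingEnd ℂ) (f (ρ * Complex.exp (θ * I))) = ((‖u θ‖ ^ 2 : ℝ) : ℂ) := by
      rw [show f (ρ * Complex.exp (θ * I)) = u θ from rfl, Complex.mul_conj, Complex.normSq_eq_norm_sq]
    rw [e] at h6
    rw [← h6.tsum_eq]
    refine tsum_congr fun n => ?_
    have e2 : (starRingEnd ℂ) (Complex.exp (θ * I)) ^ n = Complex.exp (-((n : ℤ) : ℂ) * θ * I) := by
      rw [← Complex.exp_conj, ← Complex.exp_nat_mul]
      congr 1; simp; ring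
    simp only [hF, ContinuousMap.coe_mk]
    rw [← e2]
    simp [mul_pow]; ring
  simp only [h3, h4] at h2
  rw [intervalIntegral.integral_ofReal] at h2
  have h5 := Complex.hasSum_ofReal.1 h2
  rw [← h5.tsum_eq, tsum_mul_left]

/-! ### The Koebe expansion, and the coefficient bound far from the identity -/

/-- The coefficients of the Koebe function `4 w / (1 + w) ^ 2`. -/
noncomputable def kc (n : ℕ) : ℂ := -4 * n * (-1) ^ n

theorem norm_kc (n : ℕ) : ‖kc n‖ = 4 * n := by simp [kc]

theorem conj_kc (n : ℕ) : (starRingEnd ℂ) (kc n) = kc n := by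
  rw [kc, show (-4 * (n : ℂ) * (-1) ^ n) = ((-4 * (n : ℝ) * (-1) ^ n : ℝ) : ℂ) by push_cast; ring, Complex.conj_ofReal]

theorem hasSum_kc {w : ℂ} (hw : ‖w‖ < 1) : HasSum (fun n => kc n * w ^ n) (4 * w / (1 + w) ^ 2) := by
  have := (hasSum_coe_mul_geometric_of_norm_lt_one (r := -w) (by simpa using hw)).mul_left (-4)
  simp only [sub_neg_eq_add] at this
  rw [show 4 * w / (1 + w) ^ 2 = -4 * (-w / (1 + w) ^ 2) by ring]
  refine this.of_eq (fun n => ?_) rfl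
  rw [kc, neg_pow w]; ring

/-- The real parts of the coefficients belong to the symmetrisation of `f` in the real axis. -/
theorem PS.re {c : ℕ → ℂ} {f : ℂ → ℂ} (h : PS c f) :
    PS (fun n => ((c n).re : ℂ)) (fun z => 1 / 2 * (f z + starRingEnd ℂ (f (starRingEnd ℂ z)))) := by
  have := (h.add h.conj).const_mul (1 / 2)
  have e : ∀ x : ℂ, (1 / 2 : ℂ) * (x + starRingEnd ℂ x) = (x.re : ℂ) := fun x => by
    apply Complex.ext <;> simp; ring
  simpa only [e] using this

theorem PS.im {c : ℕ → ℂ} {f : ℂ → ℂ} (h : PS c f) :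
    PS (fun n => ((c n).im : ℂ) * I) (fun z => 1 / 2 * (f z - starRingEnd ℂ (f (starRingEnd ℂ z)))) := by
  have := (h.sub h.conj).const_mul (1 / 2)
  have e : ∀ x : ℂ, (1 / 2 : ℂ) * (x - starRingEnd ℂ x) = (x.im : ℂ) * I := fun x => by
    apply Complex.ext <;> simp; ring
  simpa only [e] using this

theorem norm_exp_sub_exp_sub_le {x y : ℂ} {ν : ℝ} (hx : ‖x‖ ≤ ν) (hy : ‖y‖ ≤ ν) :
    ‖Complex.exp x - Complex.exp y - (x - y)‖ ≤ (Real.exp ν - 1) * ‖x - y‖ := by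
  have h1 : ∀ w ∈ closedBall (0 : ℂ) ν, HasDerivWithinAt (fun w => Complex.exp w - w) (Complex.exp w - 1) (closedBall 0 ν) w :=
    fun w _ => ((Complex.hasDerivAt_exp w).sub (hasDerivAt_id w)).hasDerivWithinAt
  have h2 : ∀ w ∈ closedBall (0 : ℂ) ν, ‖Complex.exp w - 1‖ ≤ Real.exp ν - 1 := fun w hw => by
    have := Complex.norm_exp_sub_sum_le_exp_norm_sub_sum w 1
    simp at this
    have h3 := Real.exp_le_exp.2 (mem_closedBall_zero_iff.1 hw)
    linarith
  have := (convex_closedBall (0 : ℂ) ν).norm_image_sub_le_of_norm_hasDerivWithin_le h1 h2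
    (mem_closedBall_zero_iff.2 hy) (mem_closedBall_zero_iff.2 hx)
  rwa [show Complex.exp x - Complex.exp y - (x - y) = Complex.exp x - x - (Complex.exp y - y) by ring]

section
variable {B l F : ℂ → ℂ} {c A : ℕ → ℂ} {η r ρ : ℝ}

/-- The Koebe series of `F = 4 B / (1 + B) ^ 2`, with `B ^ n` written through `l`. -/
theorem BE.hasSum_F (h : BE B l c η) (hF : ∀ z, ‖z‖ < 1 → F z = 4 * B z / (1 + B z) ^ 2) {z : ℂ} (hz : ‖z‖ < 1)
    (hB : ‖B z‖ < 1) :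
    HasSum (fun n : ℕ => kc n * (Real.exp (-η) : ℂ) ^ n * z ^ n * Complex.exp (n * l z)) (F z) := by
  rw [hF z hz]
  refine (hasSum_kc hB).of_eq (fun n => ?_) rfl
  rw [h.eq z (by simpa using hz), mul_pow, ← Complex.exp_nat_mul, mul_add, Complex.exp_add, Complex.ofReal_exp, ← Complex.exp_nat_mul]
  push_cast; ring

theorem BE.hasSum_F_conj (h : BE B l c η) (hF : ∀ z, ‖z‖ < 1 → F z = 4 * B z / (1 + B z) ^ 2) {z : ℂ} (hz : ‖z‖ < 1)
    (hB : ‖B (starRingEnd ℂ z)‖ < 1) :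
    HasSum (fun n : ℕ => kc n * (Real.exp (-η) : ℂ) ^ n * z ^ n * Complex.exp (n * starRingEnd ℂ (l (starRingEnd ℂ z))))
      (starRingEnd ℂ (F (starRingEnd ℂ z))) := by
  have := Complex.hasSum_conj'.2 (h.hasSum_F hF (z := starRingEnd ℂ z) (by simpa using hz) hB)
  refine this.of_eq (fun n => ?_) rfl
  simp only [map_mul, conj_kc, map_pow, Complex.conj_ofReal, Complex.conj_conj, ← Complex.exp_conj, Complex.conj_natCast]

/-- A majorant of `B` on the circle of radius `r`. -/
theorem BE.maj_B (h : BE B l c η) (h0 : 0 ≤ r) (h1 : r < 1) {C : ℝ} (hC : Maj r C l) :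
    Maj r (r * Real.exp (C - η)) B := by
  have := (Maj.id (r := r)).mul h0 ((hC.exp h0).const_mul (Complex.exp (-η)))
  refine (this.congr fun z hz => ?_).mono (le_of_eq ?_)
  · rw [h.eq z (by rw [mem_ball_zero_iff]; linarith), Complex.exp_add]
  · rw [Complex.norm_exp, sub_eq_add_neg, Real.exp_add, Complex.neg_re, Complex.ofReal_re]; ring

theorem tsum_kc (h0 : 0 ≤ r) (h1 : r < 1) : HasSum (fun n => ‖kc n‖ * r ^ n) (4 * r / (1 - r) ^ 2) := by
  have := (hasSum_pow_one (v := r) (by rwa [Real.norm_of_nonneg h0])).mul_left 4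
  exact this.of_eq (fun n => by rw [norm_kc]; ring) (by ring)

/-- The constant `0.10156` is an upper bound for `r + r ^ 3 / (2 (1 - r ^ 2))` when `r ≤ 0.10103`. -/
theorem BE.maj_l_sq (h : BE B l c η) (h0 : 0 ≤ r) (h1 : r ≤ 0.10103) :
    (∑' n, ‖c n‖ * r ^ n) ^ 2 ≤ 2 * η * (0.10156 * r) := by
  have h2 := tsum_sq_le h.ps h.c0 h.sum_le h0 (by linarith)
  refine h2.trans (mul_le_mul_of_nonneg_left ?_ (by linarith [h.eta_nonneg]))
  have h3 : r ^ 4 / (2 * (1 - r ^ 2)) ≤ 0.00053 * r := by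
    have : r ^ 2 ≤ 0.01021 := by nlinarith
    have h5 : r ^ 3 ≤ 0.0010316 := by nlinarith
    rw [div_le_iff₀ (by linarith)]
    nlinarith
  nlinarith

/-- The coefficient estimate when `B` is far from the identity: by the area theorem `l` has majorant at most `η`, hence
`B` has majorant at most `r`, and the Koebe series of `F` in powers of `B` gives the bound. -/
theorem BE.key_large (h : BE B l c η) (hA : PS A F) (hF : ∀ z, ‖z‖ < 1 → F z = 4 * B z / (1 + B z) ^ 2)
    (hη : 0.0206 ≤ η) (h0 : 0 < r) (h1 : r ≤ 0.10103) : ∑' n, ‖A n‖ * r ^ n ≤ 4 * r / (1 - r) ^ 2 := by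
  have hr1 : r < 1 := by linarith
  have h2 : (∑' n, ‖c n‖ * r ^ n) ≤ η := by
    have h3 := h.maj_l_sq h0.le h1
    by_contra hc; push Not at hc
    have : 2 * η * (0.10156 * r) ≤ η * η := by nlinarith
    nlinarith
  have hB := h.maj_B h0.le hr1 (h.ps.maj h0.le hr1)
  have hB' : Maj r r B := hB.mono (by
    have : Real.exp ((∑' n, ‖c n‖ * r ^ n) - η) ≤ 1 := Real.exp_le_one_iff.2 (by linarith)
    nlinarith)
  have hs := tsum_kc h0.le hr1
  have := hB'.comp h0.le (a := kc) (Φ := fun w => 4 * w / (1 + w) ^ 2) hs.summable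
    (fun z hz => hasSum_kc ((hB'.norm_le hz).trans_lt hr1))
  rw [hs.tsum_eq] at this
  exact hA.tsum_le_of_maj h0 hr1 (this.congr fun z hz => hF z (by linarith))

end

/-! ### Real parts of the coefficients near the identity -/

theorem cosh_sub_one_le {x : ℝ} (hx : 0 ≤ x) : Real.cosh x - 1 ≤ x ^ 2 / 2 * Real.exp x := by
  have h1 : Real.exp x - 1 ≤ x * Real.exp x := by
    have := Real.add_one_le_exp (-x)
    have h2 : Real.exp (-x) * Real.exp x = 1 := by rw [← Real.exp_add]; simp
    nlinarith [Real.exp_pos x]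
  have h3 : Real.cosh x - 1 = (Real.exp x - 1) ^ 2 * Real.exp (-x) / 2 := by
    rw [Real.cosh_eq]
    have h2 : Real.exp (-x) * Real.exp x = 1 := by rw [← Real.exp_add]; simp
    linear_combination (-Real.exp x / 2 + 1) * h2
  have h4 : 0 ≤ Real.exp x - 1 := by linarith [Real.one_le_exp hx]
  rw [h3]
  calc (Real.exp x - 1) ^ 2 * Real.exp (-x) / 2 ≤ (x * Real.exp x) ^ 2 * Real.exp (-x) / 2 := by gcongr
    _ = x ^ 2 / 2 * Real.exp x * (Real.exp (-x) * Real.exp x) := by ring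
    _ = _ := by rw [← Real.exp_add]; simp

section
variable {B l F : ℂ → ℂ} {c A : ℕ → ℂ} {η r ρ : ℝ}

/-- The Taylor coefficients of `exp` and `cosh` are nonnegative, and both constant terms are `1`. -/
theorem maj_exp_mul_cosh_sub_one {s d : ℂ → ℂ} {S m : ℝ} (h0 : 0 ≤ r) (hs : Maj r S s) (hd : Maj r m d) (n : ℕ) :
    Maj r (Real.exp (n * S) * Real.cosh (n * m) - 1) (fun z => Complex.exp (n * s z) * Complex.cosh (n * d z) - 1) := by
  have h1 := (hs.const_mul (n : ℂ)).exp_sub_one h0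
  have h2 := (hd.const_mul (n : ℂ)).cosh_sub_one h0
  rw [Complex.norm_natCast] at h1 h2
  have := ((h1.mul h0 h2).add h0 h1).add h0 h2
  refine (this.congr fun z _ => by ring).mono (le_of_eq (by ring))

/-- Contribution of the real parts of the coefficients of `F`. With `s` and `d` the symmetric and antisymmetric parts of
`l` under reflection, they belong to the series `∑ kc n (b z) ^ n exp (n s) cosh (n d)`, where `b = exp (-η)`. The
subtracted term is the gain in the linear coefficient coming from `S < η`; the term in `m ^ 2` comes from `cosh`. -/
theorem BE.re_part (h : BE B l c η) (hA : PS A F) (hF : ∀ z, ‖z‖ < 1 → F z = 4 * B z / (1 + B z) ^ 2)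
    (h0 : 0 < r) (h1 : r < 1) {S m : ℝ} (hm0 : 0 ≤ m) (hB : ∀ z, ‖z‖ ≤ r → ‖B z‖ < 1)
    (hS : ∑' n, ‖((c n).re : ℂ)‖ * r ^ n ≤ S) (hm : ∑' n, ‖((c n).im : ℂ) * I‖ * r ^ n ≤ m) (hSη : S ≤ η)
    (hv : r * Real.exp m < 1) :
    Summable (fun n => (4 * n * Real.exp (-η) ^ n + ‖((A n).re : ℂ) - kc n * (Real.exp (-η) : ℂ) ^ n‖) * r ^ n) ∧
    ∑' n, (4 * n * Real.exp (-η) ^ n + ‖((A n).re : ℂ) - kc n * (Real.exp (-η) : ℂ) ^ n‖) * r ^ n ≤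
      4 * r / (1 - r) ^ 2 + 2 * m ^ 2 * ((r * Real.exp m) * (1 + 4 * (r * Real.exp m) + (r * Real.exp m) ^ 2) / (1 - r * Real.exp m) ^ 4)
       - 4 * r * (1 - Real.exp (S - η)) := by
  set b := Real.exp (-η) with hb
  set v := r * Real.exp m with hvdef
  have hb0 : 0 < b := Real.exp_pos _
  have hS0 : 0 ≤ S := le_trans (tsum_nonneg fun n => by positivity) hS
  have hb1 : b ≤ 1 := Real.exp_le_one_iff.2 (by linarith)
  have hv0 : 0 ≤ v := by positivity
  have hs := (h.ps.re.maj h0.le h1).mono hS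
  have hd := (h.ps.im.maj h0.le h1).mono hm
  have hmaj := fun n : ℕ => (maj_exp_mul_cosh_sub_one h0.le hs hd n).mul_pow h0.le (kc n * (b : ℂ) ^ n) n
  -- the numerical series
  have hK1 := (hasSum_pow_one (v := r) (by rwa [Real.norm_of_nonneg h0.le])).mul_left 4
  have hK3 := (hasSum_pow_three (v := v) (by rwa [Real.norm_of_nonneg hv0])).mul_left (2 * m ^ 2)
  have hKd := (hasSum_ite_eq (1 : ℕ) (4 * r * (1 - Real.exp (S - η))))
  have hK := (hK1.add hK3).sub hKd
  have hterm : ∀ n : ℕ, 4 * n * (b * r) ^ n * (Real.exp (n * S) * Real.cosh (n * m)) ≤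
      4 * (n * r ^ n) + 2 * m ^ 2 * (n ^ 3 * v ^ n) - (if n = 1 then 4 * r * (1 - Real.exp (S - η)) else 0) := fun n => by
    have e1 : (b * r) ^ n * Real.exp (n * S) = (r * Real.exp (S - η)) ^ n := by
      rw [Real.exp_nat_mul, ← mul_pow]; congr 1
      rw [sub_eq_add_neg, Real.exp_add]; ring
    have hc := cosh_sub_one_le (x := n * m) (by positivity)
    have hq : Real.exp (S - η) ≤ 1 := Real.exp_le_one_iff.2 (by linarith)
    have hc1 := Real.one_le_cosh (n * m)
    have e2 : v ^ n = r ^ n * Real.exp (n * m) := by rw [hvdef, mul_pow, Real.exp_nat_mul]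
    have h3 : (r * Real.exp (S - η)) ^ n ≤ r ^ n := by
      apply pow_le_pow_left₀ (by positivity); nlinarith
    have h4 : 4 * n * (r * Real.exp (S - η)) ^ n ≤ 4 * (n * r ^ n) - (if n = 1 then 4 * r * (1 - Real.exp (S - η)) else 0) := by
      split_ifs with hn
      · subst hn; simp; linarith
      · have : (n : ℝ) * (r * Real.exp (S - η)) ^ n ≤ n * r ^ n := by gcongr
        linarith
    have h5 : 4 * n * (r * Real.exp (S - η)) ^ n * (Real.cosh (n * m) - 1) ≤ 4 * n * r ^ n * ((n * m) ^ 2 / 2 * Real.exp (n * m)) := by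
      gcongr
    calc 4 * n * (b * r) ^ n * (Real.exp (n * S) * Real.cosh (n * m))
        = 4 * n * (r * Real.exp (S - η)) ^ n + 4 * n * (r * Real.exp (S - η)) ^ n * (Real.cosh (n * m) - 1) := by
          rw [← e1]; ring
      _ ≤ (4 * (n * r ^ n) - (if n = 1 then 4 * r * (1 - Real.exp (S - η)) else 0)) +
          4 * n * r ^ n * ((n * m) ^ 2 / 2 * Real.exp (n * m)) := add_le_add h4 h5
      _ = _ := by rw [e2]; ring
  have hKn : ∀ n : ℕ, ‖kc n * (b : ℂ) ^ n‖ * r ^ n * (Real.exp (n * S) * Real.cosh (n * m) - 1) =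
      4 * n * (b * r) ^ n * (Real.exp (n * S) * Real.cosh (n * m)) - 4 * (n * (b * r) ^ n) := fun n => by
    rw [norm_mul, norm_kc, norm_pow, Complex.norm_real, Real.norm_of_nonneg hb0.le, mul_pow]; ring
  have hbr : b * r < 1 := by nlinarith
  have hKb := (hasSum_pow_one (v := b * r) (by rwa [Real.norm_of_nonneg (by positivity)])).mul_left 4
  have hsum1 : Summable fun n : ℕ => 4 * n * (b * r) ^ n * (Real.exp (n * S) * Real.cosh (n * m)) :=
    Summable.of_nonneg_of_le (fun n => mul_nonneg (by positivity) (mul_nonneg (Real.exp_pos _).le (Real.cosh_pos _).le)) hterm hK.summable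
  have hsumK : Summable fun n : ℕ => ‖kc n * (b : ℂ) ^ n‖ * r ^ n * (Real.exp (n * S) * Real.cosh (n * m) - 1) := by
    simp only [hKn]; exact hsum1.sub hKb.summable
  have hG : PS (fun n => kc n * (b : ℂ) ^ n) (fun z => 4 * (b * z) / (1 + b * z) ^ 2) := fun z hz => by
    have : ‖(b : ℂ) * z‖ < 1 := by
      rw [norm_mul, Complex.norm_real, Real.norm_of_nonneg hb0.le]; nlinarith [norm_nonneg z]
    exact (hasSum_kc this).of_eq (fun n => by rw [mul_pow]; ring) rfl
  have hD := hA.re.sub hG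
  have hMaj := Maj.hasSum h0.le hmaj hsumK (f := fun z => 1 / 2 * (F z + (starRingEnd ℂ) (F ((starRingEnd ℂ) z))) - 4 * (b * z) / (1 + b * z) ^ 2)
    (fun z hz => by
      have hz1 : ‖z‖ < 1 := by linarith
      have a1 := h.hasSum_F hF hz1 (hB z hz)
      have a2 := h.hasSum_F_conj hF hz1 (hB _ (by simpa using hz))
      refine (((a1.add a2).mul_left (1 / 2)).sub (hG z hz1)).of_eq (fun n => ?_) rfl
      have e : Complex.exp (n * l z) = Complex.exp (n * (1 / 2 * (l z + (starRingEnd ℂ) (l ((starRingEnd ℂ) z)))))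
          * Complex.exp (n * (1 / 2 * (l z - (starRingEnd ℂ) (l ((starRingEnd ℂ) z))))) := by
        rw [← Complex.exp_add]; congr 1; ring
      have e' : Complex.exp (n * (starRingEnd ℂ) (l ((starRingEnd ℂ) z))) = Complex.exp (n * (1 / 2 * (l z + (starRingEnd ℂ) (l ((starRingEnd ℂ) z)))))
          * Complex.exp (-(n * (1 / 2 * (l z - (starRingEnd ℂ) (l ((starRingEnd ℂ) z)))))) := by
        rw [← Complex.exp_add]; congr 1; ring
      rw [e, e', Complex.cosh]
      ring)
  have h6 := hD.tsum_le_of_maj h0 h1 hMaj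
  have h7 := hD.summable h0.le h1
  simp only [hKn] at h6
  rw [hsum1.tsum_sub hKb.summable] at h6
  have h8 := (hsum1.tsum_le_tsum hterm hK.summable).trans_eq hK.tsum_eq
  have h9 : ∀ n : ℕ, (4 * n * b ^ n + ‖((A n).re : ℂ) - kc n * (b : ℂ) ^ n‖) * r ^ n =
      4 * (n * (b * r) ^ n) + ‖((A n).re : ℂ) - kc n * (b : ℂ) ^ n‖ * r ^ n := fun n => by rw [mul_pow]; ring
  simp only [h9]
  refine ⟨hKb.summable.add h7, ?_⟩
  rw [hKb.summable.tsum_add h7]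
  have e4 : 4 * r / (1 - r) ^ 2 = 4 * (r / (1 - r) ^ 2) := by ring
  rw [e4]
  linarith

end

/-! ### Imaginary parts of the coefficients near the identity -/

section
variable {B l F : ℂ → ℂ} {c A : ℕ → ℂ} {η r ρ : ℝ}

/-- The function `∑ n kc n (b z) ^ n`, that is `w K' w` at `w = b z` for the Koebe function `K w = 4 w / (1 + w) ^ 2`;
it is the factor of the first-order variation of `K (b z exp l)` in `l`. -/
noncomputable def G0 (b : ℝ) (z : ℂ) : ℂ := ∑' n : ℕ, (n * kc n * (b : ℂ) ^ n) * z ^ n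

theorem PS_G0 {b : ℝ} (hb0 : 0 < b) (hb1 : b ≤ 1) : PS (fun n : ℕ => n * kc n * (b : ℂ) ^ n) (G0 b) := fun z hz => by
  have hx : ‖b * ‖z‖‖ < 1 := by
    rw [Real.norm_of_nonneg (by positivity)]; nlinarith [norm_nonneg z]
  have hs := ((hasSum_pow_two hx).mul_left 4).summable
  refine (Summable.of_norm (hs.congr fun n => ?_)).hasSum
  rw [norm_mul, norm_mul, norm_mul, norm_kc, norm_pow, norm_pow, Complex.norm_natCast, Complex.norm_real,
    Real.norm_of_nonneg hb0.le, mul_pow]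
  ring

/-- Pointwise bound for the antisymmetric part of `F` under reflection, which carries the imaginary parts of its
coefficients: the first-order term in `l`, plus the remainder of `exp` in the Koebe series. -/
theorem BE.im_pointwise (h : BE B l c η) (hF : ∀ z, ‖z‖ < 1 → F z = 4 * B z / (1 + B z) ^ 2) {D ν u q : ℝ}
    (h1 : ρ < 1) (hl : ∀ z, ‖z‖ = ρ → ‖l z‖ ≤ ν) (hB : ∀ z, ‖z‖ = ρ → ‖B z‖ < 1)
    (hd : ∀ z, ‖z‖ = ρ → ‖1 / 2 * (l z - starRingEnd ℂ (l (starRingEnd ℂ z)))‖ ≤ D)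
    (hu : Real.exp (-η) * ρ ≤ u) (hν : Real.exp ν ≤ q) (hq : 1 ≤ q) (huq : u * q < 1) {z : ℂ} (hz : ‖z‖ = ρ) :
    ‖1 / 2 * (F z - starRingEnd ℂ (F (starRingEnd ℂ z)))‖ ≤
      D * (‖G0 (Real.exp (-η)) z‖ + 4 * (u * q * (1 + u * q) / (1 - u * q) ^ 3 - u * (1 + u) / (1 - u) ^ 3)) := by
  set b := Real.exp (-η) with hb
  have hb0 : 0 < b := Real.exp_pos _
  have hb1 : b ≤ 1 := Real.exp_le_one_iff.2 (by linarith [h.eta_nonneg])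
  have hz1 : ‖z‖ < 1 := by linarith
  have hzc : ‖(starRingEnd ℂ) z‖ = ρ := by rw [RCLike.norm_conj, hz]
  have hρ0 : 0 ≤ ρ := hz ▸ norm_nonneg z
  have hu0 : 0 ≤ u := le_trans (by positivity) hu
  have hu1 : u < 1 := by nlinarith
  set d := 1 / 2 * (l z - starRingEnd ℂ (l (starRingEnd ℂ z))) with hddef
  have a1 := h.hasSum_F hF hz1 (hB z hz)
  have a2 := h.hasSum_F_conj hF hz1 (hB _ hzc)
  have a3 := ((a1.sub a2).mul_left (1 / 2)).sub ((PS_G0 hb0 hb1 z hz1).mul_left d)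
  have hν0 : 0 ≤ ν := (norm_nonneg _).trans (hl z hz)
  have bnd : ∀ n : ℕ, ‖1 / 2 * (kc n * (b : ℂ) ^ n * z ^ n * Complex.exp (n * l z) - kc n * (b : ℂ) ^ n * z ^ n * Complex.exp (n * starRingEnd ℂ (l (starRingEnd ℂ z))))
      - d * (n * kc n * (b : ℂ) ^ n * z ^ n)‖ ≤ D * (4 * ((n : ℝ) ^ 2 * (u * q) ^ n - (n : ℝ) ^ 2 * u ^ n)) := fun n => by
    have e : 1 / 2 * (kc n * (b : ℂ) ^ n * z ^ n * Complex.exp (n * l z) - kc n * (b : ℂ) ^ n * z ^ n * Complex.exp (n * starRingEnd ℂ (l (starRingEnd ℂ z))))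
      - d * (n * kc n * (b : ℂ) ^ n * z ^ n) = 1 / 2 * (kc n * (b * z) ^ n) *
        (Complex.exp (n * l z) - Complex.exp (n * starRingEnd ℂ (l (starRingEnd ℂ z))) - (n * l z - n * starRingEnd ℂ (l (starRingEnd ℂ z)))) := by
      rw [hddef, mul_pow]; ring
    have hx : ‖(n : ℂ) * l z‖ ≤ n * ν := by
      rw [norm_mul, Complex.norm_natCast]; gcongr; exact hl z hz
    have hy : ‖(n : ℂ) * starRingEnd ℂ (l (starRingEnd ℂ z))‖ ≤ n * ν := by
      rw [norm_mul, Complex.norm_natCast, RCLike.norm_conj]; gcongr; exact hl _ hzc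
    have h3 := norm_exp_sub_exp_sub_le hx hy
    have e2 : (n : ℂ) * l z - n * starRingEnd ℂ (l (starRingEnd ℂ z)) = 2 * n * d := by rw [hddef]; ring
    rw [e, e2]
    rw [e2] at h3
    have e3 : ‖(2 : ℂ) * n * d‖ ≤ 2 * n * D := by
      rw [norm_mul, norm_mul, Complex.norm_natCast]; norm_num; gcongr; exact hd z hz
    have e4 : Real.exp (n * ν) ≤ q ^ n := by rw [Real.exp_nat_mul]; gcongr
    have e5 : ‖(1 : ℂ) / 2 * (kc n * (b * z) ^ n)‖ ≤ 2 * n * u ^ n := by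
      rw [norm_mul, norm_mul, norm_kc, norm_pow, norm_mul, Complex.norm_real, Real.norm_of_nonneg hb0.le, hz]
      have : (b * ρ) ^ n ≤ u ^ n := pow_le_pow_left₀ (by positivity) hu n
      norm_num
      nlinarith [(Nat.cast_nonneg n : (0 : ℝ) ≤ n)]
    have hq1 : 0 ≤ q ^ n - 1 := by linarith [one_le_pow₀ hq (n := n)]
    calc _ ≤ 2 * n * u ^ n * ((q ^ n - 1) * (2 * n * D)) := by
            rw [norm_mul]
            refine mul_le_mul e5 (h3.trans ?_) (norm_nonneg _) (by positivity)
            exact mul_le_mul (by linarith) e3 (norm_nonneg _) hq1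
      _ = _ := by rw [mul_pow]; ring
  have s1 := hasSum_pow_two (v := u * q) (by rwa [Real.norm_of_nonneg (by positivity)])
  have s2 := hasSum_pow_two (v := u) (by rwa [Real.norm_of_nonneg hu0])
  have s3 := ((s1.sub s2).mul_left 4).mul_left D
  have h4 := tsum_of_norm_bounded s3 bnd
  rw [a3.tsum_eq] at h4
  have h5 : ‖d * G0 b z‖ ≤ D * ‖G0 b z‖ := by
    rw [norm_mul]; gcongr; exact hd z hz
  have h6 := norm_add_le (1 / 2 * (F z - starRingEnd ℂ (F (starRingEnd ℂ z))) - d * G0 b z) (d * G0 b z)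
  rw [sub_add_cancel] at h6
  linarith

/-- Mean-square bound for the imaginary parts of the coefficients of `F`. The constants come from
`(g + E) ^ 2 ≤ (7 / 5) g ^ 2 + (7 / 2) E ^ 2`. -/
theorem BE.im_bessel (h : BE B l c η) (hA : PS A F) {b D E S : ℝ} (hb0 : 0 < b) (hb1 : b ≤ 1)
    (h0 : 0 ≤ ρ) (h1 : ρ < 1) (hD : 0 ≤ D) (hE : 0 ≤ E)
    (hp : ∀ z, ‖z‖ = ρ → ‖1 / 2 * (F z - starRingEnd ℂ (F (starRingEnd ℂ z)))‖ ≤ D * (‖G0 b z‖ + E))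
    (hS : 16 * (((b * ρ) ^ 2) * (1 + 11 * ((b * ρ) ^ 2) + 11 * ((b * ρ) ^ 2) ^ 2 + ((b * ρ) ^ 2) ^ 3) / (1 - (b * ρ) ^ 2) ^ 5) ≤ S) (N : ℕ) :
    ∑ n ∈ Finset.range N, (A n).im ^ 2 * ρ ^ (2 * n) ≤ D ^ 2 * (7 / 5 * S + 7 / 2 * E ^ 2) := by
  have hG := PS_G0 hb0 hb1
  have h2 := hA.im.bessel h0 h1 N
  have hcG := continuous_circle hG h0 h1
  have hcY := continuous_circle hA.im h0 h1
  have h3 : ∫ θ in (-Real.pi)..Real.pi, ‖1 / 2 * (F (ρ * Complex.exp (θ * I)) - starRingEnd ℂ (F (starRingEnd ℂ (ρ * Complex.exp (θ * I)))))‖ ^ 2 ≤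
      ∫ θ in (-Real.pi)..Real.pi, D ^ 2 * (7 / 5 * ‖G0 b (ρ * Complex.exp (θ * I))‖ ^ 2 + 7 / 2 * E ^ 2) := by
    refine intervalIntegral.integral_mono_on (by linarith [Real.pi_pos]) ?_ ?_ fun θ _ => ?_
    · exact (hcY.norm.pow 2).intervalIntegrable _ _
    · exact (continuous_const.mul ((continuous_const.mul (hcG.norm.pow 2)).add continuous_const)).intervalIntegrable _ _
    · have := hp (ρ * Complex.exp (θ * I)) (PS.norm_circle h0 θ)
      set g := ‖G0 b (ρ * Complex.exp (θ * I))‖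
      have hg : 0 ≤ g := norm_nonneg _
      calc _ ≤ (D * (g + E)) ^ 2 := by gcongr
        _ = D ^ 2 * (g + E) ^ 2 := by ring
        _ ≤ _ := by gcongr; nlinarith [sq_nonneg (2 * g - 5 * E)]
  have hi : IntervalIntegrable (fun θ : ℝ => 7 / 5 * ‖G0 b (ρ * Complex.exp (θ * I))‖ ^ 2) volume (-Real.pi) Real.pi :=
    (continuous_const.mul (hcG.norm.pow 2)).intervalIntegrable _ _
  rw [intervalIntegral.integral_const_mul, intervalIntegral.integral_add hi
    (continuous_const.intervalIntegrable _ _), intervalIntegral.integral_const_mul, hG.parseval h0 h1, intervalIntegral.integral_const] at h3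
  have hx0 : 0 ≤ (b * ρ) ^ 2 := by positivity
  have hx1 : (b * ρ) ^ 2 < 1 := by
    have : b * ρ < 1 := by nlinarith
    have : 0 ≤ b * ρ := by positivity
    nlinarith
  have h4 := ((hasSum_pow_four (v := (b * ρ) ^ 2) (by rwa [Real.norm_of_nonneg hx0])).mul_left 16)
  have h5 : ∀ n : ℕ, ‖(n : ℂ) * kc n * (b : ℂ) ^ n‖ ^ 2 * ρ ^ (2 * n) = 16 * ((n : ℝ) ^ 4 * ((b * ρ) ^ 2) ^ n) := fun n => by
    rw [norm_mul, norm_mul, norm_kc, norm_pow, Complex.norm_natCast, Complex.norm_real, Real.norm_of_nonneg hb0.le, ← pow_mul, mul_pow,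
      mul_pow, mul_pow, ← pow_mul, mul_comm n 2]
    ring
  simp only [h5, h4.tsum_eq] at h3
  have h6 : ∀ n : ℕ, ‖((A n).im : ℂ) * I‖ ^ 2 = (A n).im ^ 2 := fun n => by simp
  simp only [h6] at h2
  have h7 := h2.trans h3
  simp only [smul_eq_mul] at h7
  have hpi := Real.pi_pos
  have h8 : 2 * Real.pi * ∑ n ∈ Finset.range N, (A n).im ^ 2 * ρ ^ (2 * n) ≤ 2 * Real.pi * (D ^ 2 * (7 / 5 * S + 7 / 2 * E ^ 2)) := by
    refine h7.trans ?_
    have : D ^ 2 * (7 / 5 * (2 * Real.pi * S)) ≥ D ^ 2 * (7 / 5 * (2 * Real.pi * (16 * (((b * ρ) ^ 2) * (1 + 11 * ((b * ρ) ^ 2) + 11 * ((b * ρ) ^ 2) ^ 2 + ((b * ρ) ^ 2) ^ 3) / (1 - (b * ρ) ^ 2) ^ 5)))) := by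
      gcongr
    linarith
  exact le_of_mul_le_mul_left h8 (by positivity)

end

/-! ### The coefficient bound near the identity -/

/-- Near a real number of modulus `X` the imaginary part of `a` contributes only quadratically to `‖a‖`. -/
theorem norm_le_add_im_sq (a : ℂ) {t X : ℝ} (hX : 0 < X) (ht : |t| = X) :
    ‖a‖ ≤ X + ‖(a.re : ℂ) - t‖ + a.im ^ 2 / (2 * X) := by
  have h1 : ‖(t : ℂ) + a.im * I‖ ≤ X + a.im ^ 2 / (2 * X) := by
    have h2 : ‖(t : ℂ) + a.im * I‖ ^ 2 = X ^ 2 + a.im ^ 2 := by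
      rw [← Complex.normSq_eq_norm_sq, Complex.normSq_add_mul_I, ← ht, sq_abs]
    have h3 : (X + a.im ^ 2 / (2 * X)) ^ 2 = X ^ 2 + a.im ^ 2 + (a.im ^ 2 / (2 * X)) ^ 2 := by
      field_simp; ring
    refine le_of_sq_le_sq ?_ (by positivity)
    rw [h2, h3]; linarith [sq_nonneg (a.im ^ 2 / (2 * X))]
  have h4 := norm_add_le ((a.re : ℂ) - t) (t + a.im * I)
  rw [show (a.re : ℂ) - t + (t + a.im * I) = a by rw [← add_assoc, sub_add_cancel]; exact Complex.re_add_im a] at h4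
  linarith

theorem le_of_sq_le_of_le {x K a : ℝ} (h : x ^ 2 ≤ K) (hK : K ≤ a ^ 2) (ha : 0 ≤ a) : x ≤ a :=
  le_of_sq_le_sq (h.trans hK) ha

theorem exp_le_quadratic {x a : ℝ} (h0 : 0 ≤ x) (h : x ≤ a) (ha : a ≤ 1) : Real.exp x ≤ 1 + a + a ^ 2 := by
  have := (abs_le.1 (Real.abs_exp_sub_one_sub_id_le (x := x) (by rw [abs_of_nonneg h0]; linarith))).2
  nlinarith

section
variable {B l F : ℂ → ℂ} {c A : ℕ → ℂ} {η r ρ : ℝ}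

theorem BE.coeff_zero (h : BE B l c η) (hA : PS A F) (hF : ∀ z, ‖z‖ < 1 → F z = 4 * B z / (1 + B z) ^ 2) : A 0 = 0 := by
  rw [← hA.zero, hF 0 (by simp), h.eq 0 (by simp)]; simp

/-- The normalisation of `B` makes `A 1 = 4 exp (-η)` real. -/
theorem BE.coeff_one_im (h : BE B l c η) (hA : PS A F) (hF : ∀ z, ‖z‖ < 1 → F z = 4 * B z / (1 + B z) ^ 2) : (A 1).im = 0 := by
  have h0 : (0 : ℂ) ∈ ball (0 : ℂ) 1 := by simp
  have hB0 : B 0 = 0 := by rw [h.eq 0 h0]; simp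
  have hl0 : l 0 = 0 := by rw [h.ps.zero, h.c0]
  have h1 : DifferentiableOn ℂ (fun z => -(η : ℂ) + l z) (ball 0 1) := h.ps.differentiableOn.const_add _
  have h2 := hasDerivAt_mul_exp h1 h.eq h0
  have h3 : HasDerivAt F (4 * Complex.exp (-η)) 0 := by
    have h4 := (h2.const_mul 4).div ((h2.const_add 1).pow 2) (by simp [hB0])
    refine (h4.congr_deriv ?_).congr_of_eventuallyEq ?_
    · simp [hB0, hl0]
    · filter_upwards [isOpen_ball.mem_nhds h0] with z hz using hF z (by simpa using hz)
  have h5 := hA.deriv.zero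
  rw [h3.deriv] at h5
  have h6 : A 1 = ((4 * Real.exp (-η) : ℝ) : ℂ) := by
    simp at h5; rw [← h5]; push_cast; rfl
  rw [h6, Complex.ofReal_im]

set_option maxHeartbeats 1600000 in
/-- The coefficient estimate when `B` is close to the identity. The real parts of the coefficients yield a gain of order
`η r`, which outweighs the quadratic contributions of `m` and of the imaginary parts, of the same order. The latter
are summed on the circle of radius `ρ` with `b ρ ^ 2 = r`, which turns `r ^ n / b ^ n` into `ρ ^ (2 n)`; since `A 1` is
real only the indices `n ≥ 2` contribute, whence the factor `1 / 16`. -/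
theorem BE.key_small (h : BE B l c η) (hA : PS A F) (hF : ∀ z, ‖z‖ < 1 → F z = 4 * B z / (1 + B z) ^ 2)
    (hη : η ≤ 0.0206) (h0 : 0 < r) (h1 : r ≤ 0.10103) : ∑' n, ‖A n‖ * r ^ n ≤ 4 * r / (1 - r) ^ 2 := by
  have hη0 := h.eta_nonneg
  set b := Real.exp (-η) with hb
  have hb0 : 0 < b := Real.exp_pos _
  have hb1 : b ≤ 1 := Real.exp_le_one_iff.2 (by linarith)
  have hb2 : 0.9794 ≤ b := by linarith [Real.add_one_le_exp (-η)]
  obtain ⟨ρ, hρ⟩ : ∃ ρ, ρ = Real.sqrt (r / b) := ⟨_, rfl⟩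
  have hρ0 : 0 ≤ ρ := hρ ▸ Real.sqrt_nonneg _
  have hρ2 : ρ ^ 2 = r / b := by rw [hρ, Real.sq_sqrt (by positivity)]
  have hbρ : b * ρ ^ 2 = r := by rw [hρ2]; field_simp
  have hρr : ρ ^ 2 ≤ 1.02104 * r := by nlinarith [sq_nonneg ρ]
  have hρ3 : ρ ^ 2 ≤ 0.1032 := by linarith
  have hρ1 : ρ ≤ 0.33 := le_of_sq_le_of_le hρ3 (by norm_num) (by norm_num)
  have hbρ2 : (b * ρ) ^ 2 ≤ 0.10103 := by nlinarith
  have hbρ1 : b * ρ ≤ 0.31786 := le_of_sq_le_of_le hbρ2 (by norm_num) (by norm_num)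
  -- a bound for `l` on the circle of radius `ρ`
  obtain ⟨ν, hν⟩ : ∃ ν, ν = ∑' n, ‖c n‖ * ρ ^ n := ⟨_, rfl⟩
  have hν0 : 0 ≤ ν := hν ▸ tsum_nonneg fun n => by positivity
  have hν2 : ν ^ 2 ≤ 2 * η * (1.05754 * ρ ^ 2) := by
    rw [hν]
    refine (tsum_sq_le h.ps h.c0 h.sum_le hρ0 (by linarith)).trans (mul_le_mul_of_nonneg_left ?_ (by linarith))
    have : ρ ^ 4 / (2 * (1 - ρ ^ 2)) ≤ 0.05754 * ρ ^ 2 := by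
      rw [div_le_iff₀ (by linarith)]; nlinarith [sq_nonneg ρ]
    linarith
  have hν3 : ν ^ 2 ≤ 2.1596 * (η * r) := by nlinarith
  have hν1 : ν ≤ 0.0671 := by
    have : 2 * η * (1.05754 * ρ ^ 2) ≤ 2 * 0.0206 * (1.05754 * 0.1032) := by gcongr
    exact le_of_sq_le_of_le (hν2.trans this) (by norm_num) (by norm_num)
  have hq : Real.exp ν ≤ 1.0717 := (exp_le_quadratic hν0 hν1 (by norm_num)).trans (by norm_num)
  have hmajρ : Maj ρ ν l := (h.ps.maj hρ0 (by linarith)).mono hν.ge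
  have hBρ : ∀ z, ‖z‖ ≤ ρ → ‖B z‖ < 1 := fun z hz => by
    refine ((h.maj_B hρ0 (by linarith) hmajρ).norm_le hz).trans_lt ?_
    have : Real.exp (ν - η) ≤ Real.exp ν := Real.exp_le_exp.2 (by linarith)
    nlinarith [Real.exp_pos (ν - η)]
  have hl : ∀ z, ‖z‖ = ρ → ‖l z‖ ≤ ν := fun z hz => hmajρ.norm_le hz.le
  have hd : ∀ z, ‖z‖ = ρ → ‖1 / 2 * (l z - starRingEnd ℂ (l (starRingEnd ℂ z)))‖ ≤ ν := fun z hz => by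
    have h3 := norm_sub_le (l z) (starRingEnd ℂ (l (starRingEnd ℂ z)))
    rw [RCLike.norm_conj] at h3
    have := hl z hz
    have := hl (starRingEnd ℂ z) (by rw [RCLike.norm_conj, hz])
    rw [norm_mul]; norm_num; linarith
  have hp : ∀ z, ‖z‖ = ρ → ‖1 / 2 * (F z - starRingEnd ℂ (F (starRingEnd ℂ z)))‖ ≤ ν * (‖G0 b z‖ + 1.096) := fun z hz => by
    refine (h.im_pointwise hF (by linarith) hl (fun z hz => hBρ z hz.le) hd hbρ1 hq (by norm_num) (by norm_num) hz).trans ?_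
    gcongr
    norm_num
  have hbes := h.im_bessel hA hb0 hb1 hρ0 (by linarith) hν0 (by norm_num) hp (S := 6.125) (by
    set x := (b * ρ) ^ 2
    have hx0 : 0 ≤ x := sq_nonneg _
    calc 16 * (x * (1 + 11 * x + 11 * x ^ 2 + x ^ 3) / (1 - x) ^ 5) ≤
        16 * (0.10103 * (1 + 11 * 0.10103 + 11 * 0.10103 ^ 2 + 0.10103 ^ 3) / (1 - 0.10103) ^ 5) := by gcongr
      _ ≤ _ := by norm_num)
  have hys : Summable fun n => (A n).im ^ 2 * ρ ^ (2 * n) :=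
    summable_of_sum_range_le (fun n => by positivity) hbes
  have hyt := Real.tsum_le_of_sum_range_le (fun n => by positivity) hbes
  -- the real parts
  obtain ⟨m, hm⟩ : ∃ m, m = ∑' n, ‖c n‖ * r ^ n := ⟨_, rfl⟩
  have hm0 : 0 ≤ m := hm ▸ tsum_nonneg fun n => by positivity
  have hm2 : m ^ 2 ≤ 0.20312 * (η * r) := by
    have := h.maj_l_sq h0.le h1
    rw [← hm] at this; linarith
  have hm1 : m ≤ 0.0206 := by
    have : η * r ≤ 0.0206 * 0.10103 := by gcongr
    refine le_of_sq_le_of_le (hm2.trans (mul_le_mul_of_nonneg_left this (by norm_num))) (by norm_num) (by norm_num)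
  have hem : Real.exp m ≤ 1.02103 := (exp_le_quadratic hm0 hm1 (by norm_num)).trans (by norm_num)
  have hv : r * Real.exp m ≤ 0.10316 := by
    calc r * Real.exp m ≤ 0.10103 * 1.02103 := by gcongr
      _ ≤ _ := by norm_num
  have hmim : ∑' n, ‖((c n).im : ℂ) * I‖ * r ^ n ≤ m := by
    rw [hm]
    refine (h.ps.im.summable h0.le (by linarith)).tsum_le_tsum (fun n => ?_) (h.ps.summable h0.le (by linarith))
    gcongr
    simpa using Complex.abs_im_le_norm (c n)
  have hrρ : r ≤ ρ := by
    refine le_of_sq_le_sq ?_ hρ0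
    rw [hρ2, le_div_iff₀ hb0]
    nlinarith [mul_le_mul_of_nonneg_left hb1 (sq_nonneg r)]
  obtain ⟨hs1, hs2⟩ := h.re_part hA hF h0 (by linarith) hm0 (fun z hz => hBρ z (hz.trans hrρ)) (h.sum_re_le hη h0.le h1) hmim
    (by linarith) (by linarith)
  rw [← hb] at hs1 hs2
  have hterm : ∀ n, ‖A n‖ * r ^ n ≤ (4 * n * b ^ n + ‖((A n).re : ℂ) - kc n * (b : ℂ) ^ n‖) * r ^ n + 1 / 16 * ((A n).im ^ 2 * ρ ^ (2 * n)) := fun n => by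
    rcases Nat.eq_zero_or_pos n with rfl | hn
    · simp [h.coeff_zero hA hF]
    have hX : 0 < 4 * n * b ^ n := by positivity
    have h3 := norm_le_add_im_sq (A n) (t := -4 * n * (-1) ^ n * b ^ n) hX (by
      rw [abs_mul, abs_mul, abs_mul, abs_pow, abs_of_pos (show 0 < b ^ n by positivity)]; simp)
    have e1 : ((-4 * n * (-1) ^ n * b ^ n : ℝ) : ℂ) = kc n * (b : ℂ) ^ n := by rw [kc]; push_cast; ring
    rw [e1] at h3
    have h4 : (A n).im ^ 2 / (2 * (4 * n * b ^ n)) * r ^ n ≤ 1 / 16 * ((A n).im ^ 2 * ρ ^ (2 * n)) := by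
      have e2 : r ^ n = b ^ n * ρ ^ (2 * n) := by rw [pow_mul, ← mul_pow, hbρ]
      have e3 : (A n).im ^ 2 / (2 * (4 * n * b ^ n)) * r ^ n = (A n).im ^ 2 * ρ ^ (2 * n) * (1 / (8 * n)) := by
        rw [e2]; field_simp; ring
      rw [e3, mul_comm (1 / 16 : ℝ)]
      rcases Nat.lt_or_ge 1 n with hn2 | hn2
      · have : (2 : ℝ) ≤ n := by exact_mod_cast hn2
        gcongr
        linarith
      · have : n = 1 := by omega
        subst this
        simp [h.coeff_one_im hA hF]
    have h5 : 0 ≤ r ^ n := by positivity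
    have h6 := mul_le_mul_of_nonneg_right h3 h5
    rw [add_mul] at h6
    linarith
  have h6 := (hA.summable h0.le (by linarith)).tsum_le_tsum hterm (hs1.add (hys.mul_left _))
  rw [hs1.tsum_add (hys.mul_left _), tsum_mul_left] at h6
  have h7 : (r * Real.exp m) * (1 + 4 * (r * Real.exp m) + (r * Real.exp m) ^ 2) / (1 - r * Real.exp m) ^ 4 ≤ 0.22697 := by
    set v := r * Real.exp m
    have hv0 : 0 ≤ v := by positivity
    calc v * (1 + 4 * v + v ^ 2) / (1 - v) ^ 4 ≤ 0.10316 * (1 + 4 * 0.10316 + 0.10316 ^ 2) / (1 - 0.10316) ^ 4 := by gcongr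
      _ ≤ _ := by norm_num
  have h8 : Real.exp (0.53 * η - η) ≤ 1 - 0.4654 * η := by
    have := (abs_le.1 (Real.abs_exp_sub_one_sub_id_le (x := 0.53 * η - η) (by rw [abs_le]; constructor <;> linarith))).2
    nlinarith
  have h9 : 4 * r * (1 - Real.exp (0.53 * η - η)) ≥ 4 * r * (0.4654 * η) := by
    have : 0.4654 * η ≤ 1 - Real.exp (0.53 * η - η) := by linarith
    gcongr
  have h10 : 2 * m ^ 2 * ((r * Real.exp m) * (1 + 4 * (r * Real.exp m) + (r * Real.exp m) ^ 2) / (1 - r * Real.exp m) ^ 4) ≤ 2 * (0.20312 * (η * r)) * 0.22697 := by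
    gcongr
  have h11 : 0 ≤ η * r := by positivity
  have h12 : 1 / 16 * (ν ^ 2 * (7 / 5 * 6.125 + 7 / 2 * 1.096 ^ 2)) ≤ 1 / 16 * (2.1596 * (η * r) * (7 / 5 * 6.125 + 7 / 2 * 1.096 ^ 2)) := by
    gcongr
  have h13 := mul_le_mul_of_nonneg_left hyt (show (0 : ℝ) ≤ 1 / 16 by norm_num)
  linarith

end

/-! ### The majorant bound for functions omitting `1` -/

theorem PS.rotate {c : ℕ → ℂ} {f : ℂ → ℂ} (h : PS c f) {u : ℂ} (hu : ‖u‖ = 1) :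
    PS (fun n => c n * u ^ n) (fun z => f (u * z)) := fun z hz =>
  (h (u * z) (by simpa [hu] using hz)).of_eq (fun n => by rw [mul_pow, mul_assoc]) rfl

/-- The sharp majorant bound for normalised univalent functions omitting the value `1`: the
extremal function is the Koebe-type map `4z/(1+z)^2`. -/
theorem tsum_le_koebe {F : ℂ → ℂ} {A : ℕ → ℂ} {r : ℝ} (hA : PS A F) (hinj : InjOn F (ball 0 1)) (hF0 : F 0 = 0)
    (hF1 : ∀ z ∈ ball (0 : ℂ) 1, F z ≠ 1) (h0 : 0 < r) (h1 : r ≤ 0.10103) :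
    ∑' n, ‖A n‖ * r ^ n ≤ 4 * r / (1 - r) ^ 2 := by
  have hm0 : (0 : ℂ) ∈ ball (0 : ℂ) 1 := by simp
  obtain ⟨L, hLd, hL⟩ := exists_log (f := fun z => 1 - F z) (hA.differentiableOn.const_sub 1)
    (fun z hz => sub_ne_zero.2 (hF1 z hz).symm)
  have hL0 : Complex.exp (L 0) = 1 := by rw [← hL 0 hm0, hF0, sub_zero]
  -- the branch of `√(1 - F)` equal to `1` at the origin
  obtain ⟨φ, hφ⟩ : ∃ φ : ℂ → ℂ, φ = fun z => Complex.exp ((L z - L 0) / 2) := ⟨_, rfl⟩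
  have hφd : DifferentiableOn ℂ φ (ball 0 1) := by
    rw [hφ]; exact ((hLd.sub_const _).div_const _).cexp
  have hφ2 : ∀ z ∈ ball (0 : ℂ) 1, φ z ^ 2 = 1 - F z := fun z hz => by
    rw [hL z hz, hφ]
    simp only
    rw [← Complex.exp_nat_mul, show ((2 : ℕ) : ℂ) * ((L z - L 0) / 2) = L z - L 0 by push_cast; ring, Complex.exp_sub, hL0, div_one]
  have hφ0 : φ 0 = 1 := by rw [hφ]; simp
  have hφn : ∀ z, φ z ≠ 0 := fun z => by rw [hφ]; exact Complex.exp_ne_zero _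
  have hφi : ∀ z ∈ ball (0 : ℂ) 1, ∀ ζ ∈ ball (0 : ℂ) 1, φ z ^ 2 = φ ζ ^ 2 → z = ζ := fun z hz ζ hζ e => by
    rw [hφ2 z hz, hφ2 ζ hζ] at e
    exact hinj hz hζ (by linear_combination -e)
  have hφ1 : ∀ z ∈ ball (0 : ℂ) 1, 1 + φ z ≠ 0 := fun z hz e => by
    have e1 : φ z = -1 := by linear_combination e
    have := hφi z hz 0 hm0 (by rw [e1, hφ0]; norm_num)
    rw [this, hφ0] at e1
    norm_num at e1
  obtain ⟨B, hB⟩ : ∃ B : ℂ → ℂ, B = fun z => (1 - φ z) / (1 + φ z) := ⟨_, rfl⟩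
  have hBd : DifferentiableOn ℂ B (ball 0 1) := by
    rw [hB]; exact (hφd.const_sub 1).div (hφd.const_add 1) hφ1
  have hB0 : B 0 = 0 := by rw [hB]; simp [hφ0]
  have hBi : InjOn B (ball 0 1) := fun z hz ζ hζ e => by
    rw [hB] at e
    simp only at e
    rw [div_eq_div_iff (hφ1 z hz) (hφ1 ζ hζ)] at e
    refine hφi z hz ζ hζ ?_
    rw [show φ z = φ ζ by linear_combination -e / 2]
  have hBp : ∀ z ∈ ball (0 : ℂ) 1, ∀ ζ ∈ ball (0 : ℂ) 1, B z * B ζ ≠ 1 := fun z hz ζ hζ e => by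
    rw [hB] at e
    simp only at e
    rw [div_mul_div_comm, div_eq_one_iff_eq (mul_ne_zero (hφ1 z hz) (hφ1 ζ hζ))] at e
    have e1 : φ z = -φ ζ := by linear_combination -e / 2
    have e2 := hφi z hz ζ hζ (by rw [e1]; ring)
    rw [e2] at e1
    exact hφn ζ (by linear_combination e1 / 2)
  have hBF : ∀ z ∈ ball (0 : ℂ) 1, F z = 4 * B z / (1 + B z) ^ 2 := fun z hz => by
    have e := hφ1 z hz
    have e1 : 1 + B z = 2 / (1 + φ z) := by rw [hB]; field_simp; ring
    have e2 : F z = 1 - φ z ^ 2 := by rw [hφ2 z hz]; ring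
    rw [e1, e2, hB]
    field_simp
    ring
  obtain ⟨m, hmd, hm⟩ := exists_eq_mul_exp hBd hBi hB0
  -- rotate the disc so that `B` has a positive derivative at the origin
  obtain ⟨u, hu⟩ : ∃ u : ℂ, u = Complex.exp (((-(m 0).im : ℝ) : ℂ) * I) := ⟨_, rfl⟩
  have hu1 : ‖u‖ = 1 := by rw [hu, Complex.norm_exp_ofReal_mul_I]
  have hu0 : u ≠ 0 := by rw [hu]; exact Complex.exp_ne_zero _
  have hub : ∀ z ∈ ball (0 : ℂ) 1, u * z ∈ ball (0 : ℂ) 1 := fun z hz => by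
    rw [mem_ball_zero_iff] at hz ⊢; rw [norm_mul, hu1, one_mul]; exact hz
  have hud : DifferentiableOn ℂ (fun z => u * z) (ball 0 1) := differentiableOn_id.const_mul u
  have hld : DifferentiableOn ℂ (fun z => m (u * z) - m 0) (ball 0 1) := (hmd.comp hud hub).sub_const _
  obtain ⟨c, hc⟩ := exists_PS hld
  have hBE : BE (fun z => B (u * z)) (fun z => m (u * z) - m 0) c (-(m 0).re) := by
    refine ⟨hBd.comp hud hub, fun z hz ζ hζ e => ?_, fun z hz ζ hζ => hBp _ (hub z hz) _ (hub ζ hζ), fun z hz => ?_, hc, ?_⟩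
    · exact mul_left_cancel₀ hu0 (hBi (hub z hz) (hub ζ hζ) e)
    · rw [hm _ (hub z hz), hu, mul_comm (Complex.exp _) z, mul_assoc, ← hu, hu, ← Complex.exp_add]
      congr 2
      have := Complex.re_add_im (m 0)
      push_cast
      linear_combination -this
    · rw [← hc.zero]; simp
  have hA' := hA.rotate hu1
  have hF' : ∀ z, ‖z‖ < 1 → (fun z => F (u * z)) z = 4 * (fun z => B (u * z)) z / (1 + (fun z => B (u * z)) z) ^ 2 :=
    fun z hz => hBF _ (hub z (by simpa using hz))
  have hfin : ∑' n, ‖A n * u ^ n‖ * r ^ n ≤ 4 * r / (1 - r) ^ 2 := by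
    rcases le_total (0.0206 : ℝ) (-(m 0).re) with hη | hη
    · exact hBE.key_large hA' hF' hη h0 h1
    · exact hBE.key_small hA' hF' hη h0 h1
  simpa [hu1] using hfin

/-! ### Subordination and dilatation -/

theorem deriv_ne_zero_of_injOn_ball {ψ : ℂ → ℂ} (hd : DifferentiableOn ℂ ψ (ball 0 1)) (hi : InjOn ψ (ball 0 1))
    {a : ℂ} (ha : a ∈ ball (0 : ℂ) 1) : deriv ψ a ≠ 0 := by
  rw [mem_ball_zero_iff] at ha
  obtain ⟨s, hs⟩ : ∃ s : ℂ, s = ((1 - ‖a‖ : ℝ) : ℂ) := ⟨_, rfl⟩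
  have hsn : ‖s‖ = 1 - ‖a‖ := by rw [hs, Complex.norm_real, Real.norm_of_nonneg (by linarith)]
  have hs0 : s ≠ 0 := norm_ne_zero_iff.1 (by linarith)
  have hm : ∀ z ∈ ball (0 : ℂ) 1, a + s * z ∈ ball (0 : ℂ) 1 := fun z hz => by
    rw [mem_ball_zero_iff] at hz ⊢
    have h1 := norm_add_le a (s * z)
    rw [norm_mul, hsn] at h1
    nlinarith
  have hg : DifferentiableOn ℂ (fun z => a + s * z) (ball 0 1) := (differentiableOn_id.const_mul s).const_add a
  have h1 := deriv_ne_zero_of_injOn (X := fun z => ψ (a + s * z) - ψ a) ((hd.comp hg hm).sub_const _)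
    (fun z hz ζ hζ e => by
      have := hi (hm z hz) (hm ζ hζ) (sub_left_inj.1 e)
      exact mul_left_cancel₀ hs0 (add_left_cancel this)) (by simp)
  intro h2
  refine h1 ?_
  have h3 : HasDerivAt ψ 0 (a + s * 0) := by
    rw [mul_zero, add_zero, ← h2]
    exact (hd.differentiableAt (isOpen_ball.mem_nhds (by simpa using ha))).hasDerivAt
  have h4 : HasDerivAt (fun z : ℂ => a + s * z) s 0 := by
    simpa using ((hasDerivAt_id (0 : ℂ)).const_mul s).const_add a
  have h5 := (h3.comp (0 : ℂ) h4).sub_const (ψ a)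
  rw [zero_mul] at h5
  exact h5.deriv

theorem map_nhds_of_injOn_ball {ψ : ℂ → ℂ} (hd : DifferentiableOn ℂ ψ (ball 0 1)) (hi : InjOn ψ (ball 0 1))
    {a : ℂ} (ha : a ∈ ball (0 : ℂ) 1) : map ψ (𝓝 a) = 𝓝 (ψ a) :=
  HasStrictDerivAt.map_nhds_eq (hd.analyticAt (isOpen_ball.mem_nhds ha)).hasStrictDerivAt
    (deriv_ne_zero_of_injOn_ball hd hi ha)

theorem isOpen_image_ball {ψ : ℂ → ℂ} (hd : DifferentiableOn ℂ ψ (ball 0 1)) (hi : InjOn ψ (ball 0 1)) :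
    IsOpen (ψ '' ball 0 1) := by
  rw [isOpen_iff_mem_nhds]
  rintro _ ⟨a, ha, rfl⟩
  rw [← map_nhds_of_injOn_ball hd hi ha]
  exact image_mem_map (isOpen_ball.mem_nhds ha)

/-- The disc is not biholomorphic to the plane: the inverse map would contradict Liouville's theorem. -/
theorem image_ball_ne_univ {ψ : ℂ → ℂ} (hd : DifferentiableOn ℂ ψ (ball 0 1)) (hi : InjOn ψ (ball 0 1)) :
    ψ '' ball 0 1 ≠ univ := by
  intro hu
  have hex : ∀ y, ∃ x ∈ ball (0 : ℂ) 1, ψ x = y := fun y => by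
    have : y ∈ ψ '' ball 0 1 := hu ▸ mem_univ y
    exact this
  choose G hGm hG using hex
  have hGψ : ∀ x ∈ ball (0 : ℂ) 1, G (ψ x) = x := fun x hx => hi (hGm _) hx (hG _)
  have hc : ∀ y, ContinuousAt G y := fun y => by
    intro U hU
    have h1 : U ∩ ball 0 1 ∈ 𝓝 (G y) := inter_mem hU (isOpen_ball.mem_nhds (hGm y))
    have h2 := image_mem_map (m := ψ) h1
    rw [map_nhds_of_injOn_ball hd hi (hGm y), hG] at h2
    refine mem_map.2 (mem_of_superset h2 ?_)
    rintro _ ⟨x, hx, rfl⟩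
    rw [mem_preimage, hGψ x hx.2]
    exact hx.1
  have hdG : Differentiable ℂ G := fun y => by
    have h1 := (hd.differentiableAt (isOpen_ball.mem_nhds (hGm y))).hasDerivAt
    exact (h1.of_local_left_inverse (hc y) (deriv_ne_zero_of_injOn_ball hd hi (hGm y))
      (Eventually.of_forall hG)).differentiableAt
  have hb : Bornology.IsBounded (range G) := isBounded_ball.subset (range_subset_iff.2 hGm)
  have h1 := hdG.apply_eq_apply_of_bounded hb (0 : ℂ) 1
  have h2 := hG 0
  rw [h1, hG 1] at h2
  exact one_ne_zero h2

/-- Division of analytic functions: if `|P| ≤ k|Q|` then `P = q Q` with an analytic `q` bounded by `k`. -/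
theorem exists_eq_mul_of_norm_le {P Q : ℂ → ℂ} {k : ℝ} (hk : 0 ≤ k) (hP : DifferentiableOn ℂ P (ball 0 1))
    (hQ : DifferentiableOn ℂ Q (ball 0 1)) (h : ∀ z ∈ ball (0 : ℂ) 1, ‖P z‖ ≤ k * ‖Q z‖) :
    ∃ q : ℂ → ℂ, DifferentiableOn ℂ q (ball 0 1) ∧ (∀ z ∈ ball (0 : ℂ) 1, ‖q z‖ ≤ k) ∧
      ∀ z ∈ ball (0 : ℂ) 1, P z = q z * Q z := by
  by_cases hQ0 : ∀ z ∈ ball (0 : ℂ) 1, Q z = 0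
  · refine ⟨fun _ => 0, differentiableOn_const _, fun z _ => by simpa using hk, fun z hz => ?_⟩
    have := h z hz
    rw [hQ0 z hz, norm_zero, mul_zero] at this
    simpa using this
  have hev : ∀ z ∈ ball (0 : ℂ) 1, ∀ᶠ x in 𝓝[≠] z, Q x ≠ 0 := fun z hz => by
    by_contra hc
    refine hQ0 fun x hx => ?_
    refine (hQ.analyticOnNhd isOpen_ball).eqOn_zero_of_preconnected_of_frequently_eq_zero
      (convex_ball _ _).isPreconnected hz ?_ hx
    intro h'
    exact hc h'
  obtain ⟨f, hf⟩ : ∃ f : ℂ → ℂ, f = fun z => P z / Q z := ⟨_, rfl⟩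
  have hfd : ∀ z ∈ ball (0 : ℂ) 1, Q z ≠ 0 → DifferentiableAt ℂ f z := fun z hz hne => by
    rw [hf]
    exact (hP.differentiableAt (isOpen_ball.mem_nhds hz)).div (hQ.differentiableAt (isOpen_ball.mem_nhds hz)) hne
  have hfb : ∀ z ∈ ball (0 : ℂ) 1, ‖f z‖ ≤ k := fun z hz => by
    rw [hf]
    simp only
    rw [norm_div]
    exact div_le_of_le_mul₀ (norm_nonneg _) hk (h z hz)
  obtain ⟨q, hq⟩ : ∃ q : ℂ → ℂ, q = fun z => limUnder (𝓝[≠] z) f := ⟨_, rfl⟩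
  have hqf : ∀ z ∈ ball (0 : ℂ) 1, Q z ≠ 0 → q z = f z := fun z hz hne => by
    rw [hq]
    exact ((hfd z hz hne).continuousAt.tendsto.mono_left nhdsWithin_le_nhds).limUnder_eq
  have hqd : ∀ z ∈ ball (0 : ℂ) 1, DifferentiableAt ℂ q z := fun z hz => by
    have h1 : {x | x ≠ z → Q x ≠ 0} ∩ ball 0 1 ∈ 𝓝 z :=
      inter_mem (eventually_nhdsWithin_iff.1 (hev z hz)) (isOpen_ball.mem_nhds hz)
    have h2 := Complex.differentiableOn_update_limUnder_of_bddAbove h1 (f := f)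
      (fun x hx => (hfd x hx.1.2 (hx.1.1 hx.2)).differentiableWithinAt) (by
        refine ⟨k, ?_⟩
        rintro _ ⟨x, hx, rfl⟩
        exact hfb x hx.1.2)
    refine (h2.differentiableAt h1).congr_of_eventuallyEq ?_
    filter_upwards [h1] with x hx
    by_cases hxz : x = z
    · rw [hxz, Function.update_self, hq]
    · rw [Function.update_of_ne hxz, hqf x hx.2 (hx.1 hxz)]
  refine ⟨q, fun z hz => (hqd z hz).differentiableWithinAt, fun z hz => ?_, fun z hz => ?_⟩
  · refine le_of_tendsto ((hqd z hz).continuousAt.norm.tendsto.mono_left (nhdsWithin_le_nhds (s := {z}ᶜ))) ?_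
    filter_upwards [hev z hz, nhdsWithin_le_nhds (isOpen_ball.mem_nhds hz)] with x hx hxb
    rw [hqf x hxb hx]
    exact hfb x hxb
  · by_cases hne : Q z = 0
    · have := h z hz
      rw [hne, norm_zero, mul_zero] at this
      rw [hne, mul_zero]
      simpa using this
    · rw [hqf z hz hne, hf]
      field_simp

theorem PS.mul {c d : ℕ → ℂ} {f g : ℂ → ℂ} (h : PS c f) (h' : PS d g) :
    PS (fun n => ∑ p ∈ Finset.HasAntidiagonal.antidiagonal n, c p.1 * d p.2) (fun z => f z * g z) := fun z hz => by
  have e1 : Summable fun n => ‖c n * z ^ n‖ := by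
    simpa using h.summable (norm_nonneg z) hz
  have e2 : Summable fun n => ‖d n * z ^ n‖ := by
    simpa using h'.summable (norm_nonneg z) hz
  have h1 := tsum_mul_tsum_eq_tsum_sum_antidiagonal_of_summable_norm e1 e2
  rw [(h z hz).tsum_eq, (h' z hz).tsum_eq] at h1
  refine ((summable_norm_sum_mul_antidiagonal_of_summable_norm e1 e2).of_norm.hasSum).of_eq (fun n => ?_) h1.symm
  rw [Finset.sum_mul]
  refine Finset.sum_congr rfl fun p hp => ?_
  rw [← Finset.HasAntidiagonal.mem_antidiagonal.1 hp, pow_add]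
  ring

/-- If `|g'| ≤ k|h'|`, the majorant series of `g` is at most `k` times that of `h`, up to radius `1/3`. -/
theorem tsum_le_of_deriv_le {h g : ℂ → ℂ} {a b : ℕ → ℂ} {k r : ℝ} (hk : 0 ≤ k) (hh : PS a h) (hg : PS b g)
    (hdil : ∀ z : ℂ, ‖z‖ < 1 → ‖deriv g z‖ ≤ k * ‖deriv h z‖) (h0 : 0 ≤ r) (h1 : r ≤ 1 / 3) :
    ∑' n, ‖b (n + 1)‖ * r ^ (n + 1) ≤ k * ∑' n, ‖a (n + 1)‖ * r ^ (n + 1) := by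
  obtain ⟨q, hqd, hqk, hq⟩ := exists_eq_mul_of_norm_le hk (hg.differentiableOn.deriv isOpen_ball)
    (hh.differentiableOn.deriv isOpen_ball) (fun z hz => hdil z (by simpa using hz))
  obtain ⟨e, he⟩ := exists_PS hqd
  have hbohr := he.bohr (fun z hz => hqk z (by simpa using hz)) h0 h1
  have hprod : PS (fun n => ∑ p ∈ Finset.HasAntidiagonal.antidiagonal n, e p.1 * (((p.2 : ℂ) + 1) * a (p.2 + 1))) (deriv g) :=
    fun z hz => by
      have := he.mul hh.deriv z hz
      simp only at this
      rwa [← hq z (by simpa using hz)] at this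
  have hco := congrFun (hg.deriv.unique hprod)
  have hb : ∀ n, ‖b (n + 1)‖ ≤ ∑ p ∈ Finset.HasAntidiagonal.antidiagonal n, ‖e p.1‖ * ‖a (p.2 + 1)‖ := fun n => by
    have h2 := congrArg norm (hco n)
    rw [norm_mul] at h2
    have hn : ∀ m : ℕ, ‖(m : ℂ) + 1‖ = (m : ℝ) + 1 := fun m => by
      rw [← Nat.cast_succ, Complex.norm_natCast, Nat.cast_succ]
    rw [hn] at h2
    have h3 : ((n : ℝ) + 1) * ‖b (n + 1)‖ ≤ ((n : ℝ) + 1) * ∑ p ∈ Finset.HasAntidiagonal.antidiagonal n, ‖e p.1‖ * ‖a (p.2 + 1)‖ := by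
      rw [h2, Finset.mul_sum]
      refine norm_sum_le_of_le _ fun p hp => ?_
      rw [norm_mul, norm_mul, hn]
      have : (p.2 : ℝ) ≤ n := by
        exact_mod_cast (Finset.HasAntidiagonal.mem_antidiagonal.1 hp) ▸ Nat.le_add_left _ _
      calc ‖e p.1‖ * (((p.2 : ℝ) + 1) * ‖a (p.2 + 1)‖) = ((p.2 : ℝ) + 1) * (‖e p.1‖ * ‖a (p.2 + 1)‖) := by ring
        _ ≤ _ := by gcongr
    exact le_of_mul_le_mul_left h3 (by positivity)
  have hr1 : r < 1 := by linarith
  have hsa : Summable fun n => ‖a (n + 1)‖ * r ^ (n + 1) := (summable_nat_add_iff 1).2 (hh.summable h0 hr1)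
  have hsb : Summable fun n => ‖b (n + 1)‖ * r ^ (n + 1) := (summable_nat_add_iff 1).2 (hg.summable h0 hr1)
  have hse := he.summable h0 hr1
  have e1 : Summable fun n => ‖‖e n‖ * r ^ n‖ := hse.norm
  have e2 : Summable fun n => ‖‖a (n + 1)‖ * r ^ (n + 1)‖ := hsa.norm
  have h4 := tsum_mul_tsum_eq_tsum_sum_antidiagonal_of_summable_norm e1 e2
  have h5 := (summable_norm_sum_mul_antidiagonal_of_summable_norm e1 e2).of_norm
  calc ∑' n, ‖b (n + 1)‖ * r ^ (n + 1) ≤ _ := hsb.tsum_le_tsum (fun n => ?_) h5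
    _ = _ := h4.symm
    _ ≤ _ := mul_le_mul_of_nonneg_right hbohr (tsum_nonneg fun n => by positivity)
  calc ‖b (n + 1)‖ * r ^ (n + 1) ≤ (∑ p ∈ Finset.HasAntidiagonal.antidiagonal n, ‖e p.1‖ * ‖a (p.2 + 1)‖) * r ^ (n + 1) := by
        gcongr; exact hb n
    _ = _ := by
        rw [Finset.sum_mul]
        refine Finset.sum_congr rfl fun p hp => ?_
        rw [← Finset.HasAntidiagonal.mem_antidiagonal.1 hp, add_assoc, pow_add r p.1]
        ring

/-- Majorant series of `h - ψ 0` for `h` subordinate to a univalent `ψ`. -/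
theorem maj_sub_of_subordinate {ψ ω h : ℂ → ℂ} {r : ℝ} (hψ : DifferentiableOn ℂ ψ (ball 0 1))
    (hi : InjOn ψ (ball 0 1)) (hω : DifferentiableOn ℂ ω (ball 0 1)) (hωm : ∀ z : ℂ, ‖z‖ < 1 → ‖ω z‖ < 1)
    (hω0 : ω 0 = 0) (hs : ∀ z : ℂ, ‖z‖ < 1 → h z = ψ (ω z)) (h0 : 0 < r) (h1 : r ≤ 0.10103) :
    Maj r (infDist (ψ 0) (frontier (ψ '' ball 0 1)) * (4 * r / (1 - r) ^ 2)) (fun z => h z - ψ 0) := by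
  have hm0 : (0 : ℂ) ∈ ball (0 : ℂ) 1 := by simp
  have hne : (frontier (ψ '' ball 0 1)).Nonempty :=
    nonempty_frontier_iff.2 ⟨⟨_, mem_image_of_mem ψ hm0⟩, image_ball_ne_univ hψ hi⟩
  obtain ⟨w, hw, hwd⟩ := isClosed_frontier.exists_infDist_eq_dist hne (ψ 0)
  have hwn : ∀ z ∈ ball (0 : ℂ) 1, ψ z ≠ w := fun z hz e => by
    rw [(isOpen_image_ball hψ hi).frontier_eq] at hw
    exact hw.2 ⟨z, hz, e⟩
  have hw0 : w - ψ 0 ≠ 0 := sub_ne_zero.2 (hwn 0 hm0).symm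
  have hFd : DifferentiableOn ℂ (fun z => (ψ z - ψ 0) / (w - ψ 0)) (ball 0 1) := (hψ.sub_const _).div_const _
  obtain ⟨A, hA⟩ := exists_PS hFd
  have hkey := tsum_le_koebe hA (fun z hz ζ hζ e => hi hz hζ (by
      rw [div_left_inj' hw0] at e
      exact sub_left_inj.1 e)) (by simp) (fun z hz e => hwn z hz (by
      rw [div_eq_one_iff_eq hw0] at e
      exact sub_left_inj.1 e)) h0 h1
  have hr1 : r < 1 := by linarith
  -- Schwarz: `ω z = z Ω z` with `|Ω| ≤ 1`
  have hmaps : MapsTo ω (ball 0 1) (closedBall (ω 0) 1) := fun z hz => by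
    rw [hω0, mem_closedBall_zero_iff]
    exact (hωm z (by simpa using hz)).le
  have hΩd : DifferentiableOn ℂ (dslope ω 0) (ball 0 1) :=
    (Complex.differentiableOn_dslope (isOpen_ball.mem_nhds hm0)).2 hω
  obtain ⟨c, hc⟩ := exists_PS hΩd
  have hΩ := hc.bohr (K := 1) (fun z hz => by
    simpa using Complex.norm_dslope_le_div_of_mapsTo_ball hω hmaps (by simpa using hz)) h0.le (by linarith)
  have hωM : Maj r r ω := by
    have h2 := ((hc.maj h0.le hr1).mono hΩ).mul_pow h0.le 1 1
    refine (h2.mono (by simp)).congr fun z _ => ?_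
    have := sub_smul_dslope ω 0 z
    simp only [sub_zero, hω0, smul_eq_mul] at this
    rw [one_mul, pow_one, this]
  have h2 := (hωM.comp h0.le (a := A) (Φ := fun z => (ψ z - ψ 0) / (w - ψ 0)) (hA.summable h0.le hr1)
    (fun z hz => hA (ω z) (hωm z (hz.trans_lt hr1)))).const_mul (w - ψ 0)
  rw [← dist_eq_norm, dist_comm, ← hwd] at h2
  refine (h2.mono (mul_le_mul_of_nonneg_left hkey infDist_nonneg)).congr fun z hz => ?_
  rw [mul_div_cancel₀ _ hw0, hs z (hz.trans_lt hr1)]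

/-! ### The theorem -/

/-- As `√(1 + ru) ≥ 1`, the equation for `ru` gives `(2 + k) 4 ru ≤ (1 - ru) ^ 2`. In particular `8 ru ≤ (1 - ru) ^ 2`, so
`ru ≤ 5 - 2 √6 < 0.10103`. -/
theorem bohr_radius_bounds {k ru r : ℝ} (hk0 : 0 ≤ k) (hru : ru ∈ Set.Ioo (0 : ℝ) 1)
    (hroot : 8 * ru + 4 * k * ru * Real.sqrt (1 + ru) - (1 - ru) ^ 2 = 0) (hr0 : 0 ≤ r) (hr : r ≤ ru) :
    r ≤ 0.10103 ∧ (2 + k) * (4 * r / (1 - r) ^ 2) ≤ 1 := by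
  obtain ⟨h1, h2⟩ := hru
  have hs : 1 ≤ Real.sqrt (1 + ru) := Real.one_le_sqrt.2 (by linarith)
  have h3 : 4 * k * ru ≤ 4 * k * ru * Real.sqrt (1 + ru) := le_mul_of_one_le_right (by positivity) hs
  have h4 : 0 ≤ 4 * k * ru := by positivity
  have h5 : ru ≤ 0.10103 := by
    by_contra hc
    push Not at hc
    nlinarith
  refine ⟨hr.trans h5, ?_⟩
  rw [← mul_div_assoc, div_le_one (by nlinarith)]
  have h6 : (2 + k) * (4 * r) ≤ (2 + k) * (4 * ru) := by gcongr
  have h7 : (1 - ru) ^ 2 ≤ (1 - r) ^ 2 := pow_le_pow_left₀ (by linarith) (by linarith) 2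
  linarith

end

/-- Bohr-Rogosinski inequality for subordination to univalent maps. -/
theorem subordination_univalent_bohr_rogosinski (ψ ω h g : ℂ → ℂ) (a b : ℕ → ℂ) (k : ℝ)
    (hk0 : 0 ≤ k) (hk1 : k ≤ 1)
    (hψ : AnalyticOnNhd ℂ ψ (Metric.ball (0 : ℂ) 1))
    (hψinj : Set.InjOn ψ (Metric.ball (0 : ℂ) 1))
    (hω : AnalyticOnNhd ℂ ω (Metric.ball (0 : ℂ) 1))
    (hωmap : ∀ z : ℂ, ‖z‖ < 1 → ‖ω z‖ < 1) (hω0 : ω 0 = 0)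
    (hsub : ∀ z : ℂ, ‖z‖ < 1 → h z = ψ (ω z))
    (hh : ∀ z : ℂ, ‖z‖ < 1 → HasSum (fun n => a n * z ^ n) (h z))
    (hg : ∀ z : ℂ, ‖z‖ < 1 → HasSum (fun n => b n * z ^ n) (g z))
    (hb0 : b 0 = 0)
    (hdil : ∀ z : ℂ, ‖z‖ < 1 → ‖deriv g z‖ ≤ k * ‖deriv h z‖)
    (ru : ℝ) (hru : ru ∈ Set.Ioo (0 : ℝ) 1)
    (hroot : 8 * ru + 4 * k * ru * Real.sqrt (1 + ru) - (1 - ru) ^ 2 = 0)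
    (r : ℝ) (hr0 : 0 ≤ r) (hr : r ≤ ru) (z : ℂ) (hz : ‖z‖ = r) :
    ‖h z‖ + ∑' n : ℕ, (‖a (n + 1)‖ + ‖b (n + 1)‖) * r ^ (n + 1) ≤
      ‖ψ 0‖ + Metric.infDist (ψ 0) (frontier (ψ '' Metric.ball (0 : ℂ) 1)) := by
  have hh' : PS a h := hh
  have hg' : PS b g := hg
  obtain ⟨d, hd⟩ : ∃ d, d = Metric.infDist (ψ 0) (frontier (ψ '' Metric.ball (0 : ℂ) 1)) := ⟨_, rfl⟩
  have hd0 : 0 ≤ d := hd ▸ Metric.infDist_nonneg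
  rw [← hd]
  rcases hr0.eq_or_lt with rfl | hrp
  · rw [norm_eq_zero.1 hz, hsub 0 (by simp), hω0]
    simpa using hd0
  obtain ⟨hr1, hM1⟩ := bohr_radius_bounds hk0 hru hroot hr0 hr
  obtain ⟨M, hM⟩ : ∃ M, M = 4 * r / (1 - r) ^ 2 := ⟨_, rfl⟩
  have hmaj := maj_sub_of_subordinate hψ.differentiableOn hψinj hω.differentiableOn hωmap hω0 hsub hrp hr1
  rw [← hd, ← hM] at hmaj
  rw [← hM] at hM1
  have hrl : r < 1 := by linarith
  have hconst : PS (fun n => if n = 0 then ψ 0 else 0) (fun _ => ψ 0) := fun z _ =>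
    (hasSum_ite_eq 0 (ψ 0)).of_eq (fun n => by split_ifs with hn <;> simp [hn]) rfl
  have hps := hh'.sub hconst
  have h1 := hps.tsum_le_of_maj hrp hrl hmaj
  have ha0 : a 0 = ψ 0 := by rw [← hh'.zero, hsub 0 (by simp), hω0]
  have hsa : ∑' n, ‖a (n + 1)‖ * r ^ (n + 1) ≤ d * M := by
    rw [(hps.summable hr0 hrl).tsum_eq_zero_add] at h1
    simpa [ha0] using h1
  have hsb := (tsum_le_of_deriv_le hk0 hh' hg' hdil hr0 (by linarith)).trans (mul_le_mul_of_nonneg_left hsa hk0)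
  have hz1 : ‖h z‖ ≤ ‖ψ 0‖ + d * M := by
    have h2 := hmaj.norm_le hz.le
    have h3 := norm_add_le (ψ 0) (h z - ψ 0)
    rw [add_sub_cancel] at h3
    linarith
  have e : ∑' n : ℕ, (‖a (n + 1)‖ + ‖b (n + 1)‖) * r ^ (n + 1) =
      ∑' n, ‖a (n + 1)‖ * r ^ (n + 1) + ∑' n, ‖b (n + 1)‖ * r ^ (n + 1) := by
    simp only [add_mul]
    exact ((summable_nat_add_iff 1).2 (hh'.summable hr0 hrl)).tsum_add
      ((summable_nat_add_iff 1).2 (hg'.summable hr0 hrl))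
  rw [e]
  have h4 : d * ((2 + k) * M) ≤ d * 1 := mul_le_mul_of_nonneg_left hM1 hd0
  linarith
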